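/- Let Λ be a basic finite-dimensional algebra over an algebraically closed field, suppose d = Σ_{r=1}^s d^{(r)}, and let C_r be an irreducible component of Rep_{d^{(r)}}(Λ) for 1 ≤ r ≤ s. Then the Zariski closure of C_1 ⊕ ⋯ ⊕ C_s is an irreducible component of Rep_d(Λ) if and only if ext(C_i, C_j) = 0 for all i ≠ j. -/

import Mathlib

open Finset

/-! # Varieties of representations of a quiver with relations: basic setup -/

/-- The Zariski topology on the affine space `ι → K`: it is generated by the basic open
sets `D(p) = {x | p(x) ≠ 0}`, where `p` ranges over multivariate polynomials. -/
def zariskiTopology (ι K : Type) [CommSemiring K] : TopologicalSpace (ι → K) :=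
  TopologicalSpace.generateFrom
    {U | ∃ p : MvPolynomial ι K, U = {x | MvPolynomial.eval x p ≠ 0}}

/-- A finite quiver `Q`: vertices `Fin n`, arrows `Fin numArrows` with source and
target maps. -/
structure QuiverData where
  n : ℕ
  numArrows : ℕ
  src : Fin numArrows → Fin n
  tgt : Fin numArrows → Fin n

namespace QuiverData

variable (Q : QuiverData) (d : Fin Q.n → ℕ) (K : Type) [Field K]

/-- Index of the coordinates of the affine space of `d`-dimensional representations:
for each arrow `a` a matrix entry index in `Fin (d (tgt a)) × Fin (d (src a))`. -/
abbrev Coords := Σ a : Fin Q.numArrows, Fin (d (Q.tgt a)) × Fin (d (Q.src a))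

/-- The affine space of `d`-dimensional representations of `Q`:
a point `x` assigns to each arrow `a` a `d (tgt a) × d (src a)` matrix over `K`. -/
abbrev RepSpace := Coords Q d → K

/-- `RepSpace` carries the Zariski topology. -/
noncomputable instance instRepTop : TopologicalSpace (RepSpace Q d K) :=
  zariskiTopology (Coords Q d) K

/-- The underlying `K`-vector space `⊕ᵢ K^{dᵢ}` of any `d`-dimensional representation. -/
abbrev Carrier := (Σ i : Fin Q.n, Fin (d i)) → K

/-- The projection onto the component of the `i`-th vertex (action of the primitive
idempotent `eᵢ`). -/
def proj (i : Fin Q.n) : Carrier Q d K →ₗ[K] Carrier Q d K where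
  toFun m := fun jv => if jv.1 = i then m jv else 0
  map_add' u v := by
    funext jv; by_cases h : jv.1 = i <;> simp [h]
  map_smul' c u := by
    funext jv; by_cases h : jv.1 = i <;> simp [h]

/-- The action of the arrow `a` on the carrier space of the representation `x`. -/
noncomputable def arrowMap (x : RepSpace Q d K) (a : Fin Q.numArrows) :
    Carrier Q d K →ₗ[K] Carrier Q d K where
  toFun m := fun jv =>
    if h : jv.1 = Q.tgt a then
      ∑ w : Fin (d (Q.src a)), x ⟨a, (Fin.cast (congrArg d h) jv.2, w)⟩ * m ⟨Q.src a, w⟩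
    else 0
  map_add' u v := by
    funext jv
    by_cases h : jv.1 = Q.tgt a <;> simp [h, mul_add, Finset.sum_add_distrib]
  map_smul' c u := by
    funext jv
    by_cases h : jv.1 = Q.tgt a <;>
      simp [h, Finset.mul_sum, mul_comm, mul_left_comm, mul_assoc]

/-- The action of a word `w = [a_k, …, a_1]` of arrows on the representation `x`
(the arrow `a_1` acts first; non-composable words act as `0`). -/
noncomputable def wordMap (x : RepSpace Q d K) (w : List (Fin Q.numArrows)) :
    Module.End K (Carrier Q d K) :=
  (w.map fun a => (arrowMap Q d K x a : Module.End K (Carrier Q d K))).prod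

/-- The submodule `J^l · M_x` of the module `M_x`: the sum of the images of all words of
arrows of length `l` (for an admissible ideal, the radical acts through the arrows). -/
noncomputable def radPow (x : RepSpace Q d K) (l : ℕ) : Submodule K (Carrier Q d K) :=
  ⨆ w : {w : List (Fin Q.numArrows) // w.length = l},
    LinearMap.range (wordMap Q d K x w.1)

/-- The socle series of `M_x`: `socPow x l = soc_l(M_x)`. -/
noncomputable def socPow (x : RepSpace Q d K) : ℕ → Submodule K (Carrier Q d K)
  | 0 => ⨅ a, LinearMap.ker (arrowMap Q d K x a)
  | (l+1) => ⨅ a, (socPow x l).comap (arrowMap Q d K x a)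

/-- The dimension, at the vertex `i`, of a (vertex-graded) subspace `N`. -/
noncomputable def vdim (N : Submodule K (Carrier Q d K)) (i : Fin Q.n) : ℕ :=
  Module.finrank K (N.map (proj Q d K i))

/-- The radical layering `S(M_x) = (M/JM, JM/J²M, …, J^L M/J^{L+1} M)` of the module `M_x`,
recorded through the dimension vectors of its semisimple layers. -/
noncomputable def radLayering (L : ℕ) (x : RepSpace Q d K) :
    Fin (L+1) → Fin Q.n → ℕ :=
  fun l i => vdim Q d K (radPow Q d K x l) i - vdim Q d K (radPow Q d K x (l+1)) i

/-- The socle layering `S*(M_x) = (soc₀M, soc₁M/soc₀M, …)` of the module `M_x`, recorded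
through the dimension vectors of its semisimple layers. -/
noncomputable def socLayering (L : ℕ) (x : RepSpace Q d K) :
    Fin (L+1) → Fin Q.n → ℕ :=
  fun l i => vdim Q d K (socPow Q d K x l) i -
    (if (l : ℕ) = 0 then 0 else vdim Q d K (socPow Q d K x ((l : ℕ) - 1)) i)

end QuiverData

/-- The dominance order on semisimple sequences (recorded as sequences of dimension
vectors): `dominates S S'` means `S ≤ S'`, i.e. `⊕_{j≤l} S_j ⊆ ⊕_{j≤l} S'_j` for all `l`. -/
def dominates {n L : ℕ} (S S' : Fin (L+1) → Fin n → ℕ) : Prop :=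
  ∀ (l : Fin (L+1)) (i : Fin n),
    ∑ j ∈ Finset.univ.filter (fun j => j ≤ l), S j i ≤
      ∑ j ∈ Finset.univ.filter (fun j => j ≤ l), S' j i

/-- A semisimple sequence has dimension vector `d` if its layers' dimension vectors sum
to `d`. -/
def hasDimVec {n L : ℕ} (S : Fin (L+1) → Fin n → ℕ) (d : Fin n → ℕ) : Prop :=
  ∀ i, ∑ l, S l i = d i

namespace QuiverData

variable (Q : QuiverData) (d : Fin Q.n → ℕ) (K : Type) [Field K]

/-- Evaluation of a formal noncommutative polynomial in the vertices (`Sum.inl`) and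
arrows (`Sum.inr`) of `Q` on the representation `x`; an element of the path algebra `KQ`
is represented by such a polynomial. -/
noncomputable def evalRel (x : RepSpace Q d K) :
    FreeAlgebra K (Fin Q.n ⊕ Fin Q.numArrows) →ₐ[K] Module.End K (Carrier Q d K) :=
  FreeAlgebra.lift K
    (Sum.elim (fun i => (proj Q d K i : Module.End K (Carrier Q d K)))
      (fun a => (arrowMap Q d K x a : Module.End K (Carrier Q d K))))

/-- The affine variety `Rep_d(Λ)` for `Λ = KQ/I`, where the ideal `I` is generated by the
set `R` of relations: the set of points of `RepSpace` annihilating every relation. -/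
def RepVar (R : Set (FreeAlgebra K (Fin Q.n ⊕ Fin Q.numArrows))) :
    Set (RepSpace Q d K) :=
  {x | ∀ r ∈ R, evalRel Q d K x r = 0}

/-- The affine variety `Rep_d(Λ)` for the truncated path algebra
`Λ = KQ/⟨all paths of length L+1⟩`. -/
def TruncRepVar (L : ℕ) : Set (RepSpace Q d K) :=
  {x | ∀ w : List (Fin Q.numArrows), w.length = L + 1 → wordMap Q d K x w = 0}

/-- A submodule of `M_x`, i.e. a subspace stable under the arrows and the vertex
idempotents. -/
def Stable (x : RepSpace Q d K) (N : Submodule K (Carrier Q d K)) : Prop :=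
  (∀ a, N.map (arrowMap Q d K x a) ≤ N) ∧ ∀ i, N.map (proj Q d K i) ≤ N

/-- A submodule `N` of `M_x` is indecomposable (as a module). -/
def IndecompSub (x : RepSpace Q d K) (N : Submodule K (Carrier Q d K)) : Prop :=
  N ≠ ⊥ ∧ ∀ N₁ N₂ : Submodule K (Carrier Q d K),
    Stable Q d K x N₁ → Stable Q d K x N₂ → N₁ ≤ N → N₂ ≤ N →
    N₁ ⊔ N₂ = N → N₁ ⊓ N₂ = ⊥ → N₁ = ⊥ ∨ N₂ = ⊥

/-- The module `M_x` is indecomposable. -/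
def IndecompRep (x : RepSpace Q d K) : Prop :=
  IndecompSub Q d K x ⊤

/-- The module `M_x` is uniserial: its submodules form a chain. -/
def UniserialRep (x : RepSpace Q d K) : Prop :=
  ∀ N₁ N₂ : Submodule K (Carrier Q d K),
    Stable Q d K x N₁ → Stable Q d K x N₂ → N₁ ≤ N₂ ∨ N₂ ≤ N₁

/-- `M_x` decomposes as a direct sum of `s` indecomposable submodules whose dimension
vectors are `D 0, …, D (s-1)`. -/
def DecompWith (x : RepSpace Q d K) (s : ℕ) (D : Fin s → Fin Q.n → ℕ) : Prop :=
  ∃ N : Fin s → Submodule K (Carrier Q d K),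
    (∀ r, Stable Q d K x (N r)) ∧
    (∀ r, Disjoint (N r) (⨆ t, ⨆ (_ : t ≠ r), N t)) ∧
    (⨆ r, N r) = ⊤ ∧
    (∀ r, IndecompSub Q d K x (N r)) ∧
    ∀ r i, vdim Q d K (N r) i = D r i

/-- A homomorphism of representations `M_x → M_y` (for possibly different dimension
vectors): a linear map commuting with the arrow actions and the vertex projections. -/
def RepHom (dx dy : Fin Q.n → ℕ) (x : RepSpace Q dx K) (y : RepSpace Q dy K)
    (φ : Carrier Q dx K →ₗ[K] Carrier Q dy K) : Prop :=
  (∀ a, φ ∘ₗ arrowMap Q dx K x a = arrowMap Q dy K y a ∘ₗ φ) ∧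
  ∀ i, φ ∘ₗ proj Q dx K i = proj Q dy K i ∘ₗ φ

/-- The submodule `N` of `M_x` is isomorphic, as a representation, to `M_y`. -/
def SubrepIso (dy : Fin Q.n → ℕ) (x : RepSpace Q d K)
    (N : Submodule K (Carrier Q d K)) (y : RepSpace Q dy K) : Prop :=
  ∃ φ : Carrier Q d K →ₗ[K] Carrier Q dy K,
    N ⊓ LinearMap.ker φ = ⊥ ∧ N.map φ = ⊤ ∧
    (∀ a, ∀ m ∈ N, φ (arrowMap Q d K x a m) = arrowMap Q dy K y a (φ m)) ∧
    (∀ i, ∀ m ∈ N, φ (proj Q d K i m) = proj Q dy K i (φ m))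

/-- The representations `M_x` and `M_y` are isomorphic; the isomorphism classes are
exactly the orbits of the `GL(d)`-action. -/
def IsoRep (x y : RepSpace Q d K) : Prop :=
  ∃ φ : Carrier Q d K ≃ₗ[K] Carrier Q d K,
    (∀ a m, φ (arrowMap Q d K x a m) = arrowMap Q d K y a (φ m)) ∧
    ∀ i m, φ (proj Q d K i m) = proj Q d K i (φ m)

/-- The `GL(d)`-orbit of the point `x`, i.e. the set of points encoding modules
isomorphic to `M_x`. -/
def orbitSet (x : RepSpace Q d K) : Set (RepSpace Q d K) :=
  {y | IsoRep Q d K x y}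

/-- Given a family `P` of varieties `Rep_dv(Λ)` (one for every dimension vector `dv`),
`Ext¹_Λ(M_x, M_y) = 0`: every extension `0 → M_y → E → M_x → 0` of `Λ`-modules splits. -/
def Ext1Zero (P : ∀ dv : Fin Q.n → ℕ, Set (RepSpace Q dv K))
    (dx dy : Fin Q.n → ℕ) (x : RepSpace Q dx K) (y : RepSpace Q dy K) : Prop :=
  ∀ z ∈ P (fun i => dx i + dy i),
    ∀ (ι : Carrier Q dy K →ₗ[K] Carrier Q (fun i => dx i + dy i) K)
      (π : Carrier Q (fun i => dx i + dy i) K →ₗ[K] Carrier Q dx K),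
      RepHom Q K dy (fun i => dx i + dy i) y z ι →
      RepHom Q K (fun i => dx i + dy i) dx z x π →
      Function.Injective ι → Function.Surjective π →
      LinearMap.ker π = LinearMap.range ι →
      ∃ σ : Carrier Q dx K →ₗ[K] Carrier Q (fun i => dx i + dy i) K,
        RepHom Q K dx (fun i => dx i + dy i) x z σ ∧ π ∘ₗ σ = LinearMap.id

/-- The direct sum `C₁ ⊕ ⋯ ⊕ C_s` of subvarieties `C_r ⊆ Rep_{D r}(Λ)`: the set of
points `x ∈ Rep_d(Λ)` whose module decomposes as `M_x ≅ ⊕_r M^{(r)}` with `M^{(r)}`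
encoded by a point of `C_r`. -/
def DirectSumSet (s : ℕ) (D : Fin s → Fin Q.n → ℕ)
    (Cs : ∀ r : Fin s, Set (RepSpace Q (D r) K)) : Set (RepSpace Q d K) :=
  {x | ∃ N : Fin s → Submodule K (Carrier Q d K),
    (∀ r, Stable Q d K x (N r)) ∧
    (∀ r, Disjoint (N r) (⨆ t, ⨆ (_ : t ≠ r), N t)) ∧
    (⨆ r, N r) = ⊤ ∧
    ∀ r, ∃ y ∈ Cs r, SubrepIso Q d K (D r) x (N r) y}

/-- The endomorphism space `End_Λ(M_x)` of the module `M_x`. -/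
def endSpace (x : RepSpace Q d K) :
    Submodule K (Carrier Q d K →ₗ[K] Carrier Q d K) where
  carrier := {φ | RepHom Q K d d x x φ}
  add_mem' := by
    intro φ ψ hφ hψ
    exact ⟨fun a => by rw [LinearMap.add_comp, LinearMap.comp_add, hφ.1 a, hψ.1 a],
      fun i => by rw [LinearMap.add_comp, LinearMap.comp_add, hφ.2 i, hψ.2 i]⟩
  zero_mem' := by
    exact ⟨fun a => by simp, fun i => by simp⟩
  smul_mem' := by
    intro c φ hφ
    exact ⟨fun a => by rw [LinearMap.smul_comp, LinearMap.comp_smul, hφ.1 a],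
      fun i => by rw [LinearMap.smul_comp, LinearMap.comp_smul, hφ.2 i]⟩

/-- A word of arrows is a (composable) path when read in function-composition order. -/
def IsPathWord (w : List (Fin Q.numArrows)) : Prop :=
  List.Chain' (fun a b => Q.src a = Q.tgt b) w

/-- The quiver `Q` has no oriented cycles. -/
def Acyclic : Prop :=
  ∀ (a : Fin Q.numArrows) (w : List (Fin Q.numArrows)),
    IsPathWord Q (a :: w) →
      Q.tgt a ≠ Q.src ((a :: w).getLast (List.cons_ne_nil a w))

/-- A filtration `M_x = F 0 ⊇ F 1 ⊇ ⋯ ⊇ F (L+1) = 0` by submodules which is governed by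
the semisimple sequence `S`: each layer `F l / F (l+1)` is semisimple, isomorphic to `S l`. -/
def Governed (L : ℕ) (x : RepSpace Q d K) (S : Fin (L+1) → Fin Q.n → ℕ)
    (F : Fin (L+2) → Submodule K (Carrier Q d K)) : Prop :=
  F 0 = ⊤ ∧ F (Fin.last (L+1)) = ⊥ ∧
  (∀ l : Fin (L+1), F l.succ ≤ F l.castSucc) ∧
  (∀ (l : Fin (L+2)) (i : Fin Q.n), (F l).map (proj Q d K i) ≤ F l) ∧
  (∀ (l : Fin (L+1)) (a : Fin Q.numArrows),
      (F l.castSucc).map (arrowMap Q d K x a) ≤ F l.succ) ∧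
  ∀ (l : Fin (L+1)) (i : Fin Q.n),
      vdim Q d K (F l.castSucc) i = S l i + vdim Q d K (F l.succ) i

/-- `Filt S`: the set of points whose module has a filtration governed by `S`. -/
def FiltSet (L : ℕ) (S : Fin (L+1) → Fin Q.n → ℕ) : Set (RepSpace Q d K) :=
  {x | ∃ F, Governed Q d K L x S F}

/-- `Γ(M_x)`: the number of semisimple sequences which are realizable (i.e. occur as the
radical layering of a module in the variety `P`) and which govern some filtration of `M_x`. -/
noncomputable def gammaCount (L : ℕ) (P : Set (RepSpace Q d K))
    (x : RepSpace Q d K) : ℕ :=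
  Set.ncard {S : Fin (L+1) → Fin Q.n → ℕ |
    (∃ y ∈ P, radLayering Q d K L y = S) ∧ ∃ F, Governed Q d K L x S F}

/-- `Sstar` is the generic (= minimal, attained) socle layering of the modules in `W`. -/
def GenSoc (L : ℕ) (W : Set (RepSpace Q d K))
    (Sstar : Fin (L+1) → Fin Q.n → ℕ) : Prop :=
  (∀ x ∈ W, dominates Sstar (socLayering Q d K L x)) ∧
  ∃ x ∈ W, socLayering Q d K L x = Sstar

end QuiverData

namespace QuiverData

variable (Q : QuiverData)

/-- The `i`-th entry of the row vector `e·A` (over `ℤ`), where `A` is the adjacency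
matrix of `Q`: the sum of `e (src a)` over all arrows `a` ending at `i`. -/
def inflowZ (e : Fin Q.n → ℤ) (i : Fin Q.n) : ℤ :=
  ∑ a ∈ Finset.univ.filter (fun a => Q.tgt a = i), e (Q.src a)

/-- The `i`-th entry of the row vector `e·B` (over `ℤ`), where `B` is the transpose of
the adjacency matrix of `Q`. -/
def outflowZ (e : Fin Q.n → ℤ) (i : Fin Q.n) : ℤ :=
  ∑ a ∈ Finset.univ.filter (fun a => Q.src a = i), e (Q.tgt a)

/-- Partial sums `t⁽⁰⁾ + ⋯ + t⁽ˡ⁾` of the recursion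
`t⁽⁰⁾ = sup{0, d − d·A}`, `t⁽ˡ⁺¹⁾ = sup{0, (d − ∑_{k≤l} t⁽ᵏ⁾) − (d − ∑_{k≤l} t⁽ᵏ⁾)·A}`
(computed componentwise). -/
def cumLayer (dz : Fin Q.n → ℤ) : ℕ → Fin Q.n → ℤ
  | 0 => fun i => max 0 (dz i - inflowZ Q dz i)
  | (l+1) => fun i =>
      cumLayer dz l i +
        max 0 ((dz i - cumLayer dz l i) -
          inflowZ Q (fun j => dz j - cumLayer dz l j) i)

/-- The positive part `∑ᵢ eᵢ fᵢ` of the Euler form of `Q`. -/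
def eulerHomPart (e f : Fin Q.n → ℕ) : ℕ := ∑ i, e i * f i

/-- The negative part `∑_{α} e_{src α} f_{tgt α}` of the Euler form of `Q`, so that
`⟨e, f⟩ = eulerHomPart e f − eulerExtPart e f`. -/
def eulerExtPart (e f : Fin Q.n → ℕ) : ℕ :=
  ∑ a, e (Q.src a) * f (Q.tgt a)

end QuiverData

/-- The quiver with a single vertex and `r` loops. -/
def QuiverData.loopQuiver (r : ℕ) : QuiverData :=
  ⟨1, r, fun _ => 0, fun _ => 0⟩

namespace QuiverData

variable (Q : QuiverData) (d : Fin Q.n → ℕ) (K : Type) [Field K]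

/-- The variety `Rep_d(Λ)` for `Λ = KQ/⟨Rels⟩`, regarded as a topological space with the
(subspace) Zariski topology. -/
abbrev GenV (Rels : Set (FreeAlgebra K (Fin Q.n ⊕ Fin Q.numArrows))) :=
  {y : RepSpace Q d K // y ∈ RepVar Q d K Rels}

/-- The variety `Rep_d(Λ)` for the truncated path algebra
`Λ = KQ/⟨paths of length L+1⟩`, regarded as a topological space. -/
abbrev TruncV (L : ℕ) := {y : RepSpace Q d K // y ∈ TruncRepVar Q d K L}

end QuiverData

set_option linter.unusedSectionVars false
set_option linter.unusedSimpArgs false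
set_option linter.unusedVariables false

namespace CBS

section basic
variable {Q : QuiverData} {K : Type} [Field K] {A : Type} [CommRing A] [Algebra K A]
  {B : Type} [CommRing B] [Algebra K B]
  {I J : Type} [Fintype I] [DecidableEq I] [Fintype J] [DecidableEq J]

/-- vertex idempotent matrix -/
def pm (A : Type) [CommRing A] (v : I → Fin Q.n) (i : Fin Q.n) : Matrix I I A :=
  Matrix.diagonal (fun j => if v j = i then 1 else 0)

/-- generator matrices of a representation -/
def gen (v : I → Fin Q.n) (z : Fin Q.numArrows → Matrix I I A) :
    Fin Q.n ⊕ Fin Q.numArrows → Matrix I I A := Sum.elim (pm A v) z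

/-- evaluation of noncommutative polynomials -/
noncomputable def ev (K : Type) [Field K] [Algebra K A] (v : I → Fin Q.n)
    (z : Fin Q.numArrows → Matrix I I A) :
    FreeAlgebra K (Fin Q.n ⊕ Fin Q.numArrows) →ₐ[K] Matrix I I A :=
  FreeAlgebra.lift K (gen v z)

/-- support condition -/
def IsRep (v : I → Fin Q.n) (z : Fin Q.numArrows → Matrix I I A) : Prop :=
  ∀ a i j, z a i j ≠ 0 → v i = Q.tgt a ∧ v j = Q.src a

/-- relations hold -/
def Sat (Rels : Set (FreeAlgebra K (Fin Q.n ⊕ Fin Q.numArrows))) (v : I → Fin Q.n)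
    (z : Fin Q.numArrows → Matrix I I A) : Prop := ∀ r ∈ Rels, ev K v z r = 0

/-- graded rectangular matrices -/
def Graded (v : I → Fin Q.n) (w : J → Fin Q.n) (P : Matrix J I A) : Prop :=
  ∀ j i, P j i ≠ 0 → w j = v i

lemma Graded.pm_comm {v : I → Fin Q.n} {w : J → Fin Q.n} {P : Matrix J I A}
    (h : Graded v w P) (i : Fin Q.n) : P * pm A v i = pm A w i * P := by
  ext j k
  simp only [pm, Matrix.mul_diagonal, Matrix.diagonal_mul]
  by_cases hP : P j k = 0
  · simp [hP]
  · rw [h j k hP]; simp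

lemma graded_of_pm_comm {v : I → Fin Q.n} {w : J → Fin Q.n} {P : Matrix J I A}
    (h : ∀ i, P * pm A v i = pm A w i * P) : Graded v w P := by
  intro j k hP
  have := congrFun (congrFun (h (v k)) j) k
  simp only [pm, Matrix.mul_diagonal, Matrix.diagonal_mul] at this
  by_contra hne
  simp [hne, hP] at this

lemma intertwine {v : I → Fin Q.n} {w : J → Fin Q.n} {P : Matrix J I A}
    {z : Fin Q.numArrows → Matrix I I A} {z' : Fin Q.numArrows → Matrix J J A}
    (hg : Graded v w P) (hz : ∀ a, P * z a = z' a * P)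
    (r : FreeAlgebra K (Fin Q.n ⊕ Fin Q.numArrows)) :
    P * ev K v z r = ev K w z' r * P := by
  induction r using FreeAlgebra.induction with
  | grade0 c => simp [Algebra.algebraMap_eq_smul_one]
  | grade1 x =>
    simp only [ev, FreeAlgebra.lift_ι_apply, gen]
    rcases x with i | a
    · exact hg.pm_comm i
    · exact hz a
  | mul a b ha hb => rw [map_mul, map_mul, ← Matrix.mul_assoc, ha, Matrix.mul_assoc, hb,
      Matrix.mul_assoc]
  | add a b ha hb => rw [map_add, map_add, Matrix.mul_add, ha, hb, Matrix.add_mul]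

lemma Sat.of_surj {Rels : Set (FreeAlgebra K (Fin Q.n ⊕ Fin Q.numArrows))}
    {v : I → Fin Q.n} {w : J → Fin Q.n} {P : Matrix J I A} {P' : Matrix I J A}
    {z : Fin Q.numArrows → Matrix I I A} {z' : Fin Q.numArrows → Matrix J J A}
    (hs : Sat Rels v z)
    (hg : Graded v w P) (hz : ∀ a, P * z a = z' a * P) (hP : P * P' = 1) : Sat Rels w z' := by
  intro r hr
  have := intertwine (K := K) hg hz r
  rw [hs r hr, Matrix.mul_zero] at this
  calc ev K w z' r = (ev K w z' r * P) * P' := by rw [Matrix.mul_assoc, hP, Matrix.mul_one]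
    _ = 0 := by rw [← this, Matrix.zero_mul]

lemma Sat.of_inj {Rels : Set (FreeAlgebra K (Fin Q.n ⊕ Fin Q.numArrows))}
    {v : I → Fin Q.n} {w : J → Fin Q.n} {P : Matrix J I A} {P' : Matrix I J A}
    {z : Fin Q.numArrows → Matrix I I A} {z' : Fin Q.numArrows → Matrix J J A}
    (hs : Sat Rels w z')
    (hg : Graded v w P) (hz : ∀ a, P * z a = z' a * P) (hP : P' * P = 1) : Sat Rels v z := by
  intro r hr
  have := intertwine (K := K) hg hz r
  rw [hs r hr, Matrix.zero_mul] at this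
  calc ev K v z r = P' * (P * ev K v z r) := by rw [← Matrix.mul_assoc, hP, Matrix.one_mul]
    _ = 0 := by rw [this, Matrix.mul_zero]

lemma ev_map (f : A →ₐ[K] B) (v : I → Fin Q.n) (z : Fin Q.numArrows → Matrix I I A)
    (r : FreeAlgebra K (Fin Q.n ⊕ Fin Q.numArrows)) :
    (ev K v z r).map f = ev K v (fun a => (z a).map f) r := by
  have : (f.mapMatrix).comp (ev K v z) = ev K v (fun a => (z a).map f) := by
    apply FreeAlgebra.hom_ext
    funext x
    simp only [ev, Function.comp, AlgHom.comp_apply, FreeAlgebra.lift_ι_apply, gen]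
    rcases x with i | a
    · ext j k
      simp [pm, Matrix.diagonal_apply]
      split_ifs <;> simp
    · rfl
  exact DFunLike.congr_fun this r

lemma Sat.map {Rels : Set (FreeAlgebra K (Fin Q.n ⊕ Fin Q.numArrows))} (f : A →ₐ[K] B)
    {v : I → Fin Q.n} {z : Fin Q.numArrows → Matrix I I A}
    (h : Sat Rels v z) : Sat Rels v (fun a => (z a).map f) := by
  intro r hr
  rw [← ev_map, h r hr]
  ext; simp

lemma IsRep.map (f : A →ₐ[K] B)
    {v : I → Fin Q.n} {z : Fin Q.numArrows → Matrix I I A}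
    (h : IsRep v z) : IsRep v (fun a => (z a).map f) := by
  intro a i j hne
  apply h a i j
  rintro h0
  simp [h0] at hne

variable {d : Fin Q.n → ℕ}

/-- the matrices attached to a coordinate point -/
def mat (e : I ≃ Σ i : Fin Q.n, Fin (d i)) (z : QuiverData.Coords Q d → A)
    (a : Fin Q.numArrows) : Matrix I I A := fun i j =>
  ∑ p, ∑ q, if e i = ⟨Q.tgt a, p⟩ ∧ e j = ⟨Q.src a, q⟩ then z ⟨a, (p, q)⟩ else 0

/-- the coordinate point attached to matrices -/
def pt (e : I ≃ Σ i : Fin Q.n, Fin (d i)) (z : Fin Q.numArrows → Matrix I I A) :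
    QuiverData.Coords Q d → A :=
  fun c => z c.1 (e.symm ⟨Q.tgt c.1, c.2.1⟩) (e.symm ⟨Q.src c.1, c.2.2⟩)

lemma mat_apply (e : I ≃ Σ i : Fin Q.n, Fin (d i)) (z : QuiverData.Coords Q d → A)
    (a : Fin Q.numArrows) (p q) :
    mat e z a (e.symm ⟨Q.tgt a, p⟩) (e.symm ⟨Q.src a, q⟩) = z ⟨a, (p, q)⟩ := by
  unfold mat
  rw [Finset.sum_eq_single p, Finset.sum_eq_single q]
  · simp
  · intro b _ hb; rw [if_neg]; simp; exact fun h => hb h.symm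
  · simp
  · intro b _ hb; apply Finset.sum_eq_zero; intro c _; rw [if_neg]; simp
    intro h; exact absurd h.symm hb
  · simp

lemma mat_ne_zero {e : I ≃ Σ i : Fin Q.n, Fin (d i)} {z : QuiverData.Coords Q d → A}
    {a : Fin Q.numArrows} {i j} (h : mat e z a i j ≠ 0) :
    (∃ p, e i = ⟨Q.tgt a, p⟩) ∧ ∃ q, e j = ⟨Q.src a, q⟩ := by
  by_contra hc
  apply h
  unfold mat
  apply Finset.sum_eq_zero; intro p _; apply Finset.sum_eq_zero; intro q _
  rw [if_neg]
  rintro ⟨h1, h2⟩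
  exact hc ⟨⟨p, h1⟩, ⟨q, h2⟩⟩

lemma mat_isRep {e : I ≃ Σ i : Fin Q.n, Fin (d i)} {v : I → Fin Q.n} (he : ∀ i, (e i).1 = v i)
    (z : QuiverData.Coords Q d → A) : IsRep v (mat e z) := by
  intro a i j h
  obtain ⟨⟨p, hp⟩, q, hq⟩ := mat_ne_zero h
  rw [← he, ← he, hp, hq]; simp

@[simp] lemma pt_mat (e : I ≃ Σ i : Fin Q.n, Fin (d i)) (z : QuiverData.Coords Q d → A) :
    pt e (mat e z) = z := by
  funext ⟨a, p, q⟩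
  exact mat_apply e z a p q

lemma mat_pt {e : I ≃ Σ i : Fin Q.n, Fin (d i)} {v : I → Fin Q.n} (he : ∀ i, (e i).1 = v i)
    {z : Fin Q.numArrows → Matrix I I A} (hz : IsRep v z) : mat e (pt e z) = z := by
  funext a; ext i j
  by_cases h : v i = Q.tgt a ∧ v j = Q.src a
  · obtain ⟨h1, h2⟩ := h
    rw [← he] at h1 h2
    have e1 : ∃ p, e i = ⟨Q.tgt a, p⟩ := by
      rw [← h1]; exact ⟨(e i).2, rfl⟩
    have e2 : ∃ p, e j = ⟨Q.src a, p⟩ := by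
      rw [← h2]; exact ⟨(e j).2, rfl⟩
    obtain ⟨p, hp⟩ := e1
    obtain ⟨q, hq⟩ := e2
    have hi : i = e.symm ⟨Q.tgt a, p⟩ := by rw [← hp]; simp
    have hj : j = e.symm ⟨Q.src a, q⟩ := by rw [← hq]; simp
    rw [hi, hj, mat_apply]; rfl
  · have h1 : z a i j = 0 := by by_contra hh; exact h (hz a i j hh)
    rw [h1]
    by_contra hh
    exact h (mat_isRep he _ a i j hh)

lemma mat_map (f : A →ₐ[K] B) (e : I ≃ Σ i : Fin Q.n, Fin (d i))
    (z : QuiverData.Coords Q d → A) (a) : (mat e z a).map f = mat e (fun c => f (z c)) a := by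
  ext i j
  simp only [mat, Matrix.map_apply, map_sum]
  refine Finset.sum_congr rfl fun p _ => Finset.sum_congr rfl fun q _ => ?_
  split_ifs <;> simp

lemma pt_map (f : A → B) (e : I ≃ Σ i : Fin Q.n, Fin (d i))
    (z : Fin Q.numArrows → Matrix I I A) : pt e (fun a => (z a).map f) = fun c => f (pt e z c) := rfl

end basic

section bridge
open QuiverData
variable {Q : QuiverData} {K : Type} [Field K] {d : Fin Q.n → ℕ}

/-- the standard matrices of a point -/
abbrev M (x : RepSpace Q d K) : Fin Q.numArrows → Matrix (Σ i : Fin Q.n, Fin (d i)) (Σ i : Fin Q.n, Fin (d i)) K :=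
  mat (Equiv.refl _) x

/-- vertex map -/
abbrev vx (d : Fin Q.n → ℕ) : (Σ i : Fin Q.n, Fin (d i)) → Fin Q.n := Sigma.fst

lemma arrowMap_eq (x : RepSpace Q d K) (a) : arrowMap Q d K x a = Matrix.toLin' (M x a) := by
  ext m ⟨j, w⟩
  simp only [LinearMap.comp_apply, arrowMap, LinearMap.coe_mk, AddHom.coe_mk,
    Matrix.toLin'_apply, Matrix.mulVec, dotProduct, LinearMap.single_apply]
  split_ifs with h
  · have h' : j = Q.tgt a := h
    subst h'
    refine Finset.sum_of_injOn (fun w => (⟨Q.src a, w⟩ : Σ i : Fin Q.n, Fin (d i))) ?_ ?_ ?_ ?_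
    · intro a _ b _ h; simpa using h
    · intro _ _; simp
    · intro jj _ hj
      have : M x a ⟨Q.tgt a, w⟩ jj = 0 := by
        by_contra hne
        obtain ⟨_, q, hq⟩ := mat_ne_zero hne
        exact hj ⟨q, by simp, hq.symm⟩
      rw [this, zero_mul]
    · intro q _
      congr 1
      exact (mat_apply (Equiv.refl _) x a w q).symm
  · symm
    apply Finset.sum_eq_zero
    intro jj _
    have : M x a ⟨j, w⟩ jj = 0 := by
      by_contra hne
      obtain ⟨⟨p, hp⟩, _⟩ := mat_ne_zero hne
      exact h (congrArg Sigma.fst hp)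
    rw [this, zero_mul]

lemma proj_eq (i) : proj Q d K i = Matrix.toLin' (pm K (vx d) i) := by
  ext m jv
  simp [proj, pm, Matrix.toLin'_apply, Matrix.mulVec_diagonal]

lemma evalRel_eq (x : RepSpace Q d K) (r) : evalRel Q d K x r = Matrix.toLin' (ev K (vx d) (M x) r) := by
  have : evalRel Q d K x = (Matrix.toLinAlgEquiv' (R := K)).toAlgHom.comp (ev K (vx d) (M x)) := by
    apply FreeAlgebra.hom_ext
    funext g
    simp only [evalRel, ev, Function.comp, AlgHom.comp_apply, FreeAlgebra.lift_ι_apply, gen]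
    rcases g with i | a
    · exact proj_eq i
    · exact arrowMap_eq x a
  rw [this]; rfl

lemma mem_RepVar {Rels : Set (FreeAlgebra K (Fin Q.n ⊕ Fin Q.numArrows))} {x : RepSpace Q d K} :
    x ∈ RepVar Q d K Rels ↔ Sat Rels (vx d) (M x) := by
  simp only [RepVar, Sat, Set.mem_ofPred_eq, evalRel_eq, LinearEquiv.map_eq_zero_iff]

lemma M_isRep (x : RepSpace Q d K) : IsRep (vx d) (M x) := mat_isRep (fun _ => rfl) x

end bridge
end CBS

namespace CBS
section ext
open QuiverData
variable {Q : QuiverData} {K : Type} [Field K] {A : Type} [CommRing A] [Algebra K A]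
  {I J L : Type} [Fintype I] [DecidableEq I] [Fintype J] [DecidableEq J] [Fintype L] [DecidableEq L]

/-- support condition on rectangular families -/
def Rect (w : J → Fin Q.n) (v : I → Fin Q.n) (c : Fin Q.numArrows → Matrix J I A) : Prop :=
  ∀ a i j, c a i j ≠ 0 → w i = Q.tgt a ∧ v j = Q.src a

lemma rect_iff {w : J → Fin Q.n} {v : I → Fin Q.n} {c : Fin Q.numArrows → Matrix J I A} :
    Rect w v c ↔ ∀ a, pm A w (Q.tgt a) * c a = c a ∧ c a * pm A v (Q.src a) = c a := by
  constructor
  · intro h a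
    constructor
    · ext i j
      simp only [pm, Matrix.diagonal_mul]
      by_cases hc : c a i j = 0
      · simp [hc]
      · simp [(h a i j hc).1]
    · ext i j
      simp only [pm, Matrix.mul_diagonal]
      by_cases hc : c a i j = 0
      · simp [hc]
      · simp [(h a i j hc).2]
  · intro h a i j hc
    have h1 := congrFun (congrFun (h a).1 i) j
    have h2 := congrFun (congrFun (h a).2 i) j
    simp only [pm, Matrix.diagonal_mul, Matrix.mul_diagonal] at h1 h2
    constructor
    · by_contra hh
      simp [hh] at h1; exact hc h1.symm
    · by_contra hh
      simp [hh] at h2; exact hc h2.symm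

lemma isRep_iff_rect {v : I → Fin Q.n} {c : Fin Q.numArrows → Matrix I I A} :
    IsRep v c ↔ Rect v v c := Iff.rfl

lemma Graded.mul {u : L → Fin Q.n} {w : J → Fin Q.n} {v : I → Fin Q.n} {P : Matrix L J A} {R : Matrix J I A}
    (hP : Graded w u P) (hR : Graded v w R) : Graded v u (P * R) := by
  apply graded_of_pm_comm; intro i
  rw [Matrix.mul_assoc, hR.pm_comm, ← Matrix.mul_assoc, hP.pm_comm, Matrix.mul_assoc]

lemma Graded.add {w : J → Fin Q.n} {v : I → Fin Q.n} {P R : Matrix J I A}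
    (hP : Graded v w P) (hR : Graded v w R) : Graded v w (P + R) := by
  apply graded_of_pm_comm; intro i
  rw [Matrix.add_mul, hR.pm_comm, hP.pm_comm, Matrix.mul_add]

lemma Graded.sub {w : J → Fin Q.n} {v : I → Fin Q.n} {P R : Matrix J I A}
    (hP : Graded v w P) (hR : Graded v w R) : Graded v w (P - R) := by
  apply graded_of_pm_comm; intro i
  rw [Matrix.sub_mul, hR.pm_comm, hP.pm_comm, Matrix.mul_sub]

lemma Graded.one (v : I → Fin Q.n) : Graded v v (1 : Matrix I I A) := by
  apply graded_of_pm_comm; intro i; simp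

lemma Graded.mul_rect {u : L → Fin Q.n} {w : J → Fin Q.n} {v : I → Fin Q.n} {P : Matrix L J A}
    {R : Fin Q.numArrows → Matrix J I A}
    (hP : Graded w u P) (hR : Rect w v R) : Rect u v (fun a => P * R a) := by
  rw [rect_iff] at *
  intro a
  refine ⟨?_, ?_⟩
  · rw [← Matrix.mul_assoc, ← hP.pm_comm, Matrix.mul_assoc, (hR a).1]
  · rw [Matrix.mul_assoc, (hR a).2]

lemma Rect.mul_graded {u : L → Fin Q.n} {w : J → Fin Q.n} {v : I → Fin Q.n} {P : Fin Q.numArrows → Matrix L J A}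
    {R : Matrix J I A}
    (hP : Rect u w P) (hR : Graded v w R) : Rect u v (fun a => P a * R) := by
  rw [rect_iff] at *
  intro a
  refine ⟨?_, ?_⟩
  · rw [← Matrix.mul_assoc, (hP a).1]
  · rw [Matrix.mul_assoc, hR.pm_comm, ← Matrix.mul_assoc, (hP a).2]

lemma Rect.add {w : J → Fin Q.n} {v : I → Fin Q.n} {P R : Fin Q.numArrows → Matrix J I A}
    (hP : Rect w v P) (hR : Rect w v R) : Rect w v (fun a => P a + R a) := by
  rw [rect_iff] at *
  intro a
  rw [Matrix.mul_add, Matrix.add_mul, (hP a).1, (hP a).2, (hR a).1, (hR a).2]; simp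

lemma Rect.sub {w : J → Fin Q.n} {v : I → Fin Q.n} {P R : Fin Q.numArrows → Matrix J I A}
    (hP : Rect w v P) (hR : Rect w v R) : Rect w v (fun a => P a - R a) := by
  rw [rect_iff] at *
  intro a
  rw [Matrix.mul_sub, Matrix.sub_mul, (hP a).1, (hP a).2, (hR a).1, (hR a).2]; simp

/-- the block matrices of an extension -/
def blk (y : Fin Q.numArrows → Matrix J J A) (c : Fin Q.numArrows → Matrix J I A)
    (x : Fin Q.numArrows → Matrix I I A) : Fin Q.numArrows → Matrix (J ⊕ I) (J ⊕ I) A :=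
  fun a => Matrix.fromBlocks (y a) (c a) 0 (x a)

/-- graded part of a matrix -/
def grd (v : I → Fin Q.n) (w : J → Fin Q.n) (P : Matrix J I A) : Matrix J I A :=
  fun j i => if w j = v i then P j i else 0

lemma grd_graded (v : I → Fin Q.n) (w : J → Fin Q.n) (P : Matrix J I A) : Graded v w (grd v w P) := by
  intro j i h
  by_contra hh
  simp [grd, hh] at h

lemma grd_eq {v : I → Fin Q.n} {w : J → Fin Q.n} {P : Matrix J I A} (h : Graded v w P) :
    grd v w P = P := by
  ext j i
  by_cases hh : P j i = 0
  · simp [grd, hh]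
  · simp [grd, h j i hh]

lemma mul_grd {u : L → Fin Q.n} {w : J → Fin Q.n} {v : I → Fin Q.n} {P : Matrix L J A}
    (hP : Graded w u P) (R : Matrix J I A) : P * grd v w R = grd v u (P * R) := by
  ext l i
  simp only [Matrix.mul_apply, grd]
  split_ifs with h
  · refine Finset.sum_congr rfl fun j _ => ?_
    by_cases hh : P l j = 0
    · simp [hh]
    · rw [if_pos]; rw [← hP l j hh, h]
  · refine Finset.sum_eq_zero fun j _ => ?_
    by_cases hh : P l j = 0
    · simp [hh]
    · rw [if_neg, mul_zero]; rw [← hP l j hh]; exact h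

/-- vanishing of Ext in matrix form -/
def Ext0 (Rels : Set (FreeAlgebra K (Fin Q.n ⊕ Fin Q.numArrows)))
    (v : I → Fin Q.n) (w : J → Fin Q.n)
    (x : Fin Q.numArrows → Matrix I I K) (y : Fin Q.numArrows → Matrix J J K) : Prop :=
  ∀ c : Fin Q.numArrows → Matrix J I K, Rect w v c → Sat Rels (Sum.elim w v) (blk y c x) →
    ∃ h : Matrix J I K, Graded v w h ∧ ∀ a, c a = h * x a - y a * h

lemma RepHom_iff {dx dy : Fin Q.n → ℕ} {x : RepSpace Q dx K} {y : RepSpace Q dy K}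
    {P : Matrix (Σ i : Fin Q.n, Fin (dy i)) (Σ i : Fin Q.n, Fin (dx i)) K} :
    RepHom Q K dx dy x y (Matrix.toLin' P) ↔
      (∀ a, P * M x a = M y a * P) ∧ Graded (vx dx) (vx dy) P := by
  unfold RepHom
  simp only [arrowMap_eq, proj_eq, ← Matrix.toLin'_mul, EmbeddingLike.apply_eq_iff_eq]
  constructor
  · rintro ⟨h1, h2⟩; exact ⟨h1, graded_of_pm_comm h2⟩
  · rintro ⟨h1, h2⟩; exact ⟨h1, h2.pm_comm⟩

/-- index equivalence for extensions -/
def sumE (dx dy : Fin Q.n → ℕ) : ((Σ i : Fin Q.n, Fin (dy i)) ⊕ (Σ i : Fin Q.n, Fin (dx i))) ≃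
    Σ i : Fin Q.n, Fin (dx i + dy i) :=
  (Equiv.sigmaSumDistrib _ _).symm.trans
    (Equiv.sigmaCongrRight fun i => (Equiv.sumComm _ _).trans finSumFinEquiv)

lemma sumE_fst (dx dy : Fin Q.n → ℕ) (k) :
    (sumE dx dy k).1 = Sum.elim (vx dy) (vx dx) k := by
  rcases k with k | k <;> rfl

lemma M_pt {d : Fin Q.n → ℕ} (e : I ≃ Σ i : Fin Q.n, Fin (d i)) {v : I → Fin Q.n}
    (he : ∀ i, (e i).1 = v i)
    {E : Fin Q.numArrows → Matrix I I K} (hE : IsRep v E) (a) :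
    M (pt e E) a = (E a).submatrix e.symm e.symm := by
  have h := mat_pt he hE
  conv_rhs => rw [← h]
  ext i j
  simp only [mat, Matrix.submatrix_apply, Equiv.refl_apply, Equiv.apply_symm_apply]
  congr!

/-- permutation matrix -/
def PE (K : Type) [Field K] {I' : Type} [DecidableEq I'] (e : I ≃ I') : Matrix I' I K := (1 : Matrix I I K).submatrix e.symm id
/-- inverse permutation matrix -/
def PE' (K : Type) [Field K] {I' : Type} [DecidableEq I'] (e : I ≃ I') : Matrix I I' K := (1 : Matrix I I K).submatrix id e.symm

lemma PE_mul {I' : Type} [Fintype I'] [DecidableEq I'] (e : I ≃ I') : (PE K e : Matrix I' I K) * PE' K e = 1 := by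
  unfold PE PE'
  rw [← Matrix.submatrix_mul _ _ _ id _ Function.bijective_id, Matrix.one_mul]
  simp

lemma PE'_mul {I' : Type} [Fintype I'] [DecidableEq I'] (e : I ≃ I') : (PE' K e : Matrix I I' K) * PE K e = 1 := by
  unfold PE PE'
  rw [← Matrix.submatrix_mul _ _ _ _ _ e.symm.bijective, Matrix.one_mul]
  simp

lemma PE_intertwine {I' : Type} [Fintype I'] [DecidableEq I'] (e : I ≃ I') (E : Matrix I I K) :
    PE K e * E = E.submatrix e.symm e.symm * PE K e := by
  unfold PE
  have h1 : (1 : Matrix I I K).submatrix e.symm id * E = E.submatrix e.symm id := by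
    have := (Matrix.submatrix_mul (1 : Matrix I I K) E e.symm id id Function.bijective_id).symm
    simpa using this
  have h2 : E.submatrix e.symm e.symm * (1 : Matrix I I K).submatrix e.symm id = E.submatrix e.symm id := by
    rw [← Matrix.submatrix_mul _ _ _ _ _ e.symm.bijective, Matrix.mul_one]
  rw [h1, h2]

lemma PE_graded {d : Fin Q.n → ℕ} (e : I ≃ Σ i : Fin Q.n, Fin (d i)) {v : I → Fin Q.n}
    (he : ∀ i, (e i).1 = v i) : Graded v (vx d) (PE K e : Matrix _ I K) := by
  intro j i h
  simp only [PE, Matrix.submatrix_apply, Matrix.one_apply, id, ne_eq, ite_eq_right_iff, one_ne_zero,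
    imp_false, not_not] at h
  rw [← he, ← h]; simp

lemma PE'_graded {d : Fin Q.n → ℕ} (e : I ≃ Σ i : Fin Q.n, Fin (d i)) {v : I → Fin Q.n}
    (he : ∀ i, (e i).1 = v i) : Graded (vx d) v (PE' K e : Matrix I _ K) := by
  intro j i h
  simp only [PE', Matrix.submatrix_apply, Matrix.one_apply, id, ne_eq, ite_eq_right_iff, one_ne_zero,
    imp_false, not_not] at h
  rw [← he, h]; simp

lemma blk_isRep {v : I → Fin Q.n} {w : J → Fin Q.n} {x : Fin Q.numArrows → Matrix I I A}
    {y : Fin Q.numArrows → Matrix J J A} {c : Fin Q.numArrows → Matrix J I A}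
    (hx : IsRep v x) (hy : IsRep w y) (hc : Rect w v c) : IsRep (Sum.elim w v) (blk y c x) := by
  intro a i j h
  rcases i with i | i <;> rcases j with j | j <;> simp only [blk, Matrix.fromBlocks_apply₁₁,
    Matrix.fromBlocks_apply₁₂, Matrix.fromBlocks_apply₂₁, Matrix.fromBlocks_apply₂₂, Sum.elim_inl, Sum.elim_inr] at h ⊢
  · exact hy a i j h
  · exact hc a i j h
  · simp at h
  · exact hx a i j h

lemma ext0_of_ext1Zero {Rels : Set (FreeAlgebra K (Fin Q.n ⊕ Fin Q.numArrows))}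
    {dx dy : Fin Q.n → ℕ} {x : RepSpace Q dx K} {y : RepSpace Q dy K}
    (h : Ext1Zero Q K (fun dv => RepVar Q dv K Rels) dx dy x y) :
    Ext0 Rels (vx dx) (vx dy) (M x) (M y) := by
  intro c hc hs
  set e := sumE dx dy (Q := Q)
  have he : ∀ k, (e k).1 = Sum.elim (vx dy) (vx dx) k := sumE_fst dx dy
  set E := blk (M y) c (M x)
  have hE : IsRep (Sum.elim (vx dy) (vx dx)) E := blk_isRep (M_isRep x) (M_isRep y) hc
  set z : RepSpace Q (fun i => dx i + dy i) K := pt e E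
  have hz : ∀ a, PE K e * E a = M z a * PE K e := fun a => by
    rw [M_pt e he hE]; exact PE_intertwine e (E a)
  have hz' : ∀ a, E a * PE' K e = PE' K e * M z a := fun a => by
    calc E a * PE' K e = PE' K e * (PE K e * E a) * PE' K e := by
          rw [← Matrix.mul_assoc, PE'_mul, Matrix.one_mul]
      _ = PE' K e * M z a * (PE K e * PE' K e) := by rw [hz]; simp only [Matrix.mul_assoc]
      _ = _ := by rw [PE_mul, Matrix.mul_one]
  have hzR : z ∈ RepVar Q (fun i => dx i + dy i) K Rels :=
    mem_RepVar.2 (hs.of_surj (PE_graded e he) hz (PE_mul (K := K) e))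
  let U0 : Matrix ((Σ i : Fin Q.n, Fin (dy i)) ⊕ (Σ i : Fin Q.n, Fin (dx i))) (Σ i : Fin Q.n, Fin (dy i)) K :=
    Matrix.fromRows 1 0
  let V0 : Matrix (Σ i : Fin Q.n, Fin (dx i)) ((Σ i : Fin Q.n, Fin (dy i)) ⊕ (Σ i : Fin Q.n, Fin (dx i))) K :=
    Matrix.fromCols 0 1
  have hU0 : ∀ a, U0 * M y a = E a * U0 := fun a => by
    simp only [U0, E, blk, Matrix.fromRows_mul, Matrix.fromBlocks_mul_fromRows]; simp
  have hV0 : ∀ a, V0 * E a = M x a * V0 := fun a => by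
    simp only [V0, E, blk, Matrix.mul_fromCols, Matrix.fromCols_mul_fromBlocks]; simp
  have gU0 : Graded (vx dy) (Sum.elim (vx dy) (vx dx)) U0 := by
    intro j i hh
    rcases j with j | j
    · simp [U0, Matrix.one_apply] at hh; simp [hh]
    · simp [U0] at hh
  have gV0 : Graded (Sum.elim (vx dy) (vx dx)) (vx dx) V0 := by
    intro j i hh
    rcases i with i | i
    · simp [V0] at hh
    · simp [V0, Matrix.one_apply] at hh; simp [hh]
  have hι : RepHom Q K dy (fun i => dx i + dy i) y z (Matrix.toLin' (PE K e * U0)) :=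
    RepHom_iff.2 ⟨fun a => by
      rw [Matrix.mul_assoc, hU0, ← Matrix.mul_assoc, hz, Matrix.mul_assoc], (PE_graded e he).mul gU0⟩
  have hπ : RepHom Q K (fun i => dx i + dy i) dx z x (Matrix.toLin' (V0 * PE' K e)) :=
    RepHom_iff.2 ⟨fun a => by
      rw [Matrix.mul_assoc, ← hz', ← Matrix.mul_assoc, hV0, Matrix.mul_assoc], gV0.mul (PE'_graded e he)⟩
  let T0 : Matrix (Σ i : Fin Q.n, Fin (dy i)) ((Σ i : Fin Q.n, Fin (dy i)) ⊕ (Σ i : Fin Q.n, Fin (dx i))) K :=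
    Matrix.fromCols 1 0
  let S0 : Matrix ((Σ i : Fin Q.n, Fin (dy i)) ⊕ (Σ i : Fin Q.n, Fin (dx i))) (Σ i : Fin Q.n, Fin (dx i)) K :=
    Matrix.fromRows 0 1
  have TU : T0 * U0 = 1 := by simp [T0, U0, Matrix.fromCols_mul_fromRows]
  have VS : V0 * S0 = 1 := by simp [V0, S0, Matrix.fromCols_mul_fromRows]
  have VU : V0 * U0 = 0 := by simp [V0, U0, Matrix.fromCols_mul_fromRows]
  have UT : U0 * T0 + S0 * V0 = 1 := by
    simp only [U0, T0, S0, V0, Matrix.fromRows_mul_fromCols]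
    simp [Matrix.fromBlocks_add]
  obtain ⟨σ, hσ, hσ1⟩ := h z hzR _ _ hι hπ
    (by
      apply Function.LeftInverse.injective (g := Matrix.toLin' (T0 * PE' K e))
      intro f
      rw [← LinearMap.comp_apply, ← Matrix.toLin'_mul]
      have : T0 * PE' K e * (PE K e * U0) = 1 := by
        rw [Matrix.mul_assoc, ← Matrix.mul_assoc (PE' K e), PE'_mul, Matrix.one_mul, TU]
      rw [this]; simp)
    (by
      apply Function.RightInverse.surjective (g := Matrix.toLin' (PE K e * S0))
      intro f
      rw [← LinearMap.comp_apply, ← Matrix.toLin'_mul]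
      have : V0 * PE' K e * (PE K e * S0) = 1 := by
        rw [Matrix.mul_assoc, ← Matrix.mul_assoc (PE' K e), PE'_mul, Matrix.one_mul, VS]
      rw [this]; simp)
    (by
      apply le_antisymm
      · intro f hf
        rw [LinearMap.mem_ker] at hf
        refine ⟨Matrix.toLin' (T0 * PE' K e) f, ?_⟩
        rw [← LinearMap.comp_apply, ← Matrix.toLin'_mul]
        have : PE K e * U0 * (T0 * PE' K e) = 1 - (PE K e * S0) * (V0 * PE' K e) := by
          rw [eq_sub_iff_add_eq]
          have : PE K e * (U0 * T0 + S0 * V0) * PE' K e = 1 := by rw [UT, Matrix.mul_one, PE_mul]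
          rw [← this]
          simp only [Matrix.mul_add, Matrix.add_mul, Matrix.mul_assoc]
        rw [this, map_sub, Matrix.toLin'_mul (PE K e * S0), LinearMap.sub_apply, LinearMap.comp_apply, hf]
        simp
      · rw [LinearMap.range_le_ker_iff, ← Matrix.toLin'_mul]
        have : V0 * PE' K e * (PE K e * U0) = 0 := by
          rw [Matrix.mul_assoc, ← Matrix.mul_assoc (PE' K e), PE'_mul, Matrix.one_mul, VU]
        rw [this]; simp)
  obtain ⟨S, rfl⟩ : ∃ S, σ = Matrix.toLin' S := ⟨LinearMap.toMatrix' σ, by simp⟩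
  rw [RepHom_iff] at hσ
  obtain ⟨hσ2, hσ3⟩ := hσ
  rw [← Matrix.toLin'_mul, ← Matrix.toLin'_one, EmbeddingLike.apply_eq_iff_eq] at hσ1
  have gW : Graded (vx dx) (Sum.elim (vx dy) (vx dx)) (PE' K e * S) := (PE'_graded e he).mul hσ3
  have hW : ∀ a, (PE' K e * S) * M x a = E a * (PE' K e * S) := fun a => by
    rw [Matrix.mul_assoc, hσ2, ← Matrix.mul_assoc, ← hz', Matrix.mul_assoc]
  have hVW : V0 * (PE' K e * S) = 1 := by rw [← Matrix.mul_assoc]; exact hσ1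
  generalize PE' K e * S = W at gW hW hVW
  obtain ⟨h1, h2, rfl⟩ : ∃ h1 h2, W = Matrix.fromRows h1 h2 := ⟨W.toRows₁, W.toRows₂, by simp⟩
  have h2e : h2 = 1 := by
    rw [← hVW]; simp [V0, Matrix.fromCols_mul_fromRows]
  subst h2e
  refine ⟨h1, fun j i hh => ?_, fun a => ?_⟩
  · have := gW (Sum.inl j) i
    simp only [Matrix.fromRows_apply_inl, Sum.elim_inl] at this
    exact this hh
  · have := hW a
    simp only [E, blk, Matrix.fromRows_mul, Matrix.fromBlocks_mul_fromRows, Matrix.fromRows_inj] at this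
    have t1 := congrArg Matrix.toRows₁ this
    simp only [Matrix.toRows₁_fromRows, Matrix.mul_one] at t1
    rw [t1]; simp

lemma split_aux {Rels : Set (FreeAlgebra K (Fin Q.n ⊕ Fin Q.numArrows))}
    {dx dy dz : Fin Q.n → ℕ} {x : RepSpace Q dx K} {y : RepSpace Q dy K}
    (h : Ext0 Rels (vx dx) (vx dy) (M x) (M y)) (z : RepSpace Q dz K) (hz : z ∈ RepVar Q dz K Rels)
    (ι : Carrier Q dy K →ₗ[K] Carrier Q dz K)
    (π : Carrier Q dz K →ₗ[K] Carrier Q dx K)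
    (hι : RepHom Q K dy dz y z ι) (hπ : RepHom Q K dz dx z x π)
    (inj : Function.Injective ι) (surj : Function.Surjective π)
    (hker : LinearMap.ker π = LinearMap.range ι) :
      ∃ σ : Carrier Q dx K →ₗ[K] Carrier Q dz K,
        RepHom Q K dx dz x z σ ∧ π ∘ₗ σ = LinearMap.id := by
  obtain ⟨U, rfl⟩ : ∃ S, ι = Matrix.toLin' S := ⟨LinearMap.toMatrix' ι, by simp⟩
  obtain ⟨V, rfl⟩ : ∃ S, π = Matrix.toLin' S := ⟨LinearMap.toMatrix' π, by simp⟩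
  rw [RepHom_iff] at hι hπ
  obtain ⟨hU, gU⟩ := hι
  obtain ⟨hV, gV⟩ := hπ
  obtain ⟨s0, hs0⟩ := LinearMap.exists_rightInverse_of_surjective _ (LinearMap.range_eq_top.2 surj)
  obtain ⟨S0, rfl⟩ : ∃ S, s0 = Matrix.toLin' S := ⟨LinearMap.toMatrix' s0, by simp⟩
  rw [← Matrix.toLin'_mul, ← Matrix.toLin'_one, EmbeddingLike.apply_eq_iff_eq] at hs0
  set S := grd (vx dx) (vx dz) S0
  have gS : Graded (vx dx) (vx dz) S := grd_graded _ _ _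
  have VS : V * S = 1 := by rw [mul_grd gV, hs0, grd_eq (Graded.one _)]
  have VU : V * U = 0 := by
    have := LinearMap.range_le_ker_iff.1 hker.ge
    rw [← Matrix.toLin'_mul] at this
    exact (LinearEquiv.map_eq_zero_iff _).1 this
  have Uinj : ∀ {L : Type} (X Y : Matrix (Σ i : Fin Q.n, Fin (dy i)) L K), U * X = U * Y → X = Y := by
    intro L X Y hXY
    ext i l
    have : Matrix.toLin' U (fun j => X j l) = Matrix.toLin' U (fun j => Y j l) := by
      funext k
      exact congrFun (congrFun hXY k) l
    exact congrFun (inj this) i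
  obtain ⟨T, hT⟩ : ∃ T : Matrix (Σ i : Fin Q.n, Fin (dy i)) (Σ i : Fin Q.n, Fin (dz i)) K, U * T = (1 : Matrix (Σ i : Fin Q.n, Fin (dz i)) (Σ i : Fin Q.n, Fin (dz i)) K) - S * V := by
    have : ∀ k, ∃ t, Matrix.toLin' U t = fun j => ((1 : Matrix (Σ i : Fin Q.n, Fin (dz i)) (Σ i : Fin Q.n, Fin (dz i)) K) - S * V) j k := by
      intro k
      have : (fun j => ((1 : Matrix (Σ i : Fin Q.n, Fin (dz i)) (Σ i : Fin Q.n, Fin (dz i)) K) - S * V) j k) ∈ LinearMap.ker (Matrix.toLin' V) := by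
        rw [LinearMap.mem_ker]
        have : V * (1 - S * V) = 0 := by
          rw [Matrix.mul_sub, ← Matrix.mul_assoc, VS]; simp
        funext i
        exact congrFun (congrFun this i) k
      rw [hker] at this
      exact this
    choose t ht using this
    refine ⟨fun i k => t k i, ?_⟩
    ext j k
    exact congrFun (ht k) j
  have TU : T * U = 1 := by
    apply Uinj
    rw [← Matrix.mul_assoc, hT, Matrix.sub_mul, Matrix.mul_assoc, VU]; simp
  have TS : T * S = 0 := by
    apply Uinj
    rw [← Matrix.mul_assoc, hT, Matrix.sub_mul, Matrix.mul_assoc, VS]; simp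
  have gT : Graded (vx dz) (vx dy) T := by
    apply graded_of_pm_comm
    intro i
    apply Uinj
    rw [← Matrix.mul_assoc, ← Matrix.mul_assoc, gU.pm_comm, hT, Matrix.mul_assoc, hT]
    exact ((Graded.one _).sub (gS.mul gV)).pm_comm i
  set c : Fin Q.numArrows → Matrix _ _ K := fun a => T * M z a * S
  have hc : Rect (vx dy) (vx dx) c :=
    (gT.mul_rect (M_isRep z)).mul_graded gS
  have hUc : ∀ a, U * c a = M z a * S - S * M x a := by
    intro a
    simp only [c]
    rw [← Matrix.mul_assoc, ← Matrix.mul_assoc, hT, Matrix.mul_assoc, Matrix.sub_mul, Matrix.one_mul,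
      Matrix.mul_assoc S, ← Matrix.mul_assoc V, hV, Matrix.mul_assoc (M x a), VS, Matrix.mul_one]
  have hs : Sat Rels (Sum.elim (vx dy) (vx dx)) (blk (M y) c (M x)) := by
    refine (mem_RepVar.1 hz).of_inj (P := Matrix.fromCols U S) (P' := Matrix.fromRows T V) ?_ ?_ ?_
    · intro j i hh
      rcases i with i | i
      · exact gU j i (by simpa using hh)
      · exact gS j i (by simpa using hh)
    · intro a
      rw [blk, Matrix.fromCols_mul_fromBlocks, Matrix.mul_fromCols, hU, hUc a]
      simp
    · rw [Matrix.fromRows_mul_fromCols, TU, TS, VU, VS, Matrix.fromBlocks_one]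
  obtain ⟨k, gk, hk⟩ := h c hc hs
  refine ⟨Matrix.toLin' (S + U * k), RepHom_iff.2 ⟨fun a => ?_, gS.add (gU.mul gk)⟩, ?_⟩
  · have h1 := hUc a
    rw [hk a] at h1
    have h2 : M z a * S = U * (k * M x a - M y a * k) + S * M x a := by rw [h1]; abel
    rw [Matrix.mul_add, h2, Matrix.mul_sub, ← Matrix.mul_assoc (M z a), ← hU a, Matrix.add_mul]
    simp only [Matrix.mul_assoc]; abel
  · rw [← Matrix.toLin'_mul, ← Matrix.toLin'_one, EmbeddingLike.apply_eq_iff_eq, Matrix.mul_add, VS,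
      ← Matrix.mul_assoc, VU]; simp

lemma ext1Zero_of_ext0 {Rels : Set (FreeAlgebra K (Fin Q.n ⊕ Fin Q.numArrows))}
    {dx dy : Fin Q.n → ℕ} {x : RepSpace Q dx K} {y : RepSpace Q dy K}
    (h : Ext0 Rels (vx dx) (vx dy) (M x) (M y)) :
    Ext1Zero Q K (fun dv => RepVar Q dv K Rels) dx dy x y := by
  exact fun z hz ι π hι hπ inj surj hker => split_aux h z hz ι π hι hπ inj surj hker

end ext
end CBS

namespace CBS
section semicont
open QuiverData
variable {Q : QuiverData} {K : Type} [Field K] {A : Type} [CommRing A] [Algebra K A]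
  {B : Type} [CommRing B] [Algebra K B]
  {I J L : Type} [Fintype I] [DecidableEq I] [Fintype J] [DecidableEq J] [Fintype L] [DecidableEq L]

lemma exists_rank_factor {m n : Type} [Fintype m] [DecidableEq m] [Fintype n] [DecidableEq n]
    (N : Matrix m n K) :
    ∃ (F : Matrix (Fin N.rank) m K) (G : Matrix n (Fin N.rank) K), F * N * G = 1 := by
  set f := Matrix.toLin' N
  have hr : Module.finrank K (LinearMap.range f) = N.rank := by
    rw [Matrix.rank]; rfl
  let b : LinearMap.range f ≃ₗ[K] (Fin N.rank → K) :=
    LinearEquiv.ofFinrankEq _ _ (by rw [hr]; simp)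
  obtain ⟨g, hg⟩ := LinearMap.exists_rightInverse_of_surjective f.rangeRestrict f.range_rangeRestrict
  obtain ⟨p, hp⟩ := LinearMap.exists_leftInverse_of_injective (LinearMap.range f).subtype
    (Submodule.ker_subtype _)
  refine ⟨LinearMap.toMatrix' (b.toLinearMap ∘ₗ p), LinearMap.toMatrix' (g ∘ₗ b.symm.toLinearMap), ?_⟩
  apply Matrix.toLin'.injective
  rw [Matrix.toLin'_mul, Matrix.toLin'_mul, Matrix.toLin'_toMatrix', Matrix.toLin'_toMatrix', Matrix.toLin'_one]
  apply LinearMap.ext; intro v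
  simp only [LinearMap.comp_apply, LinearEquiv.coe_coe, LinearMap.id_apply]
  have h1 : f (g (b.symm v)) = ((b.symm v : LinearMap.range f) : m → K) :=
    congrArg Subtype.val (LinearMap.congr_fun hg (b.symm v))
  have h2 := LinearMap.congr_fun hp (b.symm v)
  change b (p (f (g (b.symm v)))) = v
  rw [h1]
  simp only [LinearMap.comp_apply, Submodule.subtype_apply, LinearMap.id_apply] at h2
  rw [h2]; simp

lemma rank_open {m n : Type} [Fintype m] [DecidableEq m] [Fintype n] [DecidableEq n]
    (N : Matrix m n A) (e0 : A →ₐ[K] K) :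
    ∃ f : A, e0 f ≠ 0 ∧ ∀ e : A →ₐ[K] K, e f ≠ 0 → (N.map e0).rank ≤ (N.map e).rank := by
  obtain ⟨F, G, h⟩ := exists_rank_factor (N.map e0)
  have key : ∀ e : A →ₐ[K] K, e (F.map (algebraMap K A) * N * G.map (algebraMap K A)).det =
      (F * N.map e * G).det := by
    intro e
    rw [AlgHom.map_det]
    congr 1
    rw [AlgHom.mapMatrix_apply, Matrix.map_mul, Matrix.map_mul]
    congr 2 <;> · ext i j; simp
  refine ⟨(F.map (algebraMap K A) * N * G.map (algebraMap K A)).det, ?_, ?_⟩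
  · rw [key, h]; simp
  · intro e he
    rw [key] at he
    have h1 : (F * N.map e * G).rank = (N.map e0).rank := by
      rw [Matrix.rank_of_isUnit _ ((Matrix.isUnit_iff_isUnit_det _).2 (isUnit_iff_ne_zero.2 he))]
      simp
    rw [← h1]
    exact (Matrix.rank_mul_le_left _ _).trans (Matrix.rank_mul_le_right _ _)

lemma map_toMatrix'_of {m n : Type} [Fintype m] [DecidableEq m] [Fintype n] [DecidableEq n]
    (e : A →ₐ[K] K) (LA : (n → A) →ₗ[A] (m → A)) (LK : (n → K) →ₗ[K] (m → K))
    (h : ∀ v k, e (LA v k) = LK (fun i => e (v i)) k) :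
    (LinearMap.toMatrix' LA).map e = LinearMap.toMatrix' LK := by
  ext k i
  simp only [Matrix.map_apply, LinearMap.toMatrix'_apply, h]
  have : (fun j => e ((Pi.single i 1 : n → A) j)) = Pi.single i 1 := by
    funext j
    simp only [Pi.single_apply]; split_ifs <;> simp
  rw [this]

lemma finrank_range_open {m n : Type} [Fintype m] [DecidableEq m] [Fintype n] [DecidableEq n]
    (LA : (n → A) →ₗ[A] (m → A)) (LK : (A →ₐ[K] K) → (n → K) →ₗ[K] (m → K))
    (h : ∀ e v k, e (LA v k) = LK e (fun i => e (v i)) k) (e0 : A →ₐ[K] K) :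
    ∃ f : A, e0 f ≠ 0 ∧ ∀ e : A →ₐ[K] K, e f ≠ 0 →
      Module.finrank K (LinearMap.range (LK e0)) ≤ Module.finrank K (LinearMap.range (LK e)) := by
  obtain ⟨f, hf, hf'⟩ := rank_open (LinearMap.toMatrix' LA) e0
  refine ⟨f, hf, fun e he => ?_⟩
  have := hf' e he
  rw [map_toMatrix'_of e LA (LK e) (h e), map_toMatrix'_of e0 LA (LK e0) (h e0)] at this
  have r : ∀ e, (LinearMap.toMatrix' (LK e)).rank = Module.finrank K (LinearMap.range (LK e)) := by
    intro e
    rw [Matrix.rank]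
    change Module.finrank K (LinearMap.range (Matrix.toLin' (LinearMap.toMatrix' (LK e)))) = _
    rw [Matrix.toLin'_toMatrix']
  rwa [r, r] at this

lemma finrank_ker_open {m n : Type} [Fintype m] [DecidableEq m] [Fintype n] [DecidableEq n]
    (LA : (n → A) →ₗ[A] (m → A)) (LK : (A →ₐ[K] K) → (n → K) →ₗ[K] (m → K))
    (h : ∀ e v k, e (LA v k) = LK e (fun i => e (v i)) k) (e0 : A →ₐ[K] K) :
    ∃ f : A, e0 f ≠ 0 ∧ ∀ e : A →ₐ[K] K, e f ≠ 0 →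
      Module.finrank K (LinearMap.ker (LK e)) ≤ Module.finrank K (LinearMap.ker (LK e0)) := by
  obtain ⟨f, hf, hf'⟩ := finrank_range_open LA LK h e0
  refine ⟨f, hf, fun e he => ?_⟩
  have := hf' e he
  have h1 := LinearMap.finrank_range_add_finrank_ker (LK e)
  have h2 := LinearMap.finrank_range_add_finrank_ker (LK e0)
  omega

/-- the off-diagonal block of an evaluation -/
noncomputable def E12 (K : Type) [Field K] [Algebra K A] (v : I → Fin Q.n) (w : J → Fin Q.n)
    (x : Fin Q.numArrows → Matrix I I A) (y : Fin Q.numArrows → Matrix J J A)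
    (r : FreeAlgebra K (Fin Q.n ⊕ Fin Q.numArrows))
    (c : Fin Q.numArrows → Matrix J I A) : Matrix J I A :=
  (ev K (Sum.elim w v) (blk y c x) r).toBlocks₁₂

lemma ev_blk (v : I → Fin Q.n) (w : J → Fin Q.n)
    (x : Fin Q.numArrows → Matrix I I A) (y : Fin Q.numArrows → Matrix J J A)
    (r : FreeAlgebra K (Fin Q.n ⊕ Fin Q.numArrows))
    (c : Fin Q.numArrows → Matrix J I A) :
    ev K (Sum.elim w v) (blk y c x) r =
      Matrix.fromBlocks (ev K w y r) (E12 K v w x y r c) 0 (ev K v x r) := by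
  induction r using FreeAlgebra.induction with
  | grade0 t =>
    unfold E12
    simp only [AlgHom.commutes]
    simp only [Algebra.algebraMap_eq_smul_one]
    rw [← Matrix.fromBlocks_one, Matrix.fromBlocks_smul]
    simp
  | grade1 g =>
    unfold E12
    simp only [ev, FreeAlgebra.lift_ι_apply, gen]
    rcases g with i | a
    · simp only [Sum.elim_inl, pm]
      ext (j | j) (k | k) <;> simp [Matrix.diagonal_apply] <;> congr!
    · simp [blk]
  | mul a b ha hb =>
    unfold E12 at *
    rw [map_mul, ha, hb, Matrix.fromBlocks_multiply]
    simp
  | add a b ha hb =>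
    unfold E12 at *
    rw [map_add, ha, hb, Matrix.fromBlocks_add]
    simp

lemma E12_lin (v : I → Fin Q.n) (w : J → Fin Q.n)
    (x : Fin Q.numArrows → Matrix I I A) (y : Fin Q.numArrows → Matrix J J A)
    (r : FreeAlgebra K (Fin Q.n ⊕ Fin Q.numArrows)) :
    (∀ c c', E12 K v w x y r (c + c') = E12 K v w x y r c + E12 K v w x y r c') ∧
    ∀ (t : A) c, E12 K v w x y r (t • c) = t • E12 K v w x y r c := by
  induction r using FreeAlgebra.induction with
  | grade0 t =>
    have : ∀ c, E12 K v w x y (algebraMap K _ t) c = 0 := by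
      intro c
      unfold E12
      simp only [AlgHom.commutes]
      simp only [Algebra.algebraMap_eq_smul_one]
      rw [← Matrix.fromBlocks_one, Matrix.fromBlocks_smul]
      simp
    simp [this]
  | grade1 g =>
    rcases g with i | a
    · have : ∀ c, E12 K v w x y (FreeAlgebra.ι K (Sum.inl i)) c = 0 := by
        intro c
        unfold E12
        simp only [ev, FreeAlgebra.lift_ι_apply, gen, Sum.elim_inl, pm]
        ext j k; simp [Matrix.toBlocks₁₂, Matrix.diagonal_apply]
      simp [this]
    · have : ∀ c, E12 K v w x y (FreeAlgebra.ι K (Sum.inr a)) c = c a := by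
        intro c
        unfold E12
        simp [ev, FreeAlgebra.lift_ι_apply, gen, blk]
      simp [this]
  | mul a b ha hb =>
    have : ∀ c, E12 K v w x y (a * b) c = ev K w y a * E12 K v w x y b c + E12 K v w x y a c * ev K v x b := by
      intro c
      have := congrArg Matrix.toBlocks₁₂ (map_mul (ev K (Sum.elim w v) (blk y c x)) a b)
      rw [ev_blk v w x y a, ev_blk v w x y b, Matrix.fromBlocks_multiply] at this
      simpa [E12] using this
    refine ⟨fun c c' => ?_, fun t c => ?_⟩
    · simp only [this, ha.1, hb.1, Matrix.mul_add, Matrix.add_mul]; abel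
    · simp only [this, ha.2, hb.2, smul_add, Matrix.mul_smul, Matrix.smul_mul]
  | add a b ha hb =>
    have : ∀ c, E12 K v w x y (a + b) c = E12 K v w x y a c + E12 K v w x y b c := by
      intro c
      unfold E12
      rw [map_add]; rfl
    refine ⟨fun c c' => ?_, fun t c => ?_⟩
    · simp only [this, ha.1, hb.1]; abel
    · simp only [this, ha.2, hb.2, smul_add]

lemma sat_blk_iff {Rels : Set (FreeAlgebra K (Fin Q.n ⊕ Fin Q.numArrows))} {v : I → Fin Q.n} {w : J → Fin Q.n}
    {x : Fin Q.numArrows → Matrix I I A} {y : Fin Q.numArrows → Matrix J J A}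
    (hx : Sat Rels v x) (hy : Sat Rels w y)
    {c : Fin Q.numArrows → Matrix J I A} :
    Sat Rels (Sum.elim w v) (blk y c x) ↔ ∀ r ∈ Rels, E12 K v w x y r c = 0 := by
  constructor
  · intro h r hr
    rw [E12, h r hr]; rfl
  · intro h r hr
    rw [ev_blk, hx r hr, hy r hr, h r hr, Matrix.fromBlocks_zero]

lemma blk_map (f : A →ₐ[K] B) (x : Fin Q.numArrows → Matrix I I A) (y : Fin Q.numArrows → Matrix J J A)
    (c : Fin Q.numArrows → Matrix J I A) (a) : (blk y c x a).map f =
    blk (fun a => (y a).map f) (fun a => (c a).map f) (fun a => (x a).map f) a := by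
  ext (j | j) (k | k) <;> simp [blk]

lemma E12_map (f : A →ₐ[K] B) (v : I → Fin Q.n) (w : J → Fin Q.n)
    (x : Fin Q.numArrows → Matrix I I A) (y : Fin Q.numArrows → Matrix J J A)
    (r : FreeAlgebra K (Fin Q.n ⊕ Fin Q.numArrows)) (c : Fin Q.numArrows → Matrix J I A) :
    (E12 K v w x y r c).map f = E12 K v w (fun a => (x a).map f) (fun a => (y a).map f) r
      (fun a => (c a).map f) := by
  have h := ev_map f (Sum.elim w v) (blk y c x) r
  simp only [blk_map] at h
  have := congrArg Matrix.toBlocks₁₂ h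
  exact this

/-- matrices from coordinates -/
def cof (u : Fin Q.numArrows × J × I → A) : Fin Q.numArrows → Matrix J I A :=
  fun a j i => u (a, j, i)

/-- matrix from coordinates -/
def mof (u : J × I → A) : Matrix J I A := fun j i => u (j, i)

/-- the coboundary map -/
def dl (v : I → Fin Q.n) (w : J → Fin Q.n)
    (x : Fin Q.numArrows → Matrix I I A) (y : Fin Q.numArrows → Matrix J J A) :
    (J × I → A) →ₗ[A] (Fin Q.numArrows × J × I → A) where
  toFun h := fun k => (grd v w (mof h) * x k.1 - y k.1 * grd v w (mof h)) k.2.1 k.2.2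
  map_add' h h' := by
    have : grd v w (mof (h + h')) = grd v w (mof h) + grd v w (mof h') := by
      ext i j; simp [grd, mof]; split_ifs <;> simp
    funext k
    rw [this, Matrix.add_mul, Matrix.mul_add]
    simp only [Pi.add_apply, Matrix.sub_apply, Matrix.add_apply]; ring
  map_smul' t h := by
    have : grd v w (mof (t • h)) = t • grd v w (mof h) := by
      ext i j; simp [grd, mof]
    funext k
    rw [this, Matrix.smul_mul, Matrix.mul_smul]
    simp only [Pi.smul_apply, Matrix.sub_apply, Matrix.smul_apply, RingHom.id_apply, smul_sub]

/-- the cocycle equations for a finite set of relations -/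
noncomputable def zl (F : Finset (FreeAlgebra K (Fin Q.n ⊕ Fin Q.numArrows))) (v : I → Fin Q.n) (w : J → Fin Q.n)
    (x : Fin Q.numArrows → Matrix I I A) (y : Fin Q.numArrows → Matrix J J A) :
    (Fin Q.numArrows × J × I → A) →ₗ[A] ((Fin Q.numArrows × J × I) ⊕ (F × J × I) → A) where
  toFun u := Sum.elim (fun k => if w k.2.1 = Q.tgt k.1 ∧ v k.2.2 = Q.src k.1 then 0 else u k)
    (fun k => E12 K v w x y k.1 (cof u) k.2.1 k.2.2)
  map_add' u u' := by
    funext k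
    rcases k with k | k
    · simp; split_ifs <;> simp
    · have : cof (u + u') = cof u + cof u' := rfl
      simp [this, (E12_lin v w x y k.1.1).1]
  map_smul' t u := by
    funext k
    rcases k with k | k
    · simp
    · have : cof (t • u) = t • cof u := rfl
      simp [this, (E12_lin v w x y k.1.1).2]

/-- cocycles -/
noncomputable def Zs (F : Set (FreeAlgebra K (Fin Q.n ⊕ Fin Q.numArrows))) (v : I → Fin Q.n) (w : J → Fin Q.n)
    (x : Fin Q.numArrows → Matrix I I K) (y : Fin Q.numArrows → Matrix J J K) :
    Submodule K (Fin Q.numArrows × J × I → K) where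
  carrier := {u | Rect w v (cof u) ∧ ∀ r ∈ F, E12 K v w x y r (cof u) = 0}
  add_mem' := by
    rintro u u' ⟨h1, h2⟩ ⟨h1', h2'⟩
    refine ⟨Rect.add h1 h1', fun r hr => ?_⟩
    have : cof (u + u') = cof u + cof u' := rfl
    rw [this, (E12_lin v w x y r).1, h2 r hr, h2' r hr, add_zero]
  zero_mem' := by
    refine ⟨fun a i j h => absurd rfl h, fun r _ => ?_⟩
    have : cof (0 : Fin Q.numArrows × J × I → K) = (0 : K) • cof 0 := by simp; rfl
    rw [this, (E12_lin v w x y r).2, zero_smul]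
  smul_mem' := by
    rintro t u ⟨h1, h2⟩
    have : cof (t • u) = t • cof u := rfl
    refine ⟨fun a i j h => h1 a i j ?_, fun r hr => ?_⟩
    · intro h0; rw [this] at h; simp [h0] at h
    · rw [this, (E12_lin v w x y r).2, h2 r hr, smul_zero]

lemma ker_zl (F : Finset (FreeAlgebra K (Fin Q.n ⊕ Fin Q.numArrows))) (v : I → Fin Q.n) (w : J → Fin Q.n)
    (x : Fin Q.numArrows → Matrix I I K) (y : Fin Q.numArrows → Matrix J J K) :
    LinearMap.ker (zl F v w x y) = Zs (F : Set _) v w x y := by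
  ext u
  rw [LinearMap.mem_ker]
  constructor
  · intro h
    constructor
    · intro a j i hne
      have := congrFun h (Sum.inl (a, j, i))
      by_contra hc
      simp only [zl, LinearMap.coe_mk, AddHom.coe_mk, Sum.elim_inl, hc, if_false] at this
      exact hne this
    · intro r hr
      ext j i
      exact congrFun h (Sum.inr (⟨r, hr⟩, j, i))
  · rintro ⟨h1, h2⟩
    funext k
    rcases k with ⟨a, j, i⟩ | ⟨r, j, i⟩
    · simp only [zl, LinearMap.coe_mk, AddHom.coe_mk, Sum.elim_inl]
      split_ifs with hc
      · rfl
      · by_contra hne; exact hc (h1 a j i hne)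
    · exact congrFun (congrFun (h2 r.1 r.2) j) i

lemma Zs_anti {F G : Set (FreeAlgebra K (Fin Q.n ⊕ Fin Q.numArrows))} (h : F ⊆ G) (v : I → Fin Q.n) (w : J → Fin Q.n)
    (x : Fin Q.numArrows → Matrix I I K) (y : Fin Q.numArrows → Matrix J J K) :
    Zs G v w x y ≤ Zs F v w x y := fun _ hu => ⟨hu.1, fun r hr => hu.2 r (h hr)⟩

lemma Zs_fin (Rels : Set (FreeAlgebra K (Fin Q.n ⊕ Fin Q.numArrows))) (v : I → Fin Q.n) (w : J → Fin Q.n)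
    (x : Fin Q.numArrows → Matrix I I K) (y : Fin Q.numArrows → Matrix J J K) :
    ∃ F : Finset (FreeAlgebra K (Fin Q.n ⊕ Fin Q.numArrows)), (F : Set _) ⊆ Rels ∧
      Zs (F : Set _) v w x y = Zs Rels v w x y := by
  classical
  let S : Set ℕ := {k | ∃ F : Finset (FreeAlgebra K (Fin Q.n ⊕ Fin Q.numArrows)), (F : Set _) ⊆ Rels ∧
    Module.finrank K (Zs (F : Set _) v w x y) = k}
  have hS : S.Nonempty := ⟨_, ∅, by simp, rfl⟩
  obtain ⟨F, hF, hk⟩ := Nat.sInf_mem hS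
  refine ⟨F, hF, le_antisymm (fun u hu => ⟨hu.1, fun r hr => ?_⟩) (Zs_anti hF v w x y)⟩
  have hle : Zs ((insert r F : Finset _) : Set _) v w x y ≤ Zs (F : Set _) v w x y :=
    Zs_anti (by simp) v w x y
  have hge : sInf S ≤ Module.finrank K (Zs ((insert r F : Finset _) : Set _) v w x y) := by
    apply Nat.sInf_le
    refine ⟨insert r F, ?_, rfl⟩
    rw [Finset.coe_insert]; exact Set.insert_subset hr hF
  rw [← hk] at hge
  have := Submodule.eq_of_le_of_finrank_le hle hge
  rw [← this] at hu
  exact hu.2 r (by simp)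

lemma sat_zero {Rels : Set (FreeAlgebra K (Fin Q.n ⊕ Fin Q.numArrows))} {v : I → Fin Q.n} {w : J → Fin Q.n}
    {x : Fin Q.numArrows → Matrix I I A} {y : Fin Q.numArrows → Matrix J J A}
    (hx : Sat Rels v x) (hy : Sat Rels w y) : Sat Rels (Sum.elim w v) (blk y 0 x) := by
  rw [sat_blk_iff hx hy]
  intro r _
  have := (E12_lin v w x y r).2 0 0
  simpa using this

lemma cob_sat {Rels : Set (FreeAlgebra K (Fin Q.n ⊕ Fin Q.numArrows))} {v : I → Fin Q.n} {w : J → Fin Q.n}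
    {x : Fin Q.numArrows → Matrix I I A} {y : Fin Q.numArrows → Matrix J J A}
    (hx : Sat Rels v x) (hy : Sat Rels w y) {h : Matrix J I A} (hg : Graded v w h) :
    Sat Rels (Sum.elim w v) (blk y (fun a => h * x a - y a * h) x) := by
  refine (sat_zero hx hy).of_surj (P := Matrix.fromBlocks 1 h 0 1) (P' := Matrix.fromBlocks 1 (-h) 0 1) ?_ ?_ ?_
  · rintro (j | j) (i | i) hh
    · simp [Matrix.one_apply] at hh; simp [hh]
    · exact hg j i hh
    · simp at hh
    · simp [Matrix.one_apply] at hh; simp [hh]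
  · intro a
    simp only [blk, Matrix.fromBlocks_multiply]
    simp
  · simp [Matrix.fromBlocks_multiply, ← Matrix.fromBlocks_one]

lemma range_dl_le {Rels : Set (FreeAlgebra K (Fin Q.n ⊕ Fin Q.numArrows))} {v : I → Fin Q.n} {w : J → Fin Q.n}
    {x : Fin Q.numArrows → Matrix I I K} {y : Fin Q.numArrows → Matrix J J K}
    (hx : Sat Rels v x) (hy : Sat Rels w y) (rx : IsRep v x) (ry : IsRep w y) :
    LinearMap.range (dl v w x y) ≤ Zs Rels v w x y := by
  rintro _ ⟨h, rfl⟩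
  have hg := grd_graded v w (mof h)
  exact ⟨Rect.sub (hg.mul_rect rx) (Rect.mul_graded ry hg),
    (sat_blk_iff hx hy).1 (cob_sat hx hy hg)⟩

lemma ext0_iff {Rels : Set (FreeAlgebra K (Fin Q.n ⊕ Fin Q.numArrows))} {v : I → Fin Q.n} {w : J → Fin Q.n}
    {x : Fin Q.numArrows → Matrix I I K} {y : Fin Q.numArrows → Matrix J J K}
    (hx : Sat Rels v x) (hy : Sat Rels w y) :
    Ext0 Rels v w x y ↔ Zs Rels v w x y ≤ LinearMap.range (dl v w x y) := by
  constructor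
  · rintro h u ⟨h1, h2⟩
    obtain ⟨k, gk, hk⟩ := h (cof u) h1 ((sat_blk_iff hx hy).2 h2)
    refine ⟨fun p => k p.1 p.2, ?_⟩
    funext ⟨a, j, i⟩
    have : grd v w (mof fun p => k p.1 p.2) = k := grd_eq gk
    simp only [dl, LinearMap.coe_mk, AddHom.coe_mk, this]
    exact (congrFun (congrFun (hk a) j) i).symm
  · intro h c h1 h2
    obtain ⟨k, hk⟩ := h (show (fun p => c p.1 p.2.1 p.2.2) ∈ Zs Rels v w x y from
      ⟨h1, (sat_blk_iff hx hy).1 h2⟩)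
    refine ⟨grd v w (mof k), grd_graded _ _ _, fun a => ?_⟩
    ext j i
    exact (congrFun hk (a, j, i)).symm

lemma dl_map (v : I → Fin Q.n) (w : J → Fin Q.n)
    (x : Fin Q.numArrows → Matrix I I A) (y : Fin Q.numArrows → Matrix J J A) (e : A →ₐ[K] B) (u k) :
    e (dl v w x y u k) = dl v w (fun a => (x a).map e) (fun a => (y a).map e) (fun i => e (u i)) k := by
  have h : grd v w (mof fun i => e (u i)) = (grd v w (mof u)).map e := by
    ext i j; simp only [grd, mof, Matrix.map_apply]; split_ifs <;> simp
  simp only [dl, LinearMap.coe_mk, AddHom.coe_mk, h]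
  have h1 : (grd v w (mof u) * x k.1).map e = (grd v w (mof u)).map e * (x k.1).map e := Matrix.map_mul
  have h2 : (y k.1 * grd v w (mof u)).map e = (y k.1).map e * (grd v w (mof u)).map e := Matrix.map_mul
  rw [← h1, ← h2]
  simp only [Matrix.sub_apply, Matrix.map_apply, map_sub]

lemma zl_map (F : Finset (FreeAlgebra K (Fin Q.n ⊕ Fin Q.numArrows))) (v : I → Fin Q.n) (w : J → Fin Q.n)
    (x : Fin Q.numArrows → Matrix I I A) (y : Fin Q.numArrows → Matrix J J A) (e : A →ₐ[K] B) (u k) :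
    e (zl F v w x y u k) = zl F v w (fun a => (x a).map e) (fun a => (y a).map e) (fun i => e (u i)) k := by
  rcases k with k | k
  · simp only [zl, LinearMap.coe_mk, AddHom.coe_mk, Sum.elim_inl]; split_ifs <;> simp
  · exact congrFun (congrFun (E12_map e v w x y k.1.1 (cof u)) k.2.1) k.2.2

/-- openness of the vanishing of Ext -/
lemma ext0_open (Rels : Set (FreeAlgebra K (Fin Q.n ⊕ Fin Q.numArrows))) {v : I → Fin Q.n} {w : J → Fin Q.n}
    {x : Fin Q.numArrows → Matrix I I A} {y : Fin Q.numArrows → Matrix J J A}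
    (rx : IsRep v x) (ry : IsRep w y) (e0 : A →ₐ[K] K)
    (hx0 : Sat Rels v (fun a => (x a).map e0)) (hy0 : Sat Rels w (fun a => (y a).map e0))
    (h0 : Ext0 Rels v w (fun a => (x a).map e0) (fun a => (y a).map e0)) :
    ∃ f : A, e0 f ≠ 0 ∧ ∀ e : A →ₐ[K] K, e f ≠ 0 →
      Sat Rels v (fun a => (x a).map e) → Sat Rels w (fun a => (y a).map e) →
      Ext0 Rels v w (fun a => (x a).map e) (fun a => (y a).map e) := by
  classical
  obtain ⟨F, hF, hZ⟩ := Zs_fin Rels v w (fun a => (x a).map e0) (fun a => (y a).map e0)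
  obtain ⟨f, hf, hf'⟩ := finrank_range_open (dl v w x y)
    (fun e => dl v w (fun a => (x a).map e) (fun a => (y a).map e)) (fun e u k => dl_map v w x y e u k) e0
  obtain ⟨g, hg, hg'⟩ := finrank_ker_open (zl F v w x y)
    (fun e => zl F v w (fun a => (x a).map e) (fun a => (y a).map e)) (fun e u k => zl_map F v w x y e u k) e0
  refine ⟨f * g, by rw [map_mul]; exact mul_ne_zero hf hg, fun e he hx hy => ?_⟩
  rw [map_mul] at he
  have h1 := hf' e (left_ne_zero_of_mul he)
  have h2 := hg' e (right_ne_zero_of_mul he)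
  rw [ker_zl, ker_zl, hZ] at h2
  rw [ext0_iff hx0 hy0] at h0
  rw [ext0_iff hx hy]
  have h3 := Submodule.finrank_mono h0
  have h4 := Submodule.finrank_mono (Zs_anti hF v w (fun a => (x a).map e) (fun a => (y a).map e))
  have h5 := range_dl_le hx hy (rx.map e) (ry.map e)
  exact (Submodule.eq_of_le_of_finrank_le h5 (by omega)).ge

end semicont
end CBS

namespace CBS
section topo
open QuiverData
variable {Q : QuiverData} {K : Type} [Field K] {d : Fin Q.n → ℕ}
  {Rels : Set (FreeAlgebra K (Fin Q.n ⊕ Fin Q.numArrows))}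

lemma basis_D : TopologicalSpace.IsTopologicalBasis
    {U : Set (RepSpace Q d K) | ∃ p : MvPolynomial (Coords Q d) K, U = {x | MvPolynomial.eval x p ≠ 0}} := by
  refine ⟨?_, ?_, rfl⟩
  · rintro _ ⟨p, rfl⟩ _ ⟨q, rfl⟩ x ⟨hp, hq⟩
    refine ⟨_, ⟨p * q, rfl⟩, ?_, ?_⟩
    · simp only [Set.mem_ofPred_eq, map_mul] at *
      exact mul_ne_zero hp hq
    · intro y hy
      simp only [Set.mem_ofPred_eq, map_mul] at hy
      exact ⟨left_ne_zero_of_mul hy, right_ne_zero_of_mul hy⟩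
  · apply Set.eq_univ_of_forall
    intro x
    exact ⟨_, ⟨1, rfl⟩, by simp⟩

lemma genV_isOpen_iff {U : Set (GenV Q d K Rels)} : IsOpen U ↔ ∀ x ∈ U, ∃ p : MvPolynomial (Coords Q d) K,
    MvPolynomial.eval x.1 p ≠ 0 ∧ ∀ y : GenV Q d K Rels, MvPolynomial.eval y.1 p ≠ 0 → y ∈ U := by
  constructor
  · intro h x hx
    obtain ⟨V, hV, rfl⟩ := isOpen_induced_iff.1 h
    obtain ⟨_, ⟨p, rfl⟩, h1, h2⟩ := basis_D.isOpen_iff.1 hV x.1 hx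
    exact ⟨p, h1, fun y hy => h2 hy⟩
  · intro h
    rw [isOpen_iff_forall_mem_open]
    intro x hx
    obtain ⟨p, h1, h2⟩ := h x hx
    refine ⟨{y | MvPolynomial.eval y.1 p ≠ 0}, h2, ?_, h1⟩
    exact isOpen_induced_iff.2 ⟨_, basis_D.isOpen ⟨p, rfl⟩, rfl⟩

lemma isOpen_D (p : MvPolynomial (Coords Q d) K) :
    IsOpen {y : GenV Q d K Rels | MvPolynomial.eval y.1 p ≠ 0} :=
  genV_isOpen_iff.2 fun _ hx => ⟨p, hx, fun _ h => h⟩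

lemma mem_closure_poly {S : Set (GenV Q d K Rels)} {x : GenV Q d K Rels} :
    x ∈ closure S ↔ ∀ p : MvPolynomial (Coords Q d) K,
      (∀ y ∈ S, MvPolynomial.eval y.1 p = 0) → MvPolynomial.eval x.1 p = 0 := by
  rw [mem_closure_iff]
  constructor
  · intro h p hp
    by_contra hne
    obtain ⟨y, hy, hyS⟩ := h _ (isOpen_D p) hne
    exact hy (hp y hyS)
  · intro h U hU hx
    obtain ⟨p, h1, h2⟩ := genV_isOpen_iff.1 hU x hx
    by_contra hne
    apply h1
    apply h
    intro y hy
    by_contra hh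
    exact hne ⟨y, h2 y hh, hy⟩

lemma irr_iff {S : Set (GenV Q d K Rels)} : IsIrreducible S ↔ S.Nonempty ∧
    ∀ p q : MvPolynomial (Coords Q d) K, (∃ x ∈ S, MvPolynomial.eval x.1 p ≠ 0) →
      (∃ x ∈ S, MvPolynomial.eval x.1 q ≠ 0) →
      ∃ x ∈ S, MvPolynomial.eval x.1 p ≠ 0 ∧ MvPolynomial.eval x.1 q ≠ 0 := by
  constructor
  · rintro ⟨h1, h2⟩
    refine ⟨h1, fun p q hp hq => ?_⟩
    obtain ⟨x, hx, h3⟩ := h2 _ _ (isOpen_D p) (isOpen_D q) hp hq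
    exact ⟨x, hx, h3⟩
  · rintro ⟨h1, h2⟩
    refine ⟨h1, ?_⟩
    rintro U V hU hV ⟨x, hx, hxU⟩ ⟨y, hy, hyV⟩
    obtain ⟨p, p1, p2⟩ := genV_isOpen_iff.1 hU x hxU
    obtain ⟨q, q1, q2⟩ := genV_isOpen_iff.1 hV y hyV
    obtain ⟨z, hz, z1, z2⟩ := h2 p q ⟨x, hx, p1⟩ ⟨y, hy, q1⟩
    exact ⟨z, hz, p2 z z1, q2 z z2⟩

instance noeth_rep : TopologicalSpace.NoetherianSpace (RepSpace Q d K) := by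
  let i : RepSpace Q d K → PrimeSpectrum (MvPolynomial (Coords Q d) K) := fun x =>
    ⟨RingHom.ker (MvPolynomial.eval x), RingHom.ker_isPrime _⟩
  apply Topology.IsInducing.noetherianSpace (i := i)
  refine ⟨?_⟩
  rw [PrimeSpectrum.isTopologicalBasis_basic_opens.eq_generateFrom, induced_generateFrom_eq]
  change TopologicalSpace.generateFrom _ = _
  congr 1
  ext U
  simp only [Set.mem_ofPred_eq, Set.mem_image, Set.mem_range, exists_exists_eq_and]
  constructor
  · rintro ⟨p, rfl⟩; exact ⟨p, rfl⟩
  · rintro ⟨p, rfl⟩; exact ⟨p, rfl⟩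

instance noeth_genV : TopologicalSpace.NoetherianSpace (GenV Q d K Rels) :=
  Topology.IsInducing.subtypeVal.noetherianSpace

lemma comp_open {C : Set (GenV Q d K Rels)} (hC : C ∈ irreducibleComponents (GenV Q d K Rels)) :
    ∃ g : MvPolynomial (Coords Q d) K, (∃ x ∈ C, MvPolynomial.eval x.1 g ≠ 0) ∧
      ∀ x : GenV Q d K Rels, MvPolynomial.eval x.1 g ≠ 0 → x ∈ C := by
  obtain ⟨U, hU, ⟨x, hx⟩, hUC⟩ :=
    TopologicalSpace.NoetherianSpace.exists_isOpen_nonempty_subset_irreducibleComponent C hC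
  obtain ⟨p, h1, h2⟩ := genV_isOpen_iff.1 hU x hx
  exact ⟨p, ⟨x, hUC hx, h1⟩, fun y hy => hUC (h2 y hy)⟩

lemma mem_comp_poly {C : Set (GenV Q d K Rels)} (hC : C ∈ irreducibleComponents (GenV Q d K Rels))
    {x : GenV Q d K Rels} (h : ∀ p : MvPolynomial (Coords Q d) K,
      (∀ y ∈ C, MvPolynomial.eval y.1 p = 0) → MvPolynomial.eval x.1 p = 0) : x ∈ C := by
  have := mem_closure_poly.2 h
  rwa [(isClosed_of_mem_irreducibleComponents C hC).closure_eq] at this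

end topo

section choice
/-- separately Zariski open sets meeting a product of irreducible sets meet each other -/
lemma choice_two {s : ℕ} {X : Fin s → Type} [∀ r, TopologicalSpace (X r)] (C : ∀ r, Set (X r))
    (hC : ∀ r, IsIrreducible (C r)) (U V : Set (∀ r, X r))
    (hU : ∀ x r, IsOpen {a | Function.update x r a ∈ U}) (hV : ∀ x r, IsOpen {a | Function.update x r a ∈ V})
    (hU1 : ∃ x ∈ U, ∀ r, x r ∈ C r) (hV1 : ∃ x ∈ V, ∀ r, x r ∈ C r) :
    ∃ x ∈ U, x ∈ V ∧ ∀ r, x r ∈ C r := by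
  have key : ∀ T : Finset (Fin s), ∃ x ∈ U, ∃ y ∈ V, (∀ r, x r ∈ C r) ∧ (∀ r, y r ∈ C r) ∧ ∀ r ∈ T, x r = y r := by
    intro T
    induction T using Finset.induction_on with
    | empty =>
      obtain ⟨x, h1, h2⟩ := hU1
      obtain ⟨y, h3, h4⟩ := hV1
      exact ⟨x, h1, y, h3, h2, h4, by simp⟩
    | insert r T hr ih =>
      obtain ⟨x, hx, y, hy, hxC, hyC, h⟩ := ih
      obtain ⟨a, haC, ha1, ha2⟩ := (hC r).2 _ _ (hU x r) (hV y r) ⟨x r, hxC r, by simpa using hx⟩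
        ⟨y r, hyC r, by simpa using hy⟩
      refine ⟨Function.update x r a, ha1, Function.update y r a, ha2, ?_, ?_, ?_⟩
      · intro t
        by_cases ht : t = r
        · subst ht; simpa using haC
        · simpa [ht] using hxC t
      · intro t
        by_cases ht : t = r
        · subst ht; simpa using haC
        · simpa [ht] using hyC t
      · intro t ht
        by_cases ht' : t = r
        · subst ht'; simp
        · simp only [Function.update_of_ne ht']
          exact h t (Finset.mem_of_mem_insert_of_ne ht ht')
  obtain ⟨x, hx, y, hy, hxC, hyC, h⟩ := key Finset.univ
  have : x = y := funext fun r => h r (Finset.mem_univ r)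
  subst this
  exact ⟨x, hx, hy, hxC⟩

lemma choice_many {s : ℕ} {X : Fin s → Type} [∀ r, TopologicalSpace (X r)] (C : ∀ r, Set (X r))
    (hC : ∀ r, IsIrreducible (C r)) {ι : Type} (T : Finset ι) (U : ι → Set (∀ r, X r))
    (hU : ∀ i x r, IsOpen {a | Function.update x r a ∈ U i})
    (hU1 : ∀ i, ∃ x ∈ U i, ∀ r, x r ∈ C r) :
    ∃ x, (∀ i ∈ T, x ∈ U i) ∧ ∀ r, x r ∈ C r := by
  suffices h : ∃ x ∈ ⋂ i ∈ T, U i, ∀ r, x r ∈ C r by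
    obtain ⟨x, h1, h2⟩ := h
    exact ⟨x, by simpa using h1, h2⟩
  classical
  induction T using Finset.induction_on with
  | empty =>
    choose x hx using fun r => (hC r).1
    exact ⟨x, by simp, hx⟩
  | insert i T hi ih =>
    obtain ⟨x, h1, h2, h3⟩ := choice_two C hC (U i) (⋂ i ∈ T, U i) (hU i) (fun x r => by
      have : {a | Function.update x r a ∈ ⋂ i ∈ T, U i} = ⋂ i ∈ T, {a | Function.update x r a ∈ U i} := by
        ext a; simp
      rw [this]
      exact isOpen_biInter_finset fun i _ => hU i x r) (hU1 i) ih
    refine ⟨x, ?_, h3⟩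
    rw [Finset.set_biInter_insert]
    exact ⟨h1, h2⟩
end choice

section endo
open QuiverData
variable {Q : QuiverData} {K : Type} [Field K] {A : Type} [CommRing A] [Algebra K A]
  {B : Type} [CommRing B] [Algebra K B]
  {I : Type} [Fintype I] [DecidableEq I]

/-- equations of the endomorphism ring -/
def el (v : I → Fin Q.n) (z : Fin Q.numArrows → Matrix I I A) :
    (I × I → A) →ₗ[A] ((Fin Q.numArrows × I × I) ⊕ (I × I) → A) where
  toFun u := Sum.elim (fun k => (mof u * z k.1 - z k.1 * mof u) k.2.1 k.2.2)
    (fun k => if v k.1 = v k.2 then 0 else u k)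
  map_add' u u' := by
    have : mof (u + u') = mof u + mof u' := rfl
    funext k
    rcases k with k | k
    · simp only [this, Sum.elim_inl, Pi.add_apply, Matrix.add_mul, Matrix.mul_add, Matrix.sub_apply, Matrix.add_apply]
      ring
    · simp; split_ifs <;> simp
  map_smul' t u := by
    have : mof (t • u) = t • mof u := rfl
    funext k
    rcases k with k | k
    · simp [this, Matrix.sub_apply, mul_sub]
    · simp

/-- endomorphisms -/
def endS (v : I → Fin Q.n) (z : Fin Q.numArrows → Matrix I I K) : Submodule K (I × I → K) := LinearMap.ker (el v z)

lemma mem_endS {v : I → Fin Q.n} {z : Fin Q.numArrows → Matrix I I K} {u} :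
    u ∈ endS v z ↔ Graded v v (mof u) ∧ ∀ a, mof u * z a = z a * mof u := by
  rw [endS, LinearMap.mem_ker]
  constructor
  · intro h
    refine ⟨fun j i hne => ?_, fun a => ?_⟩
    · by_contra hc
      have := congrFun h (Sum.inr (j, i))
      simp only [el, LinearMap.coe_mk, AddHom.coe_mk, Sum.elim_inr, hc, if_false] at this
      exact hne this
    · rw [← sub_eq_zero]
      ext j i
      exact congrFun h (Sum.inl (a, j, i))
  · rintro ⟨h1, h2⟩
    funext k
    rcases k with ⟨a, j, i⟩ | ⟨j, i⟩
    · simp [el, h2]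
    · simp only [el, LinearMap.coe_mk, AddHom.coe_mk, Sum.elim_inr]
      split_ifs with hc
      · rfl
      · by_contra hne; exact hc (h1 j i hne)

lemma el_map (v : I → Fin Q.n) (z : Fin Q.numArrows → Matrix I I A) (e : A →ₐ[K] B) (u k) :
    e (el v z u k) = el v (fun a => (z a).map e) (fun i => e (u i)) k := by
  rcases k with k | k
  · have h : (mof fun i => e (u i)) = (mof u).map e := rfl
    simp only [el, LinearMap.coe_mk, AddHom.coe_mk, Sum.elim_inl, h]
    have h1 : (mof u * z k.1).map e = (mof u).map e * (z k.1).map e := Matrix.map_mul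
    have h2 : (z k.1 * mof u).map e = (z k.1).map e * (mof u).map e := Matrix.map_mul
    rw [← h1, ← h2]
    simp only [Matrix.sub_apply, Matrix.map_apply, map_sub]
  · simp only [el, LinearMap.coe_mk, AddHom.coe_mk, Sum.elim_inr]; split_ifs <;> simp

lemma end_open (v : I → Fin Q.n) (z : Fin Q.numArrows → Matrix I I A) (e0 : A →ₐ[K] K) :
    ∃ f : A, e0 f ≠ 0 ∧ ∀ e : A →ₐ[K] K, e f ≠ 0 →
      Module.finrank K (endS v (fun a => (z a).map e)) ≤ Module.finrank K (endS v (fun a => (z a).map e0)) :=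
  finrank_ker_open (el v z) (fun e => el v (fun a => (z a).map e)) (fun e u k => el_map v z e u k) e0

lemma endS_conj {v : I → Fin Q.n} {z z' : Fin Q.numArrows → Matrix I I K} {P P' : Matrix I I K}
    (hP : Graded v v P) (hP' : Graded v v P') (h1 : P * P' = 1) (h2 : P' * P = 1)
    (hz : ∀ a, P * z a = z' a * P) : Module.finrank K (endS v z) ≤ Module.finrank K (endS v z') := by
  have hz' : ∀ a, P' * z' a = z a * P' := fun a => by
    calc P' * z' a = P' * (z' a * P) * P' := by
          rw [Matrix.mul_assoc, Matrix.mul_assoc (z' a), h1, Matrix.mul_one]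
      _ = z a * P' := by rw [← hz, ← Matrix.mul_assoc, h2, Matrix.one_mul]
  let f : (I × I → K) →ₗ[K] (I × I → K) :=
    { toFun := fun u k => (P * mof u * P') k.1 k.2
      map_add' := fun u u' => by
        have : mof (u + u') = mof u + mof u' := rfl
        funext k; simp [this, Matrix.mul_add, Matrix.add_mul]
      map_smul' := fun t u => by
        have : mof (t • u) = t • mof u := rfl
        funext k; simp [this] }
  have hf : ∀ u, mof (f u) = P * mof u * P' := fun u => rfl
  have inj : Function.Injective f := by
    intro u u' h
    have h3 := congrArg mof h
    rw [hf, hf] at h3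
    have h4 : P' * (P * mof u * P') * P = P' * (P * mof u' * P') * P := by rw [h3]
    have h5 : ∀ X : Matrix I I K, P' * (P * X * P') * P = X := fun X => by
      rw [← Matrix.mul_assoc, ← Matrix.mul_assoc, h2, Matrix.one_mul, Matrix.mul_assoc, h2, Matrix.mul_one]
    rw [h5, h5] at h4
    funext k
    exact congrFun (congrFun h4 k.1) k.2
  have hle : (endS v z).map f ≤ endS v z' := by
    rintro _ ⟨u, hu, rfl⟩
    obtain ⟨g, c⟩ := mem_endS.1 hu
    refine mem_endS.2 ⟨?_, fun a => ?_⟩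
    · rw [hf]; exact (hP.mul g).mul hP'
    · rw [hf, Matrix.mul_assoc, hz', ← Matrix.mul_assoc, Matrix.mul_assoc P, c, ← Matrix.mul_assoc P, hz]
      simp only [Matrix.mul_assoc]
  calc _ = Module.finrank K ((endS v z).map f) := LinearEquiv.finrank_eq (Submodule.equivMapOfInjective f inj _)
    _ ≤ _ := Submodule.finrank_mono hle

end endo
end CBS

namespace CBS
section bsum
open QuiverData
variable {Q : QuiverData} {K : Type} [Field K] {A : Type} [CommRing A] [Algebra K A]
  {B : Type} [CommRing B] [Algebra K B]
  {s : ℕ} {D : Fin s → Fin Q.n → ℕ} {d : Fin Q.n → ℕ}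

/-- block index set -/
abbrev BI {Q : QuiverData} {s : ℕ} (D : Fin s → Fin Q.n → ℕ) := Σ r : Fin s, Σ i : Fin Q.n, Fin (D r i)

/-- vertex map on block indices -/
abbrev vb {Q : QuiverData} {s : ℕ} (D : Fin s → Fin Q.n → ℕ) : BI D → Fin Q.n := fun k => k.2.1

/-- block index equivalence -/
def eb (D : Fin s → Fin Q.n → ℕ) (d : Fin Q.n → ℕ) (hsum : ∀ i, d i = ∑ r, D r i) :
    BI D ≃ Σ i : Fin Q.n, Fin (d i) :=
  (⟨fun k => ⟨k.2.1, ⟨k.1, k.2.2⟩⟩, fun k => ⟨k.2.1, ⟨k.1, k.2.2⟩⟩, fun _ => rfl, fun _ => rfl⟩ :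
    BI D ≃ Σ i : Fin Q.n, Σ r : Fin s, Fin (D r i)).trans
    (Equiv.sigmaCongrRight fun i => finSigmaFinEquiv.trans (finCongr (hsum i).symm))

lemma eb_fst (hsum : ∀ i, d i = ∑ r, D r i) (k) : (eb D d hsum k).1 = vb D k := rfl

/-- direct sum of matrices -/
def bsum (y : ∀ r, Fin Q.numArrows → Matrix (Σ i : Fin Q.n, Fin (D r i)) (Σ i : Fin Q.n, Fin (D r i)) A) :
    Fin Q.numArrows → Matrix (BI D) (BI D) A :=
  fun a => Matrix.blockDiagonal' (fun r => y r a)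

lemma ev_bsum (y : ∀ r, Fin Q.numArrows → Matrix (Σ i : Fin Q.n, Fin (D r i)) (Σ i : Fin Q.n, Fin (D r i)) A)
    (f : FreeAlgebra K (Fin Q.n ⊕ Fin Q.numArrows)) :
    ev K (vb D) (bsum y) f = Matrix.blockDiagonal' (fun r => ev K (vx (D r)) (y r) f) := by
  induction f using FreeAlgebra.induction with
  | grade0 c =>
    simp only [AlgHom.commutes]
    simp only [Algebra.algebraMap_eq_smul_one]
    rw [← Matrix.blockDiagonal'_one, ← Matrix.blockDiagonal'_smul]
    rfl
  | grade1 g =>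
    rcases g with i | a
    · simp only [ev, FreeAlgebra.lift_ι_apply, gen, Sum.elim_inl]
      unfold pm
      rw [Matrix.blockDiagonal'_diagonal (fun (r : Fin s) (j : Σ i : Fin Q.n, Fin (D r i)) => if vx (D r) j = i then (1 : A) else 0)]
    · simp only [ev, FreeAlgebra.lift_ι_apply, gen, Sum.elim_inr]
      rfl
  | mul a b ha hb => simp only [map_mul]; rw [ha, hb, ← Matrix.blockDiagonal'_mul]
  | add a b ha hb => simp only [map_add]; rw [ha, hb, ← Matrix.blockDiagonal'_add]; rfl

lemma bsum_sat {Rels : Set (FreeAlgebra K (Fin Q.n ⊕ Fin Q.numArrows))}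
    {y : ∀ r, Fin Q.numArrows → Matrix (Σ i : Fin Q.n, Fin (D r i)) (Σ i : Fin Q.n, Fin (D r i)) A} :
    Sat Rels (vb D) (bsum y) ↔ ∀ r, Sat Rels (vx (D r)) (y r) := by
  constructor
  · intro h r f hf
    have := h f hf
    rw [ev_bsum] at this
    ext i j
    have := congrFun (congrFun this ⟨r, i⟩) ⟨r, j⟩
    simpa [Matrix.blockDiagonal'_apply] using this
  · intro h f hf
    rw [ev_bsum]
    ext ⟨r, i⟩ ⟨r', j⟩
    rw [Matrix.blockDiagonal'_apply]
    split_ifs with hh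
    · rw [h r f hf]; rfl
    · rfl

lemma bsum_isRep {y : ∀ r, Fin Q.numArrows → Matrix (Σ i : Fin Q.n, Fin (D r i)) (Σ i : Fin Q.n, Fin (D r i)) A}
    (hy : ∀ r, IsRep (vx (D r)) (y r)) : IsRep (vb D) (bsum y) := by
  rintro a ⟨r, i⟩ ⟨r', j⟩ h
  simp only [bsum, Matrix.blockDiagonal'_apply] at h
  split_ifs at h with hh
  · subst hh
    exact hy r a i j h
  · exact absurd rfl h

lemma mem_RepVar_e {I : Type} [Fintype I] [DecidableEq I] {e : I ≃ Σ i : Fin Q.n, Fin (d i)} {v : I → Fin Q.n}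
    (he : ∀ i, (e i).1 = v i) {Rels : Set (FreeAlgebra K (Fin Q.n ⊕ Fin Q.numArrows))} {x : RepSpace Q d K} :
    x ∈ RepVar Q d K Rels ↔ Sat Rels v (mat e x) := by
  have h : ∀ a, PE K e * mat e x a = M x a * PE K e := fun a => by
    have := M_pt e he (mat_isRep he x) a
    rw [pt_mat] at this
    rw [this]
    exact PE_intertwine e _
  rw [mem_RepVar]
  constructor
  · intro hs
    exact hs.of_inj (PE_graded e he) h (PE'_mul e)
  · intro hs
    exact hs.of_surj (PE_graded e he) h (PE_mul e)

lemma Graded.inv {I J : Type} [Fintype I] [DecidableEq I] [Fintype J] [DecidableEq J]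
    {v : I → Fin Q.n} {w : J → Fin Q.n} {P : Matrix J I A} {P' : Matrix I J A}
    (h : Graded v w P) (h1 : P * P' = 1) (h2 : P' * P = 1) : Graded w v P' := by
  apply graded_of_pm_comm
  intro i
  calc P' * pm A w i = P' * (pm A w i * P) * P' := by
        rw [Matrix.mul_assoc, Matrix.mul_assoc (pm A w i), h1, Matrix.mul_one]
    _ = pm A v i * P' := by rw [← h.pm_comm, ← Matrix.mul_assoc, h2, Matrix.one_mul]

lemma bsum_mulVec (y : ∀ r, Fin Q.numArrows → Matrix (Σ i : Fin Q.n, Fin (D r i)) (Σ i : Fin Q.n, Fin (D r i)) A)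
    (a) (u : BI D → A) (k : BI D) :
    (bsum y a).mulVec u k = (y k.1 a).mulVec (fun j => u ⟨k.1, j⟩) k.2 := by
  obtain ⟨r, i⟩ := k
  simp only [Matrix.mulVec, dotProduct, bsum]
  rw [Fintype.sum_sigma, Finset.sum_eq_single r]
  · simp [Matrix.blockDiagonal'_apply]
  · intro b _ hb
    apply Finset.sum_eq_zero; intro j _
    rw [Matrix.blockDiagonal'_apply_ne _ _ _ hb.symm, zero_mul]
  · simp

end bsum

section bridge2
open QuiverData
variable {Q : QuiverData} {K : Type} [Field K]
  {s : ℕ} {D : Fin s → Fin Q.n → ℕ} {d : Fin Q.n → ℕ}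

lemma ds_of_iso {Cs : ∀ r : Fin s, Set (RepSpace Q (D r) K)} {x : RepSpace Q d K}
    (y : ∀ r, RepSpace Q (D r) K) (hy : ∀ r, y r ∈ Cs r)
    (P : Matrix (Σ i : Fin Q.n, Fin (d i)) (BI D) K) (P' : Matrix (BI D) (Σ i : Fin Q.n, Fin (d i)) K)
    (hP : Graded (vb D) (vx d) P) (h1 : P * P' = 1) (h2 : P' * P = 1)
    (hz : ∀ a, P * bsum (fun r => M (y r)) a = M x a * P) : x ∈ DirectSumSet Q d K s D Cs := by
  have hP' := hP.inv h1 h2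
  have hz' : ∀ a, P' * M x a = bsum (fun r => M (y r)) a * P' := fun a => by
    calc P' * M x a = P' * (M x a * P) * P' := by
          rw [Matrix.mul_assoc, Matrix.mul_assoc (M x a), h1, Matrix.mul_one]
      _ = _ := by rw [← hz, ← Matrix.mul_assoc, h2, Matrix.one_mul]
  have hzv : ∀ a m k, P'.mulVec (arrowMap Q d K x a m) k
      = arrowMap Q (D k.1) K (y k.1) a (fun j => P'.mulVec m ⟨k.1, j⟩) k.2 := fun a m k => by
    rw [arrowMap_eq, arrowMap_eq, Matrix.toLin'_apply, Matrix.toLin'_apply, Matrix.mulVec_mulVec, hz',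
      ← Matrix.mulVec_mulVec, bsum_mulVec]
  have hpv : ∀ i m k, P'.mulVec (proj Q d K i m) k = if vb D k = i then P'.mulVec m k else 0 := fun i m k => by
    rw [proj_eq, Matrix.toLin'_apply, Matrix.mulVec_mulVec, hP'.pm_comm, ← Matrix.mulVec_mulVec, pm,
      Matrix.mulVec_diagonal]
    simp
  have inj : ∀ m, (∀ k, P'.mulVec m k = 0) → m = 0 := fun m h => by
    have : P'.mulVec m = 0 := funext h
    have h3 : P.mulVec (P'.mulVec m) = 0 := by rw [this]; simp
    rwa [Matrix.mulVec_mulVec, h1, Matrix.one_mulVec] at h3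
  have hPP : ∀ u, P'.mulVec (P.mulVec u) = u := fun u => by
    rw [Matrix.mulVec_mulVec, h2, Matrix.one_mulVec]
  let N : Fin s → Submodule K (Carrier Q d K) := fun r =>
    { carrier := {m | ∀ k : BI D, k.1 ≠ r → P'.mulVec m k = 0}
      add_mem' := fun {m m'} h h' k hk => by rw [Matrix.mulVec_add, Pi.add_apply, h k hk, h' k hk, add_zero]
      zero_mem' := fun k hk => by simp
      smul_mem' := fun c m h k hk => by rw [Matrix.mulVec_smul, Pi.smul_apply, h k hk, smul_zero] }
  have hN : ∀ r m, m ∈ N r ↔ ∀ k : BI D, k.1 ≠ r → P'.mulVec m k = 0 := fun r m => Iff.rfl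
  refine ⟨N, ?_, ?_, ?_, ?_⟩
  · intro r
    refine ⟨?_, ?_⟩
    · rintro a _ ⟨m, hm, rfl⟩
      rw [hN]
      intro k hk
      rw [hzv]
      have : (fun j => P'.mulVec m ⟨k.1, j⟩) = 0 := funext fun j => hm ⟨k.1, j⟩ hk
      rw [this, map_zero]; rfl
    · rintro i _ ⟨m, hm, rfl⟩
      rw [hN]
      intro k hk
      rw [hpv, hm k hk]; simp
  · intro r
    rw [Submodule.disjoint_def]
    intro m hm hm'
    let L : Submodule K (Carrier Q d K) :=
      { carrier := {m | ∀ k : BI D, k.1 = r → P'.mulVec m k = 0}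
        add_mem' := fun {m m'} h h' k hk => by rw [Matrix.mulVec_add, Pi.add_apply, h k hk, h' k hk, add_zero]
        zero_mem' := fun k hk => by simp
        smul_mem' := fun c m h k hk => by rw [Matrix.mulVec_smul, Pi.smul_apply, h k hk, smul_zero] }
    have hL : (⨆ t, ⨆ (_ : t ≠ r), N t) ≤ L := by
      refine iSup_le fun t => iSup_le fun ht => ?_
      intro m hm k hk
      exact hm k (by rw [hk]; exact ht.symm)
    apply inj
    intro k
    by_cases hk : k.1 = r
    · exact hL hm' k hk
    · exact hm k hk
  · rw [eq_top_iff]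
    intro m _
    have : m = ∑ r, P.mulVec (fun k => if k.1 = r then P'.mulVec m k else 0) := by
      rw [← Matrix.mulVec_sum]
      have : (∑ r, fun k : BI D => if k.1 = r then P'.mulVec m k else 0) = P'.mulVec m := by
        funext k
        simp [Finset.sum_apply]
      rw [this, Matrix.mulVec_mulVec, h1, Matrix.one_mulVec]
    rw [this]
    refine Submodule.sum_mem _ fun r _ => Submodule.mem_iSup_of_mem r ?_
    rw [hN]
    intro k hk
    rw [hPP, if_neg hk]
  · intro r
    refine ⟨y r, hy r, ?_⟩
    let φ : Carrier Q d K →ₗ[K] Carrier Q (D r) K :=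
      { toFun := fun m k => P'.mulVec m ⟨r, k⟩
        map_add' := fun m m' => by funext k; simp [Matrix.mulVec_add]
        map_smul' := fun c m => by funext k; simp [Matrix.mulVec_smul] }
    have hφ : ∀ m k, φ m k = P'.mulVec m ⟨r, k⟩ := fun m k => rfl
    refine ⟨φ, ?_, ?_, ?_, ?_⟩
    · rw [eq_bot_iff]
      rintro m ⟨hm, hk⟩
      rw [Submodule.mem_bot]
      apply inj
      rintro ⟨t, k⟩
      by_cases ht : t = r
      · subst ht
        exact congrFun hk k
      · exact hm _ ht
    · rw [eq_top_iff]
      intro u _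
      refine ⟨P.mulVec (fun k => if h : k.1 = r then u (h ▸ k.2) else 0), ?_, ?_⟩
      · intro k hk
        rw [hPP, dif_neg hk]
      · funext k
        rw [hφ, hPP]; simp
    · intro a m _
      funext k
      exact hzv a m ⟨r, k⟩
    · intro i m _
      funext k
      rw [hφ, hpv]; rfl

lemma iso_of_ds (hsum : ∀ i, d i = ∑ r, D r i) {Cs : ∀ r : Fin s, Set (RepSpace Q (D r) K)} {x : RepSpace Q d K}
    (hx : x ∈ DirectSumSet Q d K s D Cs) :
    ∃ y : ∀ r, RepSpace Q (D r) K, (∀ r, y r ∈ Cs r) ∧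
    ∃ (P : Matrix (Σ i : Fin Q.n, Fin (d i)) (BI D) K) (P' : Matrix (BI D) (Σ i : Fin Q.n, Fin (d i)) K),
     Graded (vb D) (vx d) P ∧ P * P' = 1 ∧ P' * P = 1 ∧ ∀ a, P * bsum (fun r => M (y r)) a = M x a * P := by
  obtain ⟨N, hst, -, htop, hiso⟩ := hx
  choose y hy φ h1 h2 h3 h4 using hiso
  refine ⟨y, hy, ?_⟩
  have bij : ∀ r, Function.Bijective ((φ r).domRestrict (N r)) := fun r => by
    constructor
    · rw [← LinearMap.ker_eq_bot, eq_bot_iff]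
      rintro ⟨m, hm⟩ hk
      have : m ∈ N r ⊓ LinearMap.ker (φ r) := ⟨hm, hk⟩
      rw [h1] at this
      simpa using this
    · intro u
      have : u ∈ (N r).map (φ r) := by rw [h2]; trivial
      obtain ⟨m, hm, rfl⟩ := this
      exact ⟨⟨m, hm⟩, rfl⟩
  let E : ∀ r, N r ≃ₗ[K] Carrier Q (D r) K := fun r => LinearEquiv.ofBijective _ (bij r)
  let ψ : ∀ r, Carrier Q (D r) K →ₗ[K] Carrier Q d K := fun r => (N r).subtype ∘ₗ (E r).symm.toLinearMap
  have ψmem : ∀ r u, ψ r u ∈ N r := fun r u => ((E r).symm u).2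
  have φψ : ∀ r u, φ r (ψ r u) = u := fun r u => (E r).apply_symm_apply u
  have ψφ : ∀ r m, m ∈ N r → ψ r (φ r m) = m := fun r m hm => congrArg Subtype.val ((E r).symm_apply_apply ⟨m, hm⟩)
  have ψa : ∀ r a u, ψ r (arrowMap Q (D r) K (y r) a u) = arrowMap Q d K x a (ψ r u) := fun r a u => by
    have := h3 r a _ (ψmem r u)
    rw [φψ] at this
    rw [← this, ψφ]
    exact (hst r).1 a ⟨_, ψmem r u, rfl⟩
  have ψp : ∀ r i u, ψ r (proj Q (D r) K i u) = proj Q d K i (ψ r u) := fun r i u => by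
    have := h4 r i _ (ψmem r u)
    rw [φψ] at this
    rw [← this, ψφ]
    exact (hst r).2 i ⟨_, ψmem r u, rfl⟩
  let F : (BI D → K) →ₗ[K] Carrier Q d K :=
    ∑ r, ψ r ∘ₗ (LinearMap.funLeft K K (fun k => (⟨r, k⟩ : BI D)))
  have hF : ∀ u, F u = ∑ r, ψ r (fun k => u ⟨r, k⟩) := fun u => by
    simp only [F, LinearMap.sum_apply]; rfl
  have Fs : Function.Surjective F := by
    rw [← LinearMap.range_eq_top, eq_top_iff, ← htop]
    refine iSup_le fun r => ?_
    intro m hm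
    refine ⟨fun k => if h : k.1 = r then φ r m (h ▸ k.2) else 0, ?_⟩
    rw [hF, Finset.sum_eq_single r]
    · simp only [dite_true]
      exact ψφ r m hm
    · intro b _ hb
      simp only [hb, dite_false]
      exact map_zero (ψ b)
    · simp
  have hfr : Module.finrank K (BI D → K) = Module.finrank K (Carrier Q d K) := by
    rw [Module.finrank_pi, Module.finrank_pi]
    exact Fintype.card_congr (eb D d hsum)
  have Fi : Function.Injective F := (LinearMap.injective_iff_surjective_of_finrank_eq_finrank hfr).2 Fs
  let FE : (BI D → K) ≃ₗ[K] Carrier Q d K := LinearEquiv.ofBijective F ⟨Fi, Fs⟩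
  refine ⟨LinearMap.toMatrix' F, LinearMap.toMatrix' FE.symm.toLinearMap, ?_, ?_, ?_, ?_⟩
  · apply graded_of_pm_comm
    intro i
    apply (Matrix.toLin').injective
    rw [Matrix.toLin'_mul, Matrix.toLin'_mul, Matrix.toLin'_toMatrix', ← proj_eq]
    apply LinearMap.ext
    intro u
    rw [LinearMap.comp_apply, LinearMap.comp_apply, hF, hF, map_sum]
    refine Finset.sum_congr rfl fun r _ => ?_
    rw [← ψp]
    congr 1
    funext k
    rw [pm, Matrix.toLin'_apply, Matrix.mulVec_diagonal]
    simp [proj]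
  · rw [← LinearMap.toMatrix'_comp]
    have : F ∘ₗ FE.symm.toLinearMap = LinearMap.id := LinearMap.ext fun m => FE.apply_symm_apply m
    rw [this, LinearMap.toMatrix'_id]
  · rw [← LinearMap.toMatrix'_comp]
    have : FE.symm.toLinearMap ∘ₗ F = LinearMap.id := LinearMap.ext fun m => FE.symm_apply_apply m
    rw [this, LinearMap.toMatrix'_id]
  · intro a
    apply (Matrix.toLin').injective
    rw [Matrix.toLin'_mul, Matrix.toLin'_mul, Matrix.toLin'_toMatrix', ← arrowMap_eq]
    apply LinearMap.ext
    intro u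
    rw [LinearMap.comp_apply, LinearMap.comp_apply, hF, hF, map_sum]
    refine Finset.sum_congr rfl fun r _ => ?_
    rw [← ψa, arrowMap_eq]
    congr 1
    funext k
    rw [Matrix.toLin'_apply, Matrix.toLin'_apply, bsum_mulVec]

/-- isomorphism in matrix form -/
lemma mem_ds_iff (hsum : ∀ i, d i = ∑ r, D r i) {Cs : ∀ r : Fin s, Set (RepSpace Q (D r) K)} {x : RepSpace Q d K} :
    x ∈ DirectSumSet Q d K s D Cs ↔ ∃ y : ∀ r, RepSpace Q (D r) K, (∀ r, y r ∈ Cs r) ∧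
    ∃ (P P' : Matrix (BI D) (BI D) K),
     Graded (vb D) (vb D) P ∧ P * P' = 1 ∧ P' * P = 1 ∧
      ∀ a, P * bsum (fun r => M (y r)) a = mat (eb D d hsum) x a * P := by
  have he := eb_fst (D := D) (d := d) hsum
  set e := eb D d hsum with hedef
  have h : ∀ a, PE K e * mat e x a = M x a * PE K e := fun a => by
    have := M_pt e he (mat_isRep he x) a
    rw [pt_mat] at this
    rw [this]
    exact PE_intertwine e _
  have h' : ∀ a, PE' K e * M x a = mat e x a * PE' K e := fun a => by
    calc PE' K e * M x a = PE' K e * (M x a * PE K e) * PE' K e := by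
          rw [Matrix.mul_assoc, Matrix.mul_assoc (M x a), PE_mul, Matrix.mul_one]
      _ = _ := by rw [← h, ← Matrix.mul_assoc, PE'_mul, Matrix.one_mul]
  constructor
  · intro hx
    obtain ⟨y, hy, P, P', hP, h1, h2, hz⟩ := iso_of_ds hsum hx
    refine ⟨y, hy, PE' K e * P, P' * PE K e, (PE'_graded e he).mul hP, ?_, ?_, fun a => ?_⟩
    · rw [Matrix.mul_assoc, ← Matrix.mul_assoc P, h1, Matrix.one_mul, PE'_mul]
    · rw [Matrix.mul_assoc, ← Matrix.mul_assoc (PE K e), PE_mul, Matrix.one_mul, h2]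
    · rw [Matrix.mul_assoc, hz, ← Matrix.mul_assoc, h', Matrix.mul_assoc]
  · rintro ⟨y, hy, P, P', hP, h1, h2, hz⟩
    refine ds_of_iso y hy (PE K e * P) (P' * PE' K e) ((PE_graded e he).mul hP) ?_ ?_ fun a => ?_
    · rw [Matrix.mul_assoc, ← Matrix.mul_assoc P, h1, Matrix.one_mul, PE_mul]
    · rw [Matrix.mul_assoc, ← Matrix.mul_assoc (PE' K e), PE'_mul, Matrix.one_mul, h2]
    · rw [Matrix.mul_assoc, hz, ← Matrix.mul_assoc, h, Matrix.mul_assoc]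

end bridge2
end CBS

namespace CBS
section drop
open QuiverData
variable {Q : QuiverData} {K : Type} [Field K]
  {I : Type} [Fintype I] [DecidableEq I]

lemma finrank_split {V W : Type} [AddCommGroup V] [Module K V] [FiniteDimensional K V] [AddCommGroup W] [Module K W]
    (l : V →ₗ[K] W) (S : Submodule K V) :
    Module.finrank K (S.map l) + Module.finrank K ((S ⊓ LinearMap.ker l : Submodule K V)) = Module.finrank K S := by
  have h := (l.domRestrict S).finrank_range_add_finrank_ker
  rw [LinearMap.range_domRestrict] at h
  rw [← h]
  congr 1
  have h2 : LinearMap.ker (l.domRestrict S) = (LinearMap.ker l).comap S.subtype := rfl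
  have h3 : ((LinearMap.ker l).comap S.subtype).map S.subtype = S ⊓ LinearMap.ker l := Submodule.map_comap_subtype _ _
  rw [h2, ← h3]
  exact (LinearEquiv.finrank_eq (Submodule.equivMapOfInjective S.subtype S.injective_subtype _)).symm

/-- two-sided multiplication -/
def ml (X Y : Matrix I I K) : (I × I → K) →ₗ[K] (I × I → K) where
  toFun := fun u k => (X * mof u * Y) k.1 k.2
  map_add' := fun u u' => by
    have : mof (u + u') = mof u + mof u' := rfl
    funext k; simp [this, Matrix.mul_add, Matrix.add_mul]
  map_smul' := fun t u => by
    have : mof (t • u) = t • mof u := rfl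
    funext k; simp [this]

lemma mof_ml (X Y : Matrix I I K) (u) : mof (ml X Y u) = X * mof u * Y := rfl

lemma mof_inj {u u' : I × I → K} (h : mof u = mof u') : u = u' := by
  funext k
  exact congrFun (congrFun h k.1) k.2

lemma end_drop (v : I → Fin Q.n) (z c : Fin Q.numArrows → Matrix I I K) (e f : Matrix I I K)
    (hg : Graded v v e) (hfe : f = 1 - e) (hee : e * e = e) (hez : ∀ a, e * z a = z a * e)
    (hec : ∀ a, e * c a = c a) (hce : ∀ a, c a * e = 0)
    (hc : ¬ ∃ h : Matrix I I K, Graded v v h ∧ ∀ a, c a = h * z a - z a * h) :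
    Module.finrank K (endS v (fun a => z a + c a)) < Module.finrank K (endS v z) := by
  have hgf : Graded v v f := by rw [hfe]; exact (Graded.one v).sub hg
  have hff : f * f = f := by
    rw [hfe]; simp only [Matrix.mul_sub, Matrix.sub_mul, Matrix.one_mul, Matrix.mul_one, hee]; abel
  have hef : e * f = 0 := by rw [hfe, Matrix.mul_sub, Matrix.mul_one, hee, sub_self]
  have hfe0 : f * e = 0 := by rw [hfe, Matrix.sub_mul, Matrix.one_mul, hee, sub_self]
  have hfz : ∀ a, f * z a = z a * f := fun a => by
    rw [hfe, Matrix.sub_mul, Matrix.mul_sub, hez]; simp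
  have hcf : ∀ a, c a * f = c a := fun a => by rw [hfe, Matrix.mul_sub, hce]; simp
  have hfc : ∀ a, f * c a = 0 := fun a => by rw [hfe, Matrix.sub_mul, hec]; simp
  have hsum : e + f = 1 := by rw [hfe]; abel
  -- components
  have comp : ∀ X : Matrix I I K, X = e * X * e + e * X * f + f * X * e + f * X * f := fun X => by
    calc X = (e + f) * X * (e + f) := by rw [hsum]; simp
      _ = _ := by simp only [Matrix.mul_add, Matrix.add_mul]; abel
  have key : ∀ X : Matrix I I K, (∀ a, X * (z a + c a) = (z a + c a) * X) → ∀ p q : Matrix I I K,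
      (∀ a, p * z a = z a * p) → (∀ a, q * z a = z a * q) →
      ∀ a, p * X * q * z a + p * X * (c a * q) = z a * (p * X * q) + p * c a * X * q := by
    intro X hX p q hp hq a
    have h := congrArg (fun Y => p * Y * q) (hX a)
    simp only [Matrix.mul_add, Matrix.add_mul] at h
    calc p * X * q * z a + p * X * (c a * q) = p * (X * z a) * q + p * (X * c a) * q := by
          rw [Matrix.mul_assoc (p * X), hq]; simp only [Matrix.mul_assoc]
      _ = p * (z a * X) * q + p * (c a * X) * q := h
      _ = _ := by
          rw [← Matrix.mul_assoc p, hp]; simp only [Matrix.mul_assoc]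
  set S1 := endS v (fun a => z a + c a) with hS1
  set S0 := endS v z with hS0
  let l1 := ml f e
  let l2 := ml e e + ml f f
  have hl1 : ∀ u, mof (l1 u) = f * mof u * e := fun u => rfl
  have hl2 : ∀ u, mof (l2 u) = e * mof u * e + f * mof u * f := fun u => rfl
  have k1 : ∀ u, l1 u = 0 → f * mof u * e = 0 := fun u hu => by rw [← hl1, hu]; rfl
  have k2 : ∀ u, l2 u = 0 → e * mof u * e = 0 ∧ f * mof u * f = 0 := fun u hu => by
    have h : e * mof u * e + f * mof u * f = 0 := by rw [← hl2, hu]; rfl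
    constructor
    · have := congrArg (fun Y => e * Y) h
      simpa only [Matrix.mul_add, ← Matrix.mul_assoc, hee, hef, Matrix.zero_mul, add_zero, Matrix.mul_zero] using this
    · have := congrArg (fun Y => f * Y) h
      simpa only [Matrix.mul_add, ← Matrix.mul_assoc, hff, hfe0, Matrix.zero_mul, zero_add, Matrix.mul_zero] using this
  have m1 : ∀ u ∈ S1, l1 u ∈ S0 := by
    intro u hu
    obtain ⟨g, h⟩ := mem_endS.1 hu
    refine mem_endS.2 ⟨?_, fun a => ?_⟩
    · rw [hl1]; exact (hgf.mul g).mul hg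
    · have := key (mof u) h f e hfz hez a
      rw [hce, hfc] at this
      simpa [hl1] using this
  have m2 : ∀ u ∈ S1, l1 u = 0 → l2 u ∈ S0 := by
    intro u hu h0
    obtain ⟨g, h⟩ := mem_endS.1 hu
    refine mem_endS.2 ⟨?_, fun a => ?_⟩
    · rw [hl2]; exact ((hg.mul g).mul hg).add ((hgf.mul g).mul hgf)
    · have a1 := key (mof u) h e e hez hez a
      have a2 := key (mof u) h f f hfz hfz a
      have a3 := k1 u h0
      have b1 : e * c a * mof u * e = 0 := by
        rw [hec]
        calc c a * mof u * e = c a * (f * mof u * e) := by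
              rw [← Matrix.mul_assoc, ← Matrix.mul_assoc, hcf]
          _ = 0 := by rw [a3, Matrix.mul_zero]
      have b2 : f * mof u * (c a * f) = 0 := by
        rw [hcf]
        calc f * mof u * c a = (f * mof u * e) * c a := by rw [Matrix.mul_assoc (f * mof u), hec]
          _ = 0 := by rw [a3, Matrix.zero_mul]
      rw [hce, b1] at a1
      rw [hfc, b2] at a2
      rw [hl2, Matrix.add_mul, Matrix.mul_add]
      simp only [Matrix.mul_zero, Matrix.zero_mul, add_zero, zero_add] at a1 a2
      rw [a1, a2]
  have m3 : ∀ u ∈ S1, l1 u = 0 → l2 u = 0 → u ∈ S0 := by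
    intro u hu h1 h2
    obtain ⟨g, h⟩ := mem_endS.1 hu
    obtain ⟨h3, h4⟩ := k2 u h2
    have h5 := k1 u h1
    have hu' : mof u = e * mof u * f := by
      have := comp (mof u)
      rw [h3, h4, h5] at this
      simpa using this
    refine mem_endS.2 ⟨g, fun a => ?_⟩
    have := h a
    rw [Matrix.mul_add, Matrix.add_mul] at this
    have b1 : mof u * c a = 0 := by rw [hu', Matrix.mul_assoc, hfc, Matrix.mul_zero]
    have b2 : c a * mof u = 0 := by rw [hu', ← Matrix.mul_assoc, ← Matrix.mul_assoc, hce]; simp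
    rw [b1, b2] at this
    simpa using this
  have hl11 : ∀ u, l1 (l1 u) = l1 u := fun u => mof_inj (by
    rw [hl1, hl1]
    calc f * (f * mof u * e) * e = (f * f) * mof u * (e * e) := by simp only [Matrix.mul_assoc]
      _ = _ := by rw [hff, hee])
  have hl22 : ∀ u, l2 (l2 u) = l2 u := fun u => mof_inj (by
    rw [hl2, hl2]
    calc e * (e * mof u * e + f * mof u * f) * e + f * (e * mof u * e + f * mof u * f) * f
        = (e * e) * mof u * (e * e) + (e * f) * mof u * f * e + ((f * e) * mof u * e * f + (f * f) * mof u * (f * f)) := by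
          simp only [Matrix.mul_assoc, Matrix.mul_add, Matrix.add_mul]
      _ = _ := by rw [hff, hee, hef, hfe0]; simp)
  have hl12 : ∀ u, l1 (l2 u) = 0 := fun u => mof_inj (by
    rw [hl1, hl2]
    calc f * (e * mof u * e + f * mof u * f) * e
        = (f * e) * mof u * (e * e) + (f * f) * mof u * (f * e) := by
          simp only [Matrix.mul_assoc, Matrix.mul_add, Matrix.add_mul]
      _ = 0 := by rw [hfe0]; simp)
  have q1 : S1.map l1 ≤ S0.map l1 := by
    rintro _ ⟨u, hu, rfl⟩
    exact ⟨l1 u, m1 u hu, hl11 u⟩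
  have q2 : (S1 ⊓ LinearMap.ker l1).map l2 ≤ (S0 ⊓ LinearMap.ker l1).map l2 := by
    rintro _ ⟨u, ⟨hu, hk⟩, rfl⟩
    exact ⟨l2 u, ⟨m2 u hu hk, hl12 u⟩, hl22 u⟩
  have q3 : (S1 ⊓ LinearMap.ker l1 ⊓ LinearMap.ker l2) ≤ (S0 ⊓ LinearMap.ker l1 ⊓ LinearMap.ker l2) := by
    rintro u ⟨⟨hu, h1⟩, h2⟩
    exact ⟨⟨m3 u hu h1 h2, h1⟩, h2⟩
  have q2' : (S1 ⊓ LinearMap.ker l1).map l2 < (S0 ⊓ LinearMap.ker l1).map l2 := by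
    refine lt_of_le_of_ne q2 fun heq => ?_
    let ue : I × I → K := fun k => e k.1 k.2
    have hue : mof ue = e := rfl
    have h1 : l2 ue ∈ (S0 ⊓ LinearMap.ker l1).map l2 := by
      refine ⟨ue, ⟨mem_endS.2 ⟨hg, hez⟩, mof_inj ?_⟩, rfl⟩
      rw [hl1, hue, hfe0, Matrix.zero_mul]; rfl
    rw [← heq] at h1
    obtain ⟨u, ⟨hu, hk⟩, h2⟩ := h1
    have hk1 := k1 u hk
    have h3 : e * mof u * e + f * mof u * f = e := by
      rw [← hl2, h2, hl2, hue, hee, hee, hfe0]; simp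
    have h4 : e * mof u * e = e := by
      have := congrArg (fun Y => e * Y) h3
      simpa only [Matrix.mul_add, ← Matrix.mul_assoc, hee, hef, Matrix.zero_mul, add_zero, Matrix.mul_zero] using this
    have h5 : f * mof u * f = 0 := by
      have := congrArg (fun Y => f * Y) h3
      simpa only [Matrix.mul_add, ← Matrix.mul_assoc, hff, hfe0, Matrix.zero_mul, zero_add, Matrix.mul_zero] using this
    obtain ⟨g, hcom⟩ := mem_endS.1 hu
    apply hc
    refine ⟨- (e * mof u * f), ?_, fun a => ?_⟩
    · have hgr := (hg.mul g).mul hgf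
      intro j i hne
      apply hgr j i
      intro h0
      apply hne
      rw [Matrix.neg_apply, h0, neg_zero]
    · have a1 := key (mof u) hcom e f hez hfz a
      have b1 : e * mof u * (c a * f) = c a := by
        calc e * mof u * (c a * f) = (e * mof u * e) * c a := by
              rw [hcf, Matrix.mul_assoc (e * mof u), hec]
          _ = c a := by rw [h4, hec]
      have b2 : e * c a * mof u * f = 0 := by
        calc e * c a * mof u * f = c a * (f * mof u * f) := by
              rw [hec, ← Matrix.mul_assoc, ← Matrix.mul_assoc, hcf]
          _ = 0 := by rw [h5, Matrix.mul_zero]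
      rw [b1, b2, add_zero] at a1
      rw [Matrix.neg_mul, Matrix.mul_neg, ← a1]; abel
  have r1 := finrank_split l1 S1
  have r2 := finrank_split l1 S0
  have r3 := finrank_split l2 (S1 ⊓ LinearMap.ker l1)
  have r4 := finrank_split l2 (S0 ⊓ LinearMap.ker l1)
  have t1 := Submodule.finrank_mono q1
  have t2 := Submodule.finrank_lt_finrank_of_lt q2'
  have t3 := Submodule.finrank_mono q3
  omega

end drop
end CBS

namespace CBS
section inc
open QuiverData
variable {Q : QuiverData} {K : Type} [Field K] {A : Type} [CommRing A] [Algebra K A]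
  {I J : Type} [Fintype I] [DecidableEq I] [Fintype J] [DecidableEq J]

lemma inc_ev {Rels : Set (FreeAlgebra K (Fin Q.n ⊕ Fin Q.numArrows))} {v : I → Fin Q.n} {w : J → Fin Q.n}
    {z : Fin Q.numArrows → Matrix I I A} {x : Fin Q.numArrows → Matrix J J A} (f : J → I)
    (hf : Function.Injective f) (hv : ∀ j, v (f j) = w j)
    (h1 : ∀ a l j, z a (f l) (f j) = x a l j) (h2 : ∀ a i j, (∀ l, f l ≠ i) → z a i (f j) = 0)
    (hs : Sat Rels w x) : ∀ r ∈ Rels, ∀ i j, ev K v z r i (f j) = 0 := by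
  intro r hr i j
  let P : Matrix I J A := fun i j => if i = f j then 1 else 0
  have hP : Graded w v P := by
    intro i j h
    have : i = f j := by by_contra hh; exact h (if_neg hh)
    rw [this, hv]
  have hmul : ∀ X : Matrix I I A, ∀ i j, (X * P) i j = X i (f j) := fun X i j => by
    rw [Matrix.mul_apply, Finset.sum_eq_single (f j)]
    · have : P (f j) j = 1 := if_pos rfl
      rw [this, mul_one]
    · intro b _ hb
      have : P b j = 0 := if_neg hb
      rw [this, mul_zero]
    · simp
  have hz : ∀ a, P * x a = z a * P := fun a => by
    ext i j
    rw [hmul]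
    by_cases hi : ∃ l, f l = i
    · obtain ⟨l, rfl⟩ := hi
      rw [h1]
      rw [Matrix.mul_apply, Finset.sum_eq_single l]
      · have : P (f l) l = 1 := if_pos rfl
        rw [this, one_mul]
      · intro b _ hb
        have : P (f l) b = 0 := if_neg fun h => hb (hf h).symm
        rw [this, zero_mul]
      · simp
    · push Not at hi
      rw [h2 a i j hi]
      rw [Matrix.mul_apply]
      apply Finset.sum_eq_zero
      intro l _
      have : P i l = 0 := if_neg (fun h => hi l h.symm)
      rw [this, zero_mul]
  have := intertwine (K := K) hP hz r
  rw [hs r hr, Matrix.mul_zero] at this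
  have h3 := hmul (ev K v z r) i j
  rw [← this] at h3
  exact h3.symm

end inc

section pl
open QuiverData
variable {Q : QuiverData} {K : Type} [Field K] {A : Type} [CommRing A] [Algebra K A]
  {s : ℕ} {D : Fin s → Fin Q.n → ℕ} {d : Fin Q.n → ℕ}

/-- place a block -/
def pl (u r : Fin s) (c : Matrix (Σ i : Fin Q.n, Fin (D u i)) (Σ i : Fin Q.n, Fin (D r i)) A) :
    Matrix (BI D) (BI D) A :=
  fun k l => if h : k.1 = u ∧ l.1 = r then c (h.1 ▸ k.2) (h.2 ▸ l.2) else 0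

@[simp] lemma pl_same (u r : Fin s) (c : Matrix (Σ i : Fin Q.n, Fin (D u i)) (Σ i : Fin Q.n, Fin (D r i)) A) (i j) :
    pl u r c ⟨u, i⟩ ⟨r, j⟩ = c i j := by simp [pl]

lemma pl_ne_row {u r : Fin s} (c : Matrix (Σ i : Fin Q.n, Fin (D u i)) (Σ i : Fin Q.n, Fin (D r i)) A) {k l : BI D}
    (h : k.1 ≠ u) : pl u r c k l = 0 := by simp [pl, h]

lemma pl_ne_col {u r : Fin s} (c : Matrix (Σ i : Fin Q.n, Fin (D u i)) (Σ i : Fin Q.n, Fin (D r i)) A) {k l : BI D}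
    (h : l.1 ≠ r) : pl u r c k l = 0 := by simp [pl, h]

lemma bsum_same (y : ∀ r, Fin Q.numArrows → Matrix (Σ i : Fin Q.n, Fin (D r i)) (Σ i : Fin Q.n, Fin (D r i)) A)
    (a r i j) : bsum y a ⟨r, i⟩ ⟨r, j⟩ = y r a i j := by simp [bsum]

lemma bsum_ne (y : ∀ r, Fin Q.numArrows → Matrix (Σ i : Fin Q.n, Fin (D r i)) (Σ i : Fin Q.n, Fin (D r i)) A)
    (a) {k l : BI D} (h : k.1 ≠ l.1) : bsum y a k l = 0 := Matrix.blockDiagonal'_apply_ne _ _ _ h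

lemma mul_bsum (y : ∀ r, Fin Q.numArrows → Matrix (Σ i : Fin Q.n, Fin (D r i)) (Σ i : Fin Q.n, Fin (D r i)) A)
    (a) (h : Matrix (BI D) (BI D) A) (k r j) :
    (h * bsum y a) k ⟨r, j⟩ = ∑ l, h k ⟨r, l⟩ * y r a l j := by
  rw [Matrix.mul_apply, Fintype.sum_sigma, Finset.sum_eq_single r]
  · simp only [bsum_same]
  · intro b _ hb
    apply Finset.sum_eq_zero; intro l _
    rw [bsum_ne _ _ hb, mul_zero]
  · simp

lemma bsum_mul (y : ∀ r, Fin Q.numArrows → Matrix (Σ i : Fin Q.n, Fin (D r i)) (Σ i : Fin Q.n, Fin (D r i)) A)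
    (a) (h : Matrix (BI D) (BI D) A) (k r j) :
    (bsum y a * h) ⟨r, j⟩ k = ∑ l, y r a j l * h ⟨r, l⟩ k := by
  rw [Matrix.mul_apply, Fintype.sum_sigma, Finset.sum_eq_single r]
  · simp only [bsum_same]
  · intro b _ hb
    apply Finset.sum_eq_zero; intro l _
    rw [bsum_ne _ _ hb.symm, zero_mul]
  · simp

lemma pl_isRep {u r : Fin s} {c : Fin Q.numArrows → Matrix (Σ i : Fin Q.n, Fin (D u i)) (Σ i : Fin Q.n, Fin (D r i)) A}
    (hc : Rect (vx (D u)) (vx (D r)) c) : IsRep (vb D) (fun a => pl u r (c a)) := by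
  rintro a ⟨u', i⟩ ⟨r', j⟩ h
  by_cases hu : u' = u
  · subst hu
    by_cases hr : r' = r
    · subst hr
      simp only [pl_same] at h
      exact hc a i j h
    · exact absurd (pl_ne_col _ hr) h
  · exact absurd (pl_ne_row _ hu) h

lemma sat_pl {Rels : Set (FreeAlgebra K (Fin Q.n ⊕ Fin Q.numArrows))} {u r : Fin s} (hur : r ≠ u)
    {y : ∀ r, Fin Q.numArrows → Matrix (Σ i : Fin Q.n, Fin (D r i)) (Σ i : Fin Q.n, Fin (D r i)) A}
    {c : Fin Q.numArrows → Matrix (Σ i : Fin Q.n, Fin (D u i)) (Σ i : Fin Q.n, Fin (D r i)) A}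
    (hy : ∀ r, Sat Rels (vx (D r)) (y r))
    (hs : Sat Rels (Sum.elim (vx (D u)) (vx (D r))) (blk (y u) c (y r))) :
    Sat Rels (vb D) (fun a => bsum y a + pl u r (c a)) := by
  intro f hf
  ext k ⟨t, j⟩
  by_cases ht : t = r
  · subst ht
    refine inc_ev (w := Sum.elim (vx (D u)) (vx (D t))) (x := blk (y u) c (y t))
      (Sum.elim (fun i => (⟨u, i⟩ : BI D)) (fun i => (⟨t, i⟩ : BI D))) ?_ ?_ ?_ ?_ hs f hf k (Sum.inr j)
    · rintro (i | i) (i' | i') h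
      · simpa using h
      · simp only [Sum.elim_inl, Sum.elim_inr] at h
        exact absurd (congrArg Sigma.fst h).symm hur
      · simp only [Sum.elim_inl, Sum.elim_inr] at h
        exact absurd (congrArg Sigma.fst h) hur
      · simpa using h
    · rintro (i | i) <;> rfl
    · rintro a (i | i) (i' | i')
      · simp only [Sum.elim_inl, Matrix.add_apply, bsum_same, blk, Matrix.fromBlocks_apply₁₁]
        rw [pl_ne_col _ hur.symm, add_zero]
      · simp only [Sum.elim_inl, Sum.elim_inr, Matrix.add_apply, pl_same, blk, Matrix.fromBlocks_apply₁₂]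
        rw [bsum_ne _ _ hur.symm, zero_add]
      · simp only [Sum.elim_inl, Sum.elim_inr, Matrix.add_apply, blk, Matrix.fromBlocks_apply₂₁]
        rw [bsum_ne _ _ hur, pl_ne_row _ hur, add_zero]; rfl
      · simp only [Sum.elim_inr, Matrix.add_apply, bsum_same, blk, Matrix.fromBlocks_apply₂₂]
        rw [pl_ne_row _ hur, add_zero]
    · rintro a ⟨t', i⟩ j hl
      have h1 : t' ≠ u := by rintro rfl; exact hl (Sum.inl i) rfl
      have h2 : t' ≠ t := by rintro rfl; exact hl (Sum.inr i) rfl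
      rw [Matrix.add_apply, pl_ne_row _ h1, add_zero, bsum_ne]
      rcases j with j | j
      · exact h1
      · exact h2
  · refine inc_ev (w := vx (D t)) (x := y t) (fun i => (⟨t, i⟩ : BI D)) ?_ ?_ ?_ ?_ (hy t) f hf k j
    · intro i j h; simpa using h
    · intro j; rfl
    · intro a l j
      rw [Matrix.add_apply, bsum_same, pl_ne_col _ ht, add_zero]
    · rintro a ⟨t', i⟩ j hl
      have h1 : t' ≠ t := by rintro rfl; exact hl i rfl
      rw [Matrix.add_apply, bsum_ne _ _ h1, pl_ne_col _ ht, add_zero]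

end pl

section fwd
open QuiverData
variable {Q : QuiverData} {K : Type} [Field K] [IsAlgClosed K]
  {s : ℕ} {D : Fin s → Fin Q.n → ℕ} {d : Fin Q.n → ℕ}

lemma sat_blk_smul {I J : Type} [Fintype I] [DecidableEq I] [Fintype J] [DecidableEq J]
    {Rels : Set (FreeAlgebra K (Fin Q.n ⊕ Fin Q.numArrows))} {v : I → Fin Q.n} {w : J → Fin Q.n}
    {x : Fin Q.numArrows → Matrix I I K} {y : Fin Q.numArrows → Matrix J J K} {c : Fin Q.numArrows → Matrix J I K}
    (hx : Sat Rels v x) (hy : Sat Rels w y) (h : Sat Rels (Sum.elim w v) (blk y c x)) (t : K) :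
    Sat Rels (Sum.elim w v) (blk y (fun a => t • c a) x) := by
  rw [sat_blk_iff hx hy] at *
  intro r hr
  have := (E12_lin (K := K) v w x y r).2 t c
  have h2 : (fun a => t • c a) = t • c := rfl
  rw [h2, this, h r hr, smul_zero]

theorem fwd (Rels : Set (FreeAlgebra K (Fin Q.n ⊕ Fin Q.numArrows))) (hsum : ∀ i, d i = ∑ r, D r i)
    (Cs : ∀ r : Fin s, Set (GenV Q (D r) K Rels))
    (hC : closure {x : GenV Q d K Rels |
        x.1 ∈ DirectSumSet Q d K s D (fun r => Subtype.val '' Cs r)}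
      ∈ irreducibleComponents (GenV Q d K Rels)) (r u : Fin s) (hru : r ≠ u) :
    ∃ x ∈ Cs r, ∃ y ∈ Cs u,
        Ext1Zero Q K (fun dv => RepVar Q dv K Rels) (D r) (D u) x.1 y.1 := by
  by_contra hno
  push Not at hno
  set DS := {x : GenV Q d K Rels | x.1 ∈ DirectSumSet Q d K s D (fun r => Subtype.val '' Cs r)} with hDS
  set C := closure DS with hCdef
  have he := eb_fst (D := D) (d := d) hsum
  set e := eb D d hsum with hedef
  have hirr : IsIrreducible C := hC.1
  obtain ⟨g, hg1, hg2⟩ := comp_open hC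
  -- minimal endomorphism dimension
  obtain ⟨z0, hz0, hmin⟩ : ∃ z0 ∈ C, ∀ z ∈ C, Module.finrank K (endS (vb D) (mat e z0.1)) ≤
      Module.finrank K (endS (vb D) (mat e z.1)) := by
    obtain ⟨z1, hz1⟩ := hirr.1
    classical
    let p : ℕ → Prop := fun n => ∃ z ∈ C, Module.finrank K (endS (vb D) (mat e z.1)) = n
    have hp : ∃ n, p n := ⟨_, z1, hz1, rfl⟩
    obtain ⟨z0, hz0, h⟩ := Nat.find_spec hp
    refine ⟨z0, hz0, fun z hz => ?_⟩
    rw [h]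
    exact Nat.find_min' hp ⟨z, hz, rfl⟩
  obtain ⟨f, hf0, hf⟩ := end_open (K := K) (vb D) (mat e (fun c => (MvPolynomial.X c : MvPolynomial (Coords Q d) K)))
    (MvPolynomial.aeval z0.1)
  have hmap : ∀ z : RepSpace Q d K, (fun a => (mat e (fun c => (MvPolynomial.X c : MvPolynomial (Coords Q d) K)) a).map
      (MvPolynomial.aeval z : MvPolynomial (Coords Q d) K →ₐ[K] K)) = mat e z := fun z => by
    funext a
    rw [mat_map]
    simp
  rw [hmap] at hf
  obtain ⟨z2, hz2, hz2f, hz2g⟩ := (irr_iff.1 hirr).2 f g ⟨z0, hz0, by simpa [MvPolynomial.aeval_eq_eval] using hf0⟩ hg1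
  obtain ⟨w, hw, hwfg⟩ : ∃ w ∈ DS, MvPolynomial.eval w.1 (f * g) ≠ 0 := by
    by_contra hcon
    push Not at hcon
    have := mem_closure_poly.1 hz2 (f * g) hcon
    rw [map_mul] at this
    exact mul_ne_zero hz2f hz2g this
  rw [map_mul] at hwfg
  have hwf := left_ne_zero_of_mul hwfg
  have hwg := right_ne_zero_of_mul hwfg
  have hwmin : ∀ z ∈ C, Module.finrank K (endS (vb D) (mat e w.1)) ≤ Module.finrank K (endS (vb D) (mat e z.1)) := by
    intro z hz
    have := hf (MvPolynomial.aeval w.1) (by simpa [MvPolynomial.aeval_eq_eval] using hwf)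
    rw [hmap] at this
    exact this.trans (hmin z hz)
  obtain ⟨y, hy, P, P', hP, h1, h2, hz⟩ := (mem_ds_iff hsum).1 hw
  have hP' := hP.inv h1 h2
  choose y' hy' hyy using hy
  have hysat : ∀ r, Sat Rels (vx (D r)) (M (y r)) := fun r => by
    rw [← mem_RepVar, ← hyy]; exact (y' r).2
  have hnext : ¬ Ext0 Rels (vx (D r)) (vx (D u)) (M (y r)) (M (y u)) := by
    intro h
    have h3 := ext1Zero_of_ext0 h
    rw [← hyy r, ← hyy u] at h3
    exact hno _ (hy' r) _ (hy' u) h3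
  unfold Ext0 at hnext
  push Not at hnext
  obtain ⟨c, hc, hcs, hcn⟩ := hnext
  -- the family
  let Bt : K → Fin Q.numArrows → Matrix (BI D) (BI D) K := fun t a =>
    bsum (fun r => M (y r)) a + pl u r (t • c a)
  have hplsmul : ∀ (t : K) a, pl u r (t • c a) = t • pl u r (c a) := fun t a => by
    ext k l
    simp only [pl, Matrix.smul_apply]
    split_ifs <;> simp
  have hBsat : ∀ t, Sat Rels (vb D) (Bt t) := fun t =>
    sat_pl hru hysat (sat_blk_smul (hysat r) (hysat u) hcs t)
  have hBrep : ∀ t, IsRep (vb D) (Bt t) := fun t => by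
    refine Rect.add (bsum_isRep fun r => M_isRep (y r)) (pl_isRep ?_)
    intro a i j h
    refine hc a i j ?_
    intro h0
    apply h
    change t • c a i j = 0
    rw [h0, smul_zero]
  let Wm : K → Fin Q.numArrows → Matrix (BI D) (BI D) K := fun t a => P * Bt t a * P'
  have hWint : ∀ t a, P * Bt t a = Wm t a * P := fun t a => by
    simp only [Wm]
    rw [Matrix.mul_assoc, h2, Matrix.mul_one]
  have hWrep : ∀ t, IsRep (vb D) (Wm t) := fun t => Rect.mul_graded (hP.mul_rect (hBrep t)) hP'
  have hWsat : ∀ t, Sat Rels (vb D) (Wm t) := fun t => (hBsat t).of_surj hP (hWint t) h1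
  have hmatpt : ∀ t, mat e (pt e (Wm t)) = Wm t := fun t => mat_pt he (hWrep t)
  let W : K → GenV Q d K Rels := fun t => ⟨pt e (Wm t), by
    rw [mem_RepVar_e he, hmatpt]; exact hWsat t⟩
  have hW0 : (W 0).1 = w.1 := by
    have : Wm 0 = mat e w.1 := by
      funext a
      simp only [Wm, Bt, hplsmul, zero_smul, add_zero]
      rw [hz, Matrix.mul_assoc, h1, Matrix.mul_one]
    change pt e (Wm 0) = _
    rw [this, pt_mat]
  -- polynomials along the line
  let cp : Coords Q d → Polynomial K := fun k => Polynomial.C (pt e (fun a => P * bsum (fun r => M (y r)) a * P') k)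
    + Polynomial.X * Polynomial.C (pt e (fun a => P * pl u r (c a) * P') k)
  have hcp : ∀ t k, Polynomial.eval t (cp k) = (W t).1 k := fun t k => by
    simp only [cp, Polynomial.eval_add, Polynomial.eval_C, Polynomial.eval_mul, Polynomial.eval_X]
    change _ = pt e (Wm t) k
    simp only [pt, Wm, Bt, hplsmul, Matrix.mul_add, Matrix.add_mul, Matrix.mul_smul, Matrix.smul_mul,
      Matrix.add_apply, Matrix.smul_apply, smul_eq_mul]
  let qp : MvPolynomial (Coords Q d) K → Polynomial K := fun p => MvPolynomial.aeval cp p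
  have hqp : ∀ p t, Polynomial.eval t (qp p) = MvPolynomial.eval (W t).1 p := fun p t => by
    have : (Polynomial.aeval t).comp (MvPolynomial.aeval cp) = (MvPolynomial.aeval (W t).1 : MvPolynomial (Coords Q d) K →ₐ[K] K) := by
      apply MvPolynomial.algHom_ext
      intro k
      rw [AlgHom.comp_apply, MvPolynomial.aeval_X, MvPolynomial.aeval_X, ← hcp, Polynomial.coe_aeval_eq_eval]
    have h3 := DFunLike.congr_fun this p
    rw [AlgHom.comp_apply, Polynomial.coe_aeval_eq_eval] at h3
    rw [h3, MvPolynomial.aeval_eq_eval]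
  have hW1 : W 1 ∈ C := by
    apply mem_comp_poly hC
    intro p hp
    have hprod : qp p * qp g = 0 := by
      apply Polynomial.funext
      intro t
      rw [Polynomial.eval_mul, Polynomial.eval_zero, hqp, hqp]
      by_cases hgt : MvPolynomial.eval (W t).1 g = 0
      · rw [hgt, mul_zero]
      · rw [hp _ (hg2 _ hgt), zero_mul]
    have hqg : qp g ≠ 0 := by
      intro h0
      have := hqp g 0
      rw [h0, hW0, Polynomial.eval_zero] at this
      exact hwg this.symm
    have hqp0 : qp p = 0 := (mul_eq_zero.1 hprod).resolve_right hqg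
    rw [← hqp, hqp0, Polynomial.eval_zero]
  have hle := hwmin _ hW1
  change _ ≤ Module.finrank K (endS (vb D) (mat e (pt e (Wm 1)))) at hle
  rw [hmatpt] at hle
  have hIntw : ∀ (z z' : Fin Q.numArrows → Matrix (BI D) (BI D) K), (∀ a, P * z a = z' a * P) → ∀ a, P' * z' a = z a * P' := by
    intro z z' h a
    calc P' * z' a = P' * (z' a * P) * P' := by
          rw [Matrix.mul_assoc, Matrix.mul_assoc (z' a), h1, Matrix.mul_one]
      _ = z a * P' := by rw [← h, ← Matrix.mul_assoc, h2, Matrix.one_mul]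
  have e1 := endS_conj hP hP' h1 h2 hz
  have e2 := endS_conj hP' hP h2 h1 (hIntw _ _ (hWint 1))
  have hdrop := end_drop (vb D) (bsum (fun r => M (y r))) (fun a => pl u r (c a))
    (Matrix.diagonal (fun k : BI D => if k.1 = u then 1 else 0))
    (1 - Matrix.diagonal (fun k : BI D => if k.1 = u then 1 else 0)) ?_ rfl ?_ ?_ ?_ ?_ ?_
  · have hB1 : Bt 1 = fun a => bsum (fun r => M (y r)) a + pl u r (c a) := by
      funext a; simp only [Bt, one_smul]
    rw [hB1] at e2
    rw [← hedef] at e1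
    omega
  · intro k l h
    by_cases hkl : k = l
    · rw [hkl]
    · rw [Matrix.diagonal_apply_ne _ hkl] at h; exact absurd rfl h
  · rw [Matrix.diagonal_mul_diagonal]; congr 1; funext k; split_ifs <;> simp
  · intro a
    ext k l
    rw [Matrix.diagonal_mul, Matrix.mul_diagonal]
    by_cases hkl : k.1 = l.1
    · rw [hkl, mul_comm]
    · rw [bsum_ne _ _ hkl]; simp
  · intro a
    ext k l
    rw [Matrix.diagonal_mul]
    split_ifs with h
    · rw [one_mul]
    · rw [pl_ne_row _ h, mul_zero]
  · intro a
    ext k l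
    rw [Matrix.mul_diagonal]
    split_ifs with h
    · rw [pl_ne_col _ (by rw [h]; exact hru.symm), zero_mul]; rfl
    · rw [mul_zero]; rfl
  · rintro ⟨h, hh, hco⟩
    obtain ⟨a, ha⟩ := hcn (fun i j => h ⟨u, i⟩ ⟨r, j⟩) (fun i j hne => hh _ _ hne)
    apply ha
    ext i j
    have := congrFun (congrFun (hco a) ⟨u, i⟩) ⟨r, j⟩
    rw [pl_same, Matrix.sub_apply, mul_bsum, bsum_mul] at this
    rw [this]; rfl

end fwd
end CBS

namespace CBS
section xp
open QuiverData
variable {Q : QuiverData} {K : Type} [Field K] {A : Type} [CommRing A] [Algebra K A]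
  {B : Type} [CommRing B] [Algebra K B]
  {s : ℕ} {D : Fin s → Fin Q.n → ℕ} {d : Fin Q.n → ℕ}

/-- conjugated block sum -/
def XP (hsum : ∀ i, d i = ∑ r, D r i) (P P' : Matrix (BI D) (BI D) A) (y : ∀ r, Coords Q (D r) → A) : Coords Q d → A :=
  pt (eb D d hsum) (fun a => P * bsum (fun r => mat (Equiv.refl _) (y r)) a * P')

lemma bsum_map (f : A →ₐ[K] B)
    (y : ∀ r, Fin Q.numArrows → Matrix (Σ i : Fin Q.n, Fin (D r i)) (Σ i : Fin Q.n, Fin (D r i)) A) (a) :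
    (bsum y a).map f = bsum (fun r a => (y r a).map f) a := by
  ext ⟨r, i⟩ ⟨t, j⟩
  by_cases h : r = t
  · subst h
    simp only [Matrix.map_apply, bsum_same]
  · rw [Matrix.map_apply, bsum_ne _ _ h, bsum_ne _ _ h, map_zero]

lemma XP_map (hsum : ∀ i, d i = ∑ r, D r i) (f : A →ₐ[K] B) (P P' : Matrix (BI D) (BI D) A) (y : ∀ r, Coords Q (D r) → A) (c) :
    f (XP hsum P P' y c) = XP hsum (P.map f) (P'.map f) (fun r c => f (y r c)) c := by
  simp only [XP]
  have h1 : ∀ a, (P * bsum (fun r => mat (Equiv.refl _) (y r)) a * P').map f =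
      P.map f * bsum (fun r => mat (Equiv.refl _) (fun c => f (y r c))) a * P'.map f := fun a => by
    have e1 : (P * bsum (fun r => mat (Equiv.refl _) (y r)) a * P').map f =
       (P * bsum (fun r => mat (Equiv.refl _) (y r)) a).map f * P'.map f := Matrix.map_mul
    have e2 : (P * bsum (fun r => mat (Equiv.refl _) (y r)) a).map f =
       P.map f * (bsum (fun r => mat (Equiv.refl _) (y r)) a).map f := Matrix.map_mul
    rw [e1, e2, bsum_map]
    simp only [mat_map]
  exact congrFun (congrArg (pt (eb D d hsum)) (funext h1)) c

lemma aeval_XP (hsum : ∀ i, d i = ∑ r, D r i) (f : A →ₐ[K] B) (P P' : Matrix (BI D) (BI D) A) (y : ∀ r, Coords Q (D r) → A)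
    (F : MvPolynomial (Coords Q d) K) :
    f (MvPolynomial.aeval (XP hsum P P' y) F) =
      MvPolynomial.aeval (XP hsum (P.map f) (P'.map f) (fun r c => f (y r c))) F := by
  rw [← AlgHom.comp_apply, MvPolynomial.comp_aeval]
  have : (fun i => f (XP hsum P P' y i)) = XP hsum (P.map f) (P'.map f) (fun r c => f (y r c)) :=
    funext fun c => XP_map hsum f P P' y c
  rw [this]

lemma mat_XP (hsum : ∀ i, d i = ∑ r, D r i) {P P' : Matrix (BI D) (BI D) A} (hP : Graded (vb D) (vb D) P)
    (hP' : Graded (vb D) (vb D) P') (y : ∀ r, Coords Q (D r) → A) :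
    mat (eb D d hsum) (XP hsum P P' y) = fun a => P * bsum (fun r => mat (Equiv.refl _) (y r)) a * P' :=
  mat_pt (eb_fst hsum) (Rect.mul_graded (hP.mul_rect (bsum_isRep fun r => mat_isRep (fun _ => rfl) (y r))) hP')

lemma XP_mem (hsum : ∀ i, d i = ∑ r, D r i) {Rels : Set (FreeAlgebra K (Fin Q.n ⊕ Fin Q.numArrows))}
    {P P' : Matrix (BI D) (BI D) K} (hP : Graded (vb D) (vb D) P) (h1 : P * P' = 1) (h2 : P' * P = 1)
    {y : ∀ r, RepSpace Q (D r) K} (hy : ∀ r, y r ∈ RepVar Q (D r) K Rels) :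
    XP hsum P P' y ∈ RepVar Q d K Rels := by
  rw [mem_RepVar_e (eb_fst hsum), mat_XP hsum hP (hP.inv h1 h2)]
  refine Sat.of_surj (bsum_sat.2 fun r => mem_RepVar.1 (hy r)) hP (fun a => ?_) h1
  rw [Matrix.mul_assoc, h2, Matrix.mul_one]

lemma XP_mem_ds (hsum : ∀ i, d i = ∑ r, D r i) {Cs : ∀ r : Fin s, Set (RepSpace Q (D r) K)}
    {P P' : Matrix (BI D) (BI D) K} (hP : Graded (vb D) (vb D) P) (h1 : P * P' = 1) (h2 : P' * P = 1)
    {y : ∀ r, RepSpace Q (D r) K} (hy : ∀ r, y r ∈ Cs r) :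
    XP hsum P P' y ∈ DirectSumSet Q d K s D Cs := by
  rw [mem_ds_iff hsum]
  refine ⟨y, hy, P, P', hP, h1, h2, fun a => ?_⟩
  rw [mat_XP hsum hP (hP.inv h1 h2), Matrix.mul_assoc _ P', h2, Matrix.mul_one]

lemma ds_eq_XP (hsum : ∀ i, d i = ∑ r, D r i) {Cs : ∀ r : Fin s, Set (RepSpace Q (D r) K)} {x : RepSpace Q d K}
    (hx : x ∈ DirectSumSet Q d K s D Cs) : ∃ (y : ∀ r, RepSpace Q (D r) K) (P P' : Matrix (BI D) (BI D) K),
     (∀ r, y r ∈ Cs r) ∧ Graded (vb D) (vb D) P ∧ P * P' = 1 ∧ P' * P = 1 ∧ x = XP hsum P P' y := by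
  obtain ⟨y, hy, P, P', hP, h1, h2, hz⟩ := (mem_ds_iff hsum).1 hx
  refine ⟨y, P, P', hy, hP, h1, h2, ?_⟩
  unfold XP
  have : (fun a => P * bsum (fun r => mat (Equiv.refl _) (y r)) a * P') = mat (eb D d hsum) x := by
    funext a
    rw [hz, Matrix.mul_assoc, h1, Matrix.mul_one]
  rw [this, pt_mat]

end xp

section loc
variable {K : Type} [Field K] [Infinite K] {σ : Type}

lemma loc_hom (Δ : MvPolynomial σ K) {A : Type} [CommRing A] [Algebra K A] (P : σ → A)
    (h : IsUnit (MvPolynomial.aeval P Δ)) :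
    ∃ φ : Localization.Away Δ →ₐ[K] A, ∀ g : MvPolynomial σ K, φ (algebraMap _ _ g) = MvPolynomial.aeval P g := by
  have hu : ∀ y : Submonoid.powers Δ, IsUnit (MvPolynomial.aeval P (y : MvPolynomial σ K)) := by
    rintro ⟨_, n, rfl⟩
    simp only [map_pow]
    exact h.pow n
  exact ⟨IsLocalization.liftAlgHom (M := Submonoid.powers Δ) (f := MvPolynomial.aeval P) hu,
    fun g => IsLocalization.lift_eq _ g⟩

lemma loc_sep (Δ : MvPolynomial σ K) (hΔ : Δ ≠ 0) (f : Localization.Away Δ) (hf : f ≠ 0) :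
    ∃ φ : Localization.Away Δ →ₐ[K] K, φ f ≠ 0 := by
  obtain ⟨⟨num, ⟨_, n, rfl⟩⟩, hn⟩ := IsLocalization.surj (Submonoid.powers Δ) f
  simp only at hn
  have hnum : num ≠ 0 := by
    rintro rfl
    rw [map_zero] at hn
    have hunit : IsUnit (algebraMap (MvPolynomial σ K) (Localization.Away Δ) (Δ ^ n)) :=
      IsLocalization.map_units (M := Submonoid.powers Δ) _ ⟨Δ ^ n, n, rfl⟩
    exact hf ((hunit.mul_left_eq_zero).1 hn)
  have : ∃ P : σ → K, MvPolynomial.eval P (num * Δ) ≠ 0 := by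
    by_contra hc
    push Not at hc
    exact mul_ne_zero hnum hΔ (MvPolynomial.funext fun P => by rw [hc P, map_zero])
  obtain ⟨P, hP⟩ := this
  rw [map_mul] at hP
  obtain ⟨φ, hφ⟩ := loc_hom Δ P (A := K) (by
    rw [MvPolynomial.aeval_eq_eval]; exact (right_ne_zero_of_mul hP).isUnit)
  refine ⟨φ, fun h0 => left_ne_zero_of_mul hP ?_⟩
  have := congrArg φ hn
  rw [map_mul, h0, zero_mul, hφ, MvPolynomial.aeval_eq_eval] at this
  exact this.symm

end loc

section irr
open QuiverData
variable {Q : QuiverData} {K : Type} [Field K] [Infinite K]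
  {s : ℕ} {D : Fin s → Fin Q.n → ℕ} {d : Fin Q.n → ℕ}

/-- generic graded matrix -/
noncomputable def GM (K : Type) [Field K] (D : Fin s → Fin Q.n → ℕ) :
    Matrix (BI D) (BI D) (MvPolynomial (BI D × BI D) K) :=
  grd (vb D) (vb D) (fun i j => MvPolynomial.X (i, j))

/-- its localization -/
abbrev GLoc (K : Type) [Field K] (D : Fin s → Fin Q.n → ℕ) : Type := Localization.Away (GM K D).det

/-- generic invertible matrix -/
noncomputable def GP (K : Type) [Field K] (D : Fin s → Fin Q.n → ℕ) : Matrix (BI D) (BI D) (GLoc K D) :=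
  (GM K D).map (algebraMap _ _)

lemma GM_eval {A : Type} [CommRing A] [Algebra K A] {P : Matrix (BI D) (BI D) A} (hP : Graded (vb D) (vb D) P) :
    (GM K D).map (MvPolynomial.aeval (fun k : BI D × BI D => P k.1 k.2) : MvPolynomial (BI D × BI D) K →ₐ[K] A) = P := by
  ext i j
  have e0 : GM K D i j = if vb D i = vb D j then MvPolynomial.X (i, j) else 0 := rfl
  rw [Matrix.map_apply, e0]
  split_ifs with h
  · rw [MvPolynomial.aeval_X]
  · rw [map_zero]
    by_contra hne
    exact h (hP i j (Ne.symm hne))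

lemma GM_det_ne : (GM K D).det ≠ 0 := by
  intro h
  have h1 := GM_eval (K := K) (D := D) (Graded.one (A := K) (vb D))
  have h2 := AlgHom.map_det (MvPolynomial.aeval (fun k : BI D × BI D => (1 : Matrix (BI D) (BI D) K) k.1 k.2) : MvPolynomial (BI D × BI D) K →ₐ[K] K) (GM K D)
  rw [h, map_zero] at h2
  have h3 : (MvPolynomial.aeval (fun k : BI D × BI D => (1 : Matrix (BI D) (BI D) K) k.1 k.2) : MvPolynomial (BI D × BI D) K →ₐ[K] K).mapMatrix (GM K D) = 1 := h1
  rw [h3, Matrix.det_one] at h2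
  exact one_ne_zero h2.symm

lemma GP_det : IsUnit (GP K D).det := by
  have : (GP K D).det = algebraMap _ _ (GM K D).det := ((algebraMap (MvPolynomial (BI D × BI D) K) (GLoc K D)).map_det (GM K D)).symm
  rw [this]
  exact IsLocalization.Away.algebraMap_isUnit _

lemma GP_graded : Graded (vb D) (vb D) (GP K D) := by
  intro i j h
  apply grd_graded (vb D) (vb D) (fun i j => (MvPolynomial.X (i, j) : MvPolynomial (BI D × BI D) K)) i j
  intro h0
  apply h
  have : GM K D i j = 0 := h0
  rw [GP, Matrix.map_apply, this, map_zero]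

lemma map_inv_unique {A B : Type} [CommRing A] [CommRing B] {I : Type} [Fintype I] [DecidableEq I] {P P' : Matrix I I A} {R R' : Matrix I I B}
    [Algebra K A] [Algebra K B] (φ : A →ₐ[K] B) (h1 : P * P' = 1) (hR : R' * R = 1) (h : P.map φ = R) : P'.map φ = R' := by
  have e1 : (P * P').map φ = P.map φ * P'.map φ := Matrix.map_mul
  have e2 : (P * P').map φ = 1 := by rw [h1]; exact Matrix.map_one _ (map_zero φ) (map_one φ)
  rw [e2, h] at e1
  calc P'.map φ = R' * (R * P'.map φ) := by rw [← Matrix.mul_assoc, hR, Matrix.one_mul]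
    _ = R' := by rw [← e1, Matrix.mul_one]

lemma GP_spec {A : Type} [CommRing A] [Algebra K A] {P P' : Matrix (BI D) (BI D) A} (hP : Graded (vb D) (vb D) P)
    (h1 : P * P' = 1) (h2 : P' * P = 1) : ∃ φ : GLoc K D →ₐ[K] A, (GP K D).map φ = P ∧ ((GP K D)⁻¹).map φ = P' := by
  have hm := GM_eval (K := K) hP
  have hu : IsUnit (MvPolynomial.aeval (fun k : BI D × BI D => P k.1 k.2) (GM K D).det : A) := by
    have h3 := AlgHom.map_det (MvPolynomial.aeval (fun k : BI D × BI D => P k.1 k.2) : MvPolynomial (BI D × BI D) K →ₐ[K] A) (GM K D)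
    rw [h3]
    have h4 : (MvPolynomial.aeval (fun k : BI D × BI D => P k.1 k.2) : MvPolynomial (BI D × BI D) K →ₐ[K] A).mapMatrix (GM K D) = P := hm
    rw [h4]
    have h5 : P.det * P'.det = 1 := by rw [← Matrix.det_mul, h1, Matrix.det_one]
    exact IsUnit.of_mul_eq_one _ h5
  obtain ⟨φ, hφ⟩ := loc_hom (GM K D).det (fun k : BI D × BI D => P k.1 k.2) hu
  have h6 : (GP K D).map φ = P := by
    rw [← hm]
    ext i j
    simp only [GP, Matrix.map_apply]
    exact hφ _
  exact ⟨φ, h6, map_inv_unique φ (Matrix.mul_nonsing_inv _ GP_det) h2 h6⟩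

lemma GP_maps (φ : GLoc K D →ₐ[K] K) : Graded (vb D) (vb D) ((GP K D).map φ) ∧
    (GP K D).map φ * ((GP K D)⁻¹).map φ = 1 ∧ ((GP K D)⁻¹).map φ * (GP K D).map φ = 1 := by
  refine ⟨?_, ?_, ?_⟩
  · intro i j h
    apply GP_graded (K := K) i j
    intro h0
    apply h
    rw [Matrix.map_apply, h0, map_zero]
  · have e1 : (GP K D * (GP K D)⁻¹).map φ = (GP K D).map φ * ((GP K D)⁻¹).map φ := Matrix.map_mul
    rw [← e1, Matrix.mul_nonsing_inv _ GP_det]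
    exact Matrix.map_one _ (map_zero φ) (map_one φ)
  · have e1 : ((GP K D)⁻¹ * GP K D).map φ = ((GP K D)⁻¹).map φ * (GP K D).map φ := Matrix.map_mul
    rw [← e1, Matrix.nonsing_inv_mul _ GP_det]
    exact Matrix.map_one _ (map_zero φ) (map_one φ)

variable {Rels : Set (FreeAlgebra K (Fin Q.n ⊕ Fin Q.numArrows))}

theorem ds_irr (hsum : ∀ i, d i = ∑ r, D r i)
    (Cs : ∀ r : Fin s, Set (GenV Q (D r) K Rels)) (hCs : ∀ r, IsIrreducible (Cs r)) :
    IsIrreducible {x : GenV Q d K Rels |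
        x.1 ∈ DirectSumSet Q d K s D (fun r => Subtype.val '' Cs r)} := by
  have mk : ∀ (y : ∀ r, GenV Q (D r) K Rels) (hy : ∀ r, y r ∈ Cs r) (P P' : Matrix (BI D) (BI D) K),
      Graded (vb D) (vb D) P → P * P' = 1 → P' * P = 1 → ∃ x : GenV Q d K Rels,
        x.1 ∈ DirectSumSet Q d K s D (fun r => Subtype.val '' Cs r) ∧ x.1 = XP hsum P P' (fun r => (y r).1) := by
    intro y hy P P' hP h1 h2
    exact ⟨⟨XP hsum P P' (fun r => (y r).1), XP_mem hsum hP h1 h2 fun r => (y r).2⟩,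
      XP_mem_ds hsum hP h1 h2 fun r => ⟨y r, hy r, rfl⟩, rfl⟩
  rw [irr_iff]
  constructor
  · choose y hy using fun r => (hCs r).1
    obtain ⟨x, hx, -⟩ := mk y hy 1 1 (Graded.one _) (by simp) (by simp)
    exact ⟨x, hx⟩
  · rintro p q ⟨x1, hx1, hp⟩ ⟨x2, hx2, hq⟩
    obtain ⟨y1, P1, P1', hy1, hP1, h11, h12, hxe1⟩ := ds_eq_XP hsum hx1
    obtain ⟨y2, P2, P2', hy2, hP2, h21, h22, hxe2⟩ := ds_eq_XP hsum hx2
    choose y1' hy1' e1 using hy1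
    choose y2' hy2' e2 using hy2
    have hopen : ∀ (P P' : Matrix (BI D) (BI D) K) (p : MvPolynomial (Coords Q d) K) (x : ∀ r, GenV Q (D r) K Rels) (r : Fin s),
        IsOpen {a | Function.update x r a ∈ {y : ∀ r, GenV Q (D r) K Rels |
          MvPolynomial.eval (XP hsum P P' (fun r => (y r).1)) p ≠ 0}} := by
      intro P P' p x r
      let yg : ∀ t, Coords Q (D t) → MvPolynomial (Coords Q (D r)) K :=
        Function.update (fun t c => algebraMap K _ ((x t).1 c)) r (fun c => MvPolynomial.X c)
      have := isOpen_D (Rels := Rels) (MvPolynomial.aeval (XP hsum (P.map (algebraMap K (MvPolynomial (Coords Q (D r)) K)))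
        (P'.map (algebraMap K (MvPolynomial (Coords Q (D r)) K))) yg) p)
      convert this using 1
      ext a
      simp only [Set.mem_ofPred_eq]
      rw [← MvPolynomial.aeval_eq_eval, ← MvPolynomial.aeval_eq_eval]
      change _ ↔ (MvPolynomial.aeval a.1 : MvPolynomial (Coords Q (D r)) K →ₐ[K] K) _ ≠ 0
      rw [aeval_XP]
      have hm : ∀ R : Matrix (BI D) (BI D) K, (R.map (algebraMap K (MvPolynomial (Coords Q (D r)) K))).map
          (MvPolynomial.aeval a.1 : MvPolynomial (Coords Q (D r)) K →ₐ[K] K) = R := fun R => by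
        ext i j
        simp
      rw [hm, hm]
      have hy : (fun t c => (MvPolynomial.aeval a.1 : MvPolynomial (Coords Q (D r)) K →ₐ[K] K) (yg t c)) =
          fun t => (Function.update x r a t).1 := by
        funext t c
        by_cases ht : t = r
        · subst ht
          simp [yg]
        · simp [yg, ht]
      rw [hy]
    obtain ⟨y, hyp, hyq, hyC⟩ := choice_two Cs hCs _ _ (hopen P1 P1' p) (hopen P2 P2' q)
      ⟨y1', by
        have : (fun r => (y1' r).1) = y1 := funext e1
        simp only [Set.mem_ofPred_eq, this]
        rw [← hxe1]; exact hp, hy1'⟩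
      ⟨y2', by
        have : (fun r => (y2' r).1) = y2 := funext e2
        simp only [Set.mem_ofPred_eq, this]
        rw [← hxe2]; exact hq, hy2'⟩
    simp only [Set.mem_ofPred_eq] at hyp hyq
    -- generic conjugation
    let yA : ∀ r, Coords Q (D r) → GLoc K D := fun r c => algebraMap K _ ((y r).1 c)
    let fp : MvPolynomial (Coords Q d) K → GLoc K D := fun p => MvPolynomial.aeval (XP hsum (GP K D) (GP K D)⁻¹ yA) p
    have hfp : ∀ (φ : GLoc K D →ₐ[K] K) p, φ (fp p) = MvPolynomial.eval (XP hsum ((GP K D).map φ) (((GP K D)⁻¹).map φ) fun r => (y r).1) p := by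
      intro φ p
      simp only [fp]
      rw [aeval_XP, ← MvPolynomial.aeval_eq_eval]
      have : (fun r c => φ (yA r c)) = fun r => (y r).1 := by
        funext r c; simp [yA]
      rw [this]
    have hne : fp p * fp q ≠ 0 := by
      have : IsDomain (GLoc K D) := IsLocalization.isDomain_localization
        (powers_le_nonZeroDivisors_of_noZeroDivisors GM_det_ne)
      apply mul_ne_zero
      · intro h0
        obtain ⟨φ, hφ, hφ'⟩ := GP_spec (K := K) hP1 h11 h12
        have := hfp φ p
        rw [h0, map_zero, hφ, hφ'] at this
        exact hyp this.symm
      · intro h0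
        obtain ⟨φ, hφ, hφ'⟩ := GP_spec (K := K) hP2 h21 h22
        have := hfp φ q
        rw [h0, map_zero, hφ, hφ'] at this
        exact hyq this.symm
    obtain ⟨φ, hφ⟩ := loc_sep _ GM_det_ne _ hne
    rw [map_mul, hfp, hfp] at hφ
    obtain ⟨g1, g2, g3⟩ := GP_maps φ
    obtain ⟨x, hx, hxe⟩ := mk y hyC _ _ g1 g2 g3
    refine ⟨x, hx, ?_, ?_⟩
    · rw [hxe]; exact left_ne_zero_of_mul hφ
    · rw [hxe]; exact right_ne_zero_of_mul hφ

end irr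
end CBS

namespace CBS
section kill
open QuiverData

lemma lemV {K : Type} [Field K] {σ B : Type} [CommRing B] [Algebra K B] (C : Set (σ → K)) (y : σ → B)
    (hy : ∀ p : MvPolynomial σ K, (∀ c ∈ C, MvPolynomial.eval c p = 0) → MvPolynomial.aeval y p = 0)
    (g : MvPolynomial σ B) (hg : ∀ c ∈ C, MvPolynomial.eval (fun i => algebraMap K B (c i)) g = 0) :
    MvPolynomial.eval y g = 0 := by
  classical
  let b := Module.Basis.ofVectorSpace K B
  let S := g.support.biUnion (fun m => (b.repr (g.coeff m)).support)
  let gi : _ → MvPolynomial σ K := fun i => ∑ m ∈ g.support, MvPolynomial.monomial m (b.repr (g.coeff m) i)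
  have h1 : ∀ m ∈ g.support, g.coeff m = ∑ i ∈ S, b.repr (g.coeff m) i • b i := by
    intro m hm
    conv_lhs => rw [← b.linearCombination_repr (g.coeff m)]
    rw [Finsupp.linearCombination_apply]
    apply Finsupp.sum_of_support_subset
    · exact Finset.subset_biUnion_of_mem (fun m => (b.repr (g.coeff m)).support) hm
    · intros; simp
  have h2 : ∀ i, MvPolynomial.aeval y (gi i) = 0 := by
    intro i
    apply hy
    intro c hc
    have h3 := congrArg (fun t => b.repr t i) (hg c hc)
    rw [MvPolynomial.eval_eq] at h3
    simp only [map_zero, Finsupp.zero_apply, map_sum, Finsupp.finsetSum_apply] at h3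
    simp only [gi, map_sum]
    rw [← h3]
    refine Finset.sum_congr rfl fun m hm => ?_
    rw [MvPolynomial.eval_monomial]
    have : (∏ j ∈ m.support, (algebraMap K B (c j)) ^ m j) = algebraMap K B (∏ j ∈ m.support, c j ^ m j) := by
      simp
    rw [this, mul_comm (MvPolynomial.coeff m g), ← Algebra.smul_def, map_smul, Finsupp.smul_apply, smul_eq_mul, mul_comm]
    rfl
  have h4 : MvPolynomial.eval y g = ∑ i ∈ S, b i * MvPolynomial.aeval y (gi i) := by
    rw [MvPolynomial.eval_eq]
    simp only [gi, map_sum, MvPolynomial.aeval_monomial, Finset.mul_sum]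
    rw [Finset.sum_comm]
    refine Finset.sum_congr rfl fun m hm => ?_
    conv_lhs => rw [h1 m hm]
    rw [Finset.sum_mul]
    refine Finset.sum_congr rfl fun i _ => ?_
    rw [Algebra.smul_def, Finsupp.prod]
    ring
  rw [h4]
  exact Finset.sum_eq_zero fun i _ => by rw [h2, mul_zero]

variable {Q : QuiverData} {K : Type} [Field K] [Infinite K] {A : Type} [CommRing A] [Algebra K A]
  {s : ℕ} {D : Fin s → Fin Q.n → ℕ} {d : Fin Q.n → ℕ}

theorem kill (hsum : ∀ i, d i = ∑ r, D r i) (Cs : ∀ r : Fin s, Set (RepSpace Q (D r) K))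
    {P P' : Matrix (BI D) (BI D) A} (hP : Graded (vb D) (vb D) P) (h1 : P * P' = 1) (h2 : P' * P = 1)
    (F : MvPolynomial (Coords Q d) K) (hF : ∀ x ∈ DirectSumSet Q d K s D Cs, MvPolynomial.eval x F = 0)
    (y : ∀ r, Coords Q (D r) → A)
    (hy : ∀ r, ∀ p : MvPolynomial (Coords Q (D r)) K, (∀ c ∈ Cs r, MvPolynomial.eval c p = 0) →
      MvPolynomial.aeval (y r) p = 0) :
    MvPolynomial.aeval (XP hsum P P' y) F = 0 := by
  classical
  have key : ∀ T : Finset (Fin s), ∀ y : ∀ r, Coords Q (D r) → A,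
     (∀ r ∈ T, ∀ p : MvPolynomial (Coords Q (D r)) K, (∀ c ∈ Cs r, MvPolynomial.eval c p = 0) →
      MvPolynomial.aeval (y r) p = 0) → (∀ r ∉ T, ∃ c ∈ Cs r, y r = fun i => algebraMap K A (c i)) →
      MvPolynomial.aeval (XP hsum P P' y) F = 0 := by
    intro T
    induction T using Finset.induction_on with
    | empty =>
      intro y _ hc
      choose c hc hyc using fun r => hc r (Finset.notMem_empty r)
      have h0 : MvPolynomial.aeval (XP hsum (GP K D) (GP K D)⁻¹ (fun r i => algebraMap K _ (c r i))) F = 0 := by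
        by_contra hne
        obtain ⟨φ, hφ⟩ := loc_sep _ GM_det_ne _ hne
        apply hφ
        rw [aeval_XP]
        have : (fun r i => φ (algebraMap K _ (c r i))) = c := by
          funext r i; rw [AlgHom.commutes]; rfl
        rw [this, MvPolynomial.aeval_eq_eval]
        obtain ⟨g1, g2, g3⟩ := GP_maps φ
        exact hF _ (XP_mem_ds hsum g1 g2 g3 hc)
      obtain ⟨φ, hφ, hφ'⟩ := GP_spec (K := K) hP h1 h2
      have h3 := congrArg φ h0
      rw [aeval_XP, hφ, hφ', map_zero] at h3
      have : (fun r i => φ (algebraMap K _ (c r i))) = y := by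
        funext r i; rw [AlgHom.commutes, hyc]
      rwa [this] at h3
    | insert r T hr ih =>
      intro y hyT hc
      let φ : MvPolynomial (Coords Q (D r)) A →ₐ[K] A := (MvPolynomial.aeval (y r)).restrictScalars K
      let g : MvPolynomial (Coords Q (D r)) A := MvPolynomial.aeval
        (XP hsum (P.map MvPolynomial.C) (P'.map MvPolynomial.C)
          (Function.update (fun t i => MvPolynomial.C (y t i)) r (fun i => MvPolynomial.X i))) F
      have hev : ∀ z : Coords Q (D r) → A, MvPolynomial.eval z g =
          MvPolynomial.aeval (XP hsum P P' (Function.update y r z)) F := by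
        intro z
        let φ : MvPolynomial (Coords Q (D r)) A →ₐ[K] A :=
          (MvPolynomial.aeval z : MvPolynomial (Coords Q (D r)) A →ₐ[A] A).restrictScalars K
        have e0 : ∀ f, φ f = MvPolynomial.eval z f := fun f => by
          rw [← MvPolynomial.aeval_eq_eval]; rfl
        rw [← e0]
        simp only [g]
        rw [aeval_XP]
        have e1 : ∀ R : Matrix (BI D) (BI D) A, (R.map MvPolynomial.C).map φ = R := by
          intro R; ext i j
          rw [Matrix.map_apply, Matrix.map_apply, e0, MvPolynomial.eval_C]
        rw [e1, e1]
        have e2 : (fun t c => φ ((Function.update (fun t i => MvPolynomial.C (y t i)) r (fun i => MvPolynomial.X i) : ∀ t, Coords Q (D t) → MvPolynomial (Coords Q (D r)) A) t c)) = Function.update y r z := by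
          funext t c
          rw [e0]
          by_cases ht : t = r
          · subst ht
            simp
          · simp [ht]
        rw [e2]
      have := lemV (Cs r) (y r) (hyT r (Finset.mem_insert_self _ _)) g (fun c hcr => by
        rw [hev]
        apply ih
        · intro t ht p hp
          have : t ≠ r := fun h => hr (h ▸ ht)
          rw [Function.update_of_ne this]
          exact hyT t (Finset.mem_insert_of_mem ht) p hp
        · intro t ht
          by_cases htr : t = r
          · subst htr
            exact ⟨c, hcr, by simp⟩
          · rw [Function.update_of_ne htr]
            exact hc t (by simp [htr, ht]))
      rw [hev, Function.update_eq_self] at this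
      exact this
  exact key Finset.univ y (fun r _ => hy r) (fun r hr => absurd (Finset.mem_univ r) hr)

end kill
end CBS

namespace CBS
section pick
open QuiverData
variable {Q : QuiverData} {K : Type} [Field K]
  {s : ℕ} {D : Fin s → Fin Q.n → ℕ} {Rels : Set (FreeAlgebra K (Fin Q.n ⊕ Fin Q.numArrows))}

lemma ext0_update_open (r u : Fin s) (x : ∀ r, GenV Q (D r) K Rels) (t : Fin s) :
    IsOpen {a : GenV Q (D t) K Rels | Ext0 Rels (vx (D r)) (vx (D u)) (M (Function.update x t a r).1)
      (M (Function.update x t a u).1)} := by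
  classical
  rw [genV_isOpen_iff]
  intro a0 ha0
  let yg : ∀ t', Coords Q (D t') → MvPolynomial (Coords Q (D t)) K :=
        Function.update (fun t' c => algebraMap K _ ((x t').1 c)) t (fun c => MvPolynomial.X c)
  have hm : ∀ (a : GenV Q (D t) K Rels) (q : Fin s),
      (fun al => (mat (Equiv.refl _) (yg q) al).map (MvPolynomial.aeval a.1 : MvPolynomial (Coords Q (D t)) K →ₐ[K] K))
        = M (Function.update x t a q).1 := by
    intro a q
    funext al
    rw [mat_map]
    congr 1
    funext c
    by_cases ht : q = t
    · subst ht
      simp [yg]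
    · simp [yg, ht]
  obtain ⟨f, hf, hf'⟩ := ext0_open Rels (v := vx (D r)) (w := vx (D u)) (x := mat (Equiv.refl _) (yg r))
    (y := mat (Equiv.refl _) (yg u)) (mat_isRep (fun _ => rfl) _)
    (mat_isRep (fun _ => rfl) _) (MvPolynomial.aeval a0.1) (by rw [hm]; exact mem_RepVar.1 (Function.update x t a0 r).2)
    (by rw [hm]; exact mem_RepVar.1 (Function.update x t a0 u).2) (by rw [hm, hm]; exact ha0)
  refine ⟨f, by rw [← MvPolynomial.aeval_eq_eval]; exact hf, fun a ha => ?_⟩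
  have := hf' (MvPolynomial.aeval a.1) (by rw [MvPolynomial.aeval_eq_eval]; exact ha)
    (by rw [hm]; exact mem_RepVar.1 (Function.update x t a r).2)
    (by rw [hm]; exact mem_RepVar.1 (Function.update x t a u).2)
  rw [hm, hm] at this
  exact this

theorem pick (Cs : ∀ r : Fin s, Set (GenV Q (D r) K Rels)) (hCs : ∀ r, IsIrreducible (Cs r))
    (g : ∀ r, MvPolynomial (Coords Q (D r)) K) (hg : ∀ r, ∃ x ∈ Cs r, MvPolynomial.eval x.1 (g r) ≠ 0)
    (hext : ∀ r u, r ≠ u → ∃ x ∈ Cs r, ∃ y ∈ Cs u,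
        Ext1Zero Q K (fun dv => RepVar Q dv K Rels) (D r) (D u) x.1 y.1) :
    ∃ x : ∀ r, GenV Q (D r) K Rels, (∀ r, x r ∈ Cs r) ∧ (∀ r, MvPolynomial.eval (x r).1 (g r) ≠ 0) ∧
      ∀ r u, r ≠ u → Ext0 Rels (vx (D r)) (vx (D u)) (M (x r).1) (M (x u).1) := by
  classical
  choose c0 hc0 using fun r => (hCs r).1
  let U : Fin s ⊕ (Fin s × Fin s) → Set (∀ r, GenV Q (D r) K Rels) := Sum.elim
    (fun r => {x | MvPolynomial.eval (x r).1 (g r) ≠ 0})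
    (fun p => {x | p.1 ≠ p.2 → Ext0 Rels (vx (D p.1)) (vx (D p.2)) (M (x p.1).1) (M (x p.2).1)})
  obtain ⟨x, h1, h2⟩ := choice_many Cs hCs Finset.univ U (by
    rintro (r | ⟨r, u⟩) x t
    · by_cases hrt : r = t
      · subst hrt
        have := isOpen_D (Rels := Rels) (g r)
        convert this using 1
        ext a
        simp [U]
      · have : {a | Function.update x t a ∈ U (Sum.inl r)} = {a | MvPolynomial.eval (x r).1 (g r) ≠ 0} := by
          ext a
          simp [U, hrt]
        rw [this]
        exact isOpen_const
    · by_cases hru : r = u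
      · have : {a | Function.update x t a ∈ U (Sum.inr (r, u))} = Set.univ := by
          ext a
          simp [U, hru]
        rw [this]
        exact isOpen_univ
      · have := ext0_update_open r u x t
        convert this using 1
        ext a
        simp [U, hru]) (by
    rintro (r | ⟨r, u⟩)
    · obtain ⟨x, hx, hx'⟩ := hg r
      refine ⟨Function.update c0 r x, ?_, ?_⟩
      · simpa [U] using hx'
      · intro t
        by_cases ht : t = r
        · subst ht; simpa using hx
        · simpa [ht] using hc0 t
    · by_cases hru : r = u
      · exact ⟨c0, by simp [U, hru], hc0⟩
      · obtain ⟨x, hx, y, hy, hxy⟩ := hext r u hru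
        refine ⟨Function.update (Function.update c0 r x) u y, ?_, ?_⟩
        · intro _
          simp only
          rw [Function.update_of_ne hru, Function.update_self, Function.update_self]
          exact ext0_of_ext1Zero hxy
        · intro t
          by_cases ht : t = u
          · subst ht; simpa using hy
          · rw [Function.update_of_ne ht]
            by_cases ht : t = r
            · subst ht; simpa using hx
            · simpa [ht] using hc0 t)
  exact ⟨x, h2, fun r => h1 (Sum.inl r) (Finset.mem_univ _), fun r u hru => h1 (Sum.inr (r, u)) (Finset.mem_univ _) hru⟩

end pick
end CBS

namespace CBS
section solve
variable {Q : QuiverData} {K : Type} [Field K] {A : Type} [CommRing A] [Algebra K A]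
  {I J : Type} [Fintype I] [DecidableEq I] [Fintype J] [DecidableEq J]

lemma dl_lin (v : I → Fin Q.n) (w : J → Fin Q.n)
    (x : Fin Q.numArrows → Matrix I I K) (y : Fin Q.numArrows → Matrix J J K) (l : A →ₗ[K] K) (h : J × I → A) (k) :
    l (dl v w (fun a => (x a).map (algebraMap K A)) (fun a => (y a).map (algebraMap K A)) h k) =
      dl v w x y (fun p => l (h p)) k := by
  have hg : ∀ j i, l (grd v w (mof h) j i) = grd v w (mof fun p => l (h p)) j i := by
    intro j i
    simp only [grd, mof]; split_ifs <;> simp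
  simp only [dl, LinearMap.coe_mk, AddHom.coe_mk, Matrix.sub_apply, Matrix.mul_apply, map_sub, map_sum, Matrix.map_apply]
  congr 1
  · refine Finset.sum_congr rfl fun i _ => ?_
    rw [← hg, mul_comm, ← Algebra.smul_def, map_smul, smul_eq_mul, mul_comm]
  · refine Finset.sum_congr rfl fun i _ => ?_
    rw [← hg, ← Algebra.smul_def, map_smul, smul_eq_mul]

lemma pseudo {V W : Type} [AddCommGroup V] [Module K V] [AddCommGroup W] [Module K W] (δ : V →ₗ[K] W) :
    ∃ σ : W →ₗ[K] V, ∀ u ∈ LinearMap.range δ, δ (σ u) = u := by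
  obtain ⟨g, hg⟩ := LinearMap.exists_rightInverse_of_surjective δ.rangeRestrict (LinearMap.range_rangeRestrict δ)
  obtain ⟨g', hg'⟩ := LinearMap.exists_extend g
  refine ⟨g', fun u hu => ?_⟩
  have h1 : g' u = g ⟨u, hu⟩ := LinearMap.congr_fun hg' ⟨u, hu⟩
  have h2 := LinearMap.congr_fun hg ⟨u, hu⟩
  rw [h1]
  exact congrArg Subtype.val h2

lemma solve (v : I → Fin Q.n) (w : J → Fin Q.n)
    (x : Fin Q.numArrows → Matrix I I K) (y : Fin Q.numArrows → Matrix J J K) (MM NN : Ideal A)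
    (c : Fin Q.numArrows × J × I → A) (hc : ∀ k, c k ∈ MM)
    (H : ∀ l : A →ₗ[K] K, (∀ t ∈ NN, l t = 0) → (fun k => l (c k)) ∈ LinearMap.range (dl v w x y)) :
    ∃ h : J × I → A, (∀ p, h p ∈ MM) ∧ ∀ k, c k -
      dl v w (fun a => (x a).map (algebraMap K A)) (fun a => (y a).map (algebraMap K A)) h k ∈ NN := by
  classical
  obtain ⟨σ, hσ⟩ := pseudo (dl v w x y)
  let h : J × I → A := fun p => ∑ k, (σ (fun j => if k = j then 1 else 0) p) • c k
  refine ⟨h, fun p => Ideal.sum_mem _ fun k _ => ?_, fun k => ?_⟩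
  · rw [Algebra.smul_def]; exact Ideal.mul_mem_left _ _ (hc k)
  · by_contra hne
    obtain ⟨l, hl, hk⟩ := Submodule.exists_le_ker_of_notMem (K := K) (p := NN.restrictScalars K) hne
    apply hl
    rw [map_sub, dl_lin]
    have e : (fun p => l (h p)) = σ (fun k => l (c k)) := by
      rw [LinearMap.pi_apply_eq_sum_univ σ]
      funext p
      simp only [h, map_sum, map_smul, Finset.sum_apply, Pi.smul_apply, smul_eq_mul]
      exact Finset.sum_congr rfl fun k _ => mul_comm _ _
    rw [e, hσ _ (H l fun t ht => hk ht), sub_self]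

end solve

section mats
variable {A : Type} [CommRing A] {I J L : Type} [Fintype J]

lemma mul_ent {M N : Ideal A} {X : Matrix I J A} {Y : Matrix J L A} (hX : ∀ i j, X i j ∈ M) (hY : ∀ i j, Y i j ∈ N)
   (i j) : (X * Y) i j ∈ M * N := by
  rw [Matrix.mul_apply]
  exact Ideal.sum_mem _ fun l _ => Ideal.mul_mem_mul (hX i l) (hY l j)
end mats

section cocyc
variable {Q : QuiverData} {K : Type} [Field K] {A : Type} [CommRing A] [Algebra K A]
  {s : ℕ} {D : Fin s → Fin Q.n → ℕ}

lemma off_ev (N : Ideal A) {z : Fin Q.numArrows → Matrix (BI D) (BI D) A}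
    (hz : ∀ a (k l : BI D), k.1 ≠ l.1 → z a k l ∈ N) (f : FreeAlgebra K (Fin Q.n ⊕ Fin Q.numArrows)) (k l : BI D)
    (hkl : k.1 ≠ l.1) : ev K (vb D) z f k l ∈ N := by
  induction f using FreeAlgebra.induction generalizing k l with
  | grade0 c =>
    simp only [AlgHom.commutes]
    simp only [Algebra.algebraMap_eq_smul_one]
    have : k ≠ l := fun h => hkl (congrArg _ h)
    rw [Matrix.smul_apply, Matrix.one_apply_ne this, smul_zero]
    exact N.zero_mem
  | grade1 g =>
    rcases g with i | a
    · simp only [ev, FreeAlgebra.lift_ι_apply, gen, Sum.elim_inl]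
      have : k ≠ l := fun h => hkl (congrArg _ h)
      unfold pm
      rw [Matrix.diagonal_apply_ne _ this]
      exact N.zero_mem
    · simp only [ev, FreeAlgebra.lift_ι_apply, gen, Sum.elim_inr]
      exact hz a k l hkl
  | mul a b ha hb =>
    rw [map_mul, Matrix.mul_apply]
    refine Ideal.sum_mem _ fun p _ => ?_
    by_cases h : k.1 = p.1
    · exact Ideal.mul_mem_left _ _ (hb _ _ (h ▸ hkl))
    · exact Ideal.mul_mem_right _ _ (ha _ _ h)
  | add a b ha hb =>
    rw [map_add, Matrix.add_apply]
    exact N.add_mem (ha _ _ hkl) (hb _ _ hkl)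

lemma lam_mul (ε : A →ₐ[K] K) {k : ℕ} (l : A →ₗ[K] K) (hl : ∀ t ∈ RingHom.ker ε ^ (k + 1), l t = 0) (a v : A)
    (hv : v ∈ RingHom.ker ε ^ k) : l (a * v) = ε a * l v := by
  have h1 : a - algebraMap K A (ε a) ∈ RingHom.ker ε := by
    rw [RingHom.mem_ker, map_sub, AlgHom.commutes]; simp
  have h2 : (a - algebraMap K A (ε a)) * v ∈ RingHom.ker ε ^ (k + 1) := by
    rw [pow_succ']; exact Ideal.mul_mem_mul h1 hv
  have h3 := hl _ h2
  rw [sub_mul, map_sub, ← Algebra.smul_def, map_smul, smul_eq_mul, sub_eq_zero] at h3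
  exact h3

lemma cocyc (ε : A →ₐ[K] K) {k : ℕ} (hk : 1 ≤ k) (l : A →ₗ[K] K) (hl : ∀ t ∈ RingHom.ker ε ^ (k + 1), l t = 0)
    {z : Fin Q.numArrows → Matrix (BI D) (BI D) A}
    {x : ∀ r, Fin Q.numArrows → Matrix (Σ i : Fin Q.n, Fin (D r i)) (Σ i : Fin Q.n, Fin (D r i)) K}
    (hx : ∀ a, (z a).map ε = bsum x a)
    (hz : ∀ a (p q : BI D), p.1 ≠ q.1 → z a p q ∈ RingHom.ker ε ^ k) {u r : Fin s} (hur : u ≠ r)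
    (c : Fin Q.numArrows → Matrix (Σ i : Fin Q.n, Fin (D u i)) (Σ i : Fin Q.n, Fin (D r i)) K)
    (hc : ∀ a i j, c a i j = l (z a ⟨u, i⟩ ⟨r, j⟩))
    (f : FreeAlgebra K (Fin Q.n ⊕ Fin Q.numArrows)) (i j) :
    ev K (Sum.elim (vx (D u)) (vx (D r))) (blk (x u) c (x r)) f (Sum.inl i) (Sum.inr j)
      = l (ev K (vb D) z f ⟨u, i⟩ ⟨r, j⟩) := by
  have heps : ∀ g t i j, ε (ev K (vb D) z g ⟨t, i⟩ ⟨t, j⟩) = ev K (vx (D t)) (x t) g i j := by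
    intro g t i j
    have h1 := ev_map ε (vb D) z g
    rw [funext hx, ev_bsum] at h1
    have h2 := congrFun (congrFun h1 ⟨t, i⟩) ⟨t, j⟩
    rw [Matrix.blockDiagonal'_apply_eq] at h2
    exact h2
  induction f using FreeAlgebra.induction generalizing i j with
  | grade0 c =>
    simp only [AlgHom.commutes]
    simp only [Algebra.algebraMap_eq_smul_one]
    have : (⟨u, i⟩ : BI D) ≠ ⟨r, j⟩ := fun h => hur (congrArg Sigma.fst h)
    rw [Matrix.smul_apply, Matrix.smul_apply, Matrix.one_apply_ne this, Matrix.one_apply_ne (by simp)]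
    simp
  | grade1 g =>
    rcases g with t | a
    · simp only [ev, FreeAlgebra.lift_ι_apply, gen, Sum.elim_inl]
      have : (⟨u, i⟩ : BI D) ≠ ⟨r, j⟩ := fun h => hur (congrArg Sigma.fst h)
      unfold pm
      rw [Matrix.diagonal_apply_ne _ this, Matrix.diagonal_apply_ne _ (by simp), map_zero]
    · simp only [ev, FreeAlgebra.lift_ι_apply, gen, Sum.elim_inr]
      exact hc a i j
  | mul a b ha hb =>
    rw [map_mul, map_mul, Matrix.mul_apply, Matrix.mul_apply, Fintype.sum_sum_type]
    conv_rhs => rw [Fintype.sum_sigma, map_sum]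
    rw [Fintype.sum_eq_add u r hur]
    · simp only [map_sum]
      congr 1
      · refine Finset.sum_congr rfl fun t _ => ?_
        rw [hb, lam_mul ε l hl _ _ (off_ev _ hz _ _ _ hur), heps, ev_blk, Matrix.fromBlocks_apply₁₁]
      · refine Finset.sum_congr rfl fun t _ => ?_
        rw [ha, mul_comm (ev K (vb D) z a _ _), lam_mul ε l hl _ _ (off_ev _ hz _ _ _ hur), heps, ev_blk _ _ _ _ b, Matrix.fromBlocks_apply₂₂, mul_comm]
    · rintro t ⟨h1, h2⟩
      apply hl
      refine Ideal.sum_mem _ fun m _ => ?_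
      have h3 := Ideal.mul_mem_mul (off_ev (K := K) _ hz a ⟨u, i⟩ ⟨t, m⟩ h1.symm) (off_ev (K := K) _ hz b ⟨t, m⟩ ⟨r, j⟩ h2)
      rw [← pow_add] at h3
      exact Ideal.pow_le_pow_right (by omega) h3
  | add a b ha hb =>
    rw [map_add, map_add, Matrix.add_apply, Matrix.add_apply, ha, hb, map_add]

end cocyc
end CBS

namespace CBS
section lifting
variable {Q : QuiverData} {K : Type} [Field K] {A : Type} [CommRing A] [Algebra K A]
  {s : ℕ} {D : Fin s → Fin Q.n → ℕ} {Rels : Set (FreeAlgebra K (Fin Q.n ⊕ Fin Q.numArrows))}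

lemma pl_graded {u r : Fin s} {h : Matrix (Σ i : Fin Q.n, Fin (D u i)) (Σ i : Fin Q.n, Fin (D r i)) A}
    (hh : Graded (vx (D r)) (vx (D u)) h) : Graded (vb D) (vb D) (pl u r h) := by
  rintro ⟨p, i⟩ ⟨q, j⟩ hne
  by_cases hp : p = u
  · by_cases hq : q = r
    · subst hp hq
      rw [pl_same] at hne
      exact hh i j hne
    · exact absurd (pl_ne_col h hq) hne
  · exact absurd (pl_ne_row h hp) hne

lemma pl_ent {u r : Fin s} {h : Matrix (Σ i : Fin Q.n, Fin (D u i)) (Σ i : Fin Q.n, Fin (D r i)) A}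
    {N : Ideal A} (hh : ∀ i j, h i j ∈ N) (p q) : pl u r h p q ∈ N := by
  obtain ⟨p, i⟩ := p
  obtain ⟨q, j⟩ := q
  by_cases hp : p = u
  · by_cases hq : q = r
    · subst hp hq
      rw [pl_same]
      exact hh i j
    · rw [pl_ne_col h hq]; exact N.zero_mem
  · rw [pl_ne_row h hp]; exact N.zero_mem

lemma pl_sq {u r : Fin s} (hur : u ≠ r) (h : Matrix (Σ i : Fin Q.n, Fin (D u i)) (Σ i : Fin Q.n, Fin (D r i)) A) :
    pl u r h * pl u r h = 0 := by
  ext p q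
  rw [Matrix.mul_apply]
  refine Finset.sum_eq_zero fun l _ => ?_
  by_cases hl : l.1 = u
  · rw [pl_ne_col h (l := l) (by rw [hl]; exact hur), zero_mul]
  · rw [pl_ne_row h (k := l) hl, mul_zero]

lemma lift_step (ε : A →ₐ[K] K) {k : ℕ} (hk : 1 ≤ k)
    {z : Fin Q.numArrows → Matrix (BI D) (BI D) A}
    {x : ∀ r, Fin Q.numArrows → Matrix (Σ i : Fin Q.n, Fin (D r i)) (Σ i : Fin Q.n, Fin (D r i)) K}
    (hsx : ∀ r, Sat Rels (vx (D r)) (x r)) (hrep : IsRep (vb D) z) (hsat : Sat Rels (vb D) z)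
    (hx : ∀ a, (z a).map ε = bsum x a)
    (hz : ∀ a (p q : BI D), p.1 ≠ q.1 → z a p q ∈ RingHom.ker ε ^ k) {u r : Fin s} (hur : u ≠ r)
    (hext : Ext0 Rels (vx (D r)) (vx (D u)) (x r) (x u)) :
    ∃ H : Matrix (BI D) (BI D) A, Graded (vb D) (vb D) H ∧ H * H = 0 ∧
      (∀ a, ((1 - H) * z a * (1 + H)).map ε = bsum x a) ∧
      (∀ a (p q : BI D), ¬ (p.1 = u ∧ q.1 = r) → ((1 - H) * z a * (1 + H)) p q - z a p q ∈ RingHom.ker ε ^ (k + 1)) ∧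
      (∀ a i j, ((1 - H) * z a * (1 + H)) ⟨u, i⟩ ⟨r, j⟩ ∈ RingHom.ker ε ^ (k + 1)) := by
  classical
  let c : Fin Q.numArrows × (Σ i : Fin Q.n, Fin (D u i)) × (Σ i : Fin Q.n, Fin (D r i)) → A :=
    fun k => z k.1 ⟨u, k.2.1⟩ ⟨r, k.2.2⟩
  obtain ⟨h, hh, hcong⟩ := solve (vx (D r)) (vx (D u)) (x r) (x u) (RingHom.ker ε ^ k) (RingHom.ker ε ^ (k + 1)) c
    (fun t => hz _ _ _ hur) (fun l hl => by
      apply (ext0_iff (hsx r) (hsx u)).1 hext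
      constructor
      · intro a i j hne
        have hne' : z a ⟨u, i⟩ ⟨r, j⟩ ≠ 0 := by
          intro h0
          apply hne
          change l (z a ⟨u, i⟩ ⟨r, j⟩) = 0
          rw [h0, map_zero]
        exact hrep a _ _ hne'
      · intro f hf
        ext i j
        have := cocyc ε hk l hl hx hz hur (cof fun k => l (c k)) (fun a i j => rfl) f i j
        rw [hsat f hf] at this
        simp only [Matrix.zero_apply, map_zero] at this
        exact this)
  let hm : Matrix (Σ i : Fin Q.n, Fin (D u i)) (Σ i : Fin Q.n, Fin (D r i)) A := grd (vx (D r)) (vx (D u)) (mof h)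
  have hme : ∀ i j, hm i j ∈ RingHom.ker ε ^ k := by
    intro i j
    have : hm i j = if vx (D u) i = vx (D r) j then h (i, j) else 0 := rfl
    rw [this]
    split_ifs
    · exact hh _
    · exact Ideal.zero_mem _
  let H : Matrix (BI D) (BI D) A := pl u r hm
  have hHe : ∀ p q, H p q ∈ RingHom.ker ε ^ k := pl_ent hme
  have hHr : ∀ (p q : BI D), p.1 ≠ u → H p q = 0 := fun p q hp => pl_ne_row hm hp
  have hHc : ∀ (p q : BI D), q.1 ≠ r → H p q = 0 := fun p q hp => pl_ne_col hm hp
  let yA : ∀ r, Fin Q.numArrows → Matrix (Σ i : Fin Q.n, Fin (D r i)) (Σ i : Fin Q.n, Fin (D r i)) A :=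
    fun r a => (x r a).map (Algebra.ofId K A)
  let X : Fin Q.numArrows → Matrix (BI D) (BI D) A := bsum yA
  have hX : ∀ a p q, X a p q = algebraMap K A (bsum x a p q) := by
    intro a p q
    have := bsum_map (Algebra.ofId K A) x a
    have h2 := congrFun (congrFun this p) q
    exact h2.symm
  have hN : ∀ a p q, (z a - X a) p q ∈ RingHom.ker ε := by
    intro a p q
    rw [RingHom.mem_ker, Matrix.sub_apply, map_sub, hX, AlgHom.commutes]
    have := congrFun (congrFun (hx a) p) q
    rw [Matrix.map_apply] at this
    rw [this]; simp
  have hid : ∀ a, (1 - H) * z a * (1 + H) = z a - (H * X a - X a * H) - H * (z a - X a) + (z a - X a) * H - H * (z a * H) := by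
    intro a
    noncomm_ring
  have hzH : ∀ a p q, (z a * H) p q ∈ RingHom.ker ε ^ k := by
    intro a p q
    exact Ideal.mul_le_right (mul_ent (M := ⊤) (fun _ _ => trivial) hHe p q)
  have hbig : ∀ a p q, ((1 - H) * z a * (1 + H)) p q - (z a p q - (H * X a - X a * H) p q) ∈ RingHom.ker ε ^ (k + 1) := by
    intro a p q
    rw [hid]
    simp only [Matrix.sub_apply, Matrix.add_apply]
    have e1 : (H * (z a - X a)) p q ∈ RingHom.ker ε ^ (k + 1) := by
      rw [pow_succ]; exact mul_ent hHe (hN a) p q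
    have e2 : ((z a - X a) * H) p q ∈ RingHom.ker ε ^ (k + 1) := by
      rw [pow_succ']; exact mul_ent (hN a) hHe p q
    have e3 : (H * (z a * H)) p q ∈ RingHom.ker ε ^ (k + 1) := by
      have := mul_ent hHe (hzH a) p q
      rw [← pow_add] at this
      exact Ideal.pow_le_pow_right (by omega) this
    have := Ideal.sub_mem _ (Ideal.sub_mem _ e2 e1) e3
    convert this using 1
    ring
  have hcomm : ∀ a i j, (H * X a - X a * H) ⟨u, i⟩ ⟨r, j⟩ = dl (vx (D r)) (vx (D u)) (fun a => (x r a).map (algebraMap K A)) (fun a => (x u a).map (algebraMap K A)) h (a, i, j) := by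
    intro a i j
    rw [Matrix.sub_apply]
    simp only [X]
    rw [mul_bsum, bsum_mul]
    simp only [H, pl_same]
    rfl
  have hcomm0 : ∀ a (p q : BI D), ¬ (p.1 = u ∧ q.1 = r) → (H * X a - X a * H) p q = 0 := by
    rintro a ⟨p, i⟩ ⟨q, j⟩ hpq
    rw [Matrix.sub_apply]
    simp only [X]
    rw [mul_bsum, bsum_mul]
    by_cases hp : p = u
    · have hq : q ≠ r := fun hq => hpq ⟨hp, hq⟩
      rw [Finset.sum_eq_zero, Finset.sum_eq_zero, sub_zero]
      · intro l _; rw [hHc _ _ hq, mul_zero]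
      · intro l _; rw [hHc _ _ hq, zero_mul]
    · rw [Finset.sum_eq_zero, Finset.sum_eq_zero, sub_zero]
      · intro l _; rw [hHr _ _ hp, mul_zero]
      · intro l _; rw [hHr _ _ hp, zero_mul]
  refine ⟨H, pl_graded (grd_graded _ _ _), pl_sq hur _, ?_, ?_, ?_⟩
  · intro a
    rw [← hx a]
    have hk1 : RingHom.ker ε ^ k ≤ RingHom.ker ε := Ideal.pow_le_self (by omega)
    ext p q
    rw [Matrix.map_apply, Matrix.map_apply]
    have e0 : (1 - H) * z a * (1 + H) = z a - H * (z a * (1 + H)) + z a * H := by noncomm_ring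
    have e1 : ε ((H * (z a * (1 + H))) p q) = 0 := hk1 (Ideal.mul_le_left (mul_ent (N := ⊤) hHe (fun _ _ => trivial) p q))
    have e2 : ε ((z a * H) p q) = 0 := hk1 (hzH a p q)
    rw [e0, Matrix.add_apply, Matrix.sub_apply, map_add, map_sub, e1, e2]
    simp
  · intro a p q hpq
    have := hbig a p q
    rw [hcomm0 a p q hpq, sub_zero] at this
    exact this
  · intro a i j
    have h1 := hbig a ⟨u, i⟩ ⟨r, j⟩
    rw [hcomm] at h1
    have h2 := Ideal.add_mem _ h1 (hcong (a, i, j))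
    simpa [c] using h2

/-- conjugation relation -/
def Cj (z z' : Fin Q.numArrows → Matrix (BI D) (BI D) A) : Prop :=
  ∃ P P' : Matrix (BI D) (BI D) A, Graded (vb D) (vb D) P ∧ P * P' = 1 ∧ P' * P = 1 ∧ ∀ a, P * z' a = z a * P

lemma Cj.refl (z : Fin Q.numArrows → Matrix (BI D) (BI D) A) : Cj z z :=
  ⟨1, 1, Graded.one _, by simp, by simp, by simp⟩

lemma Cj.trans {z z' z'' : Fin Q.numArrows → Matrix (BI D) (BI D) A} (h : Cj z z') (h' : Cj z' z'') : Cj z z'' := by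
  obtain ⟨P, P', hP, h1, h2, h3⟩ := h
  obtain ⟨R, R', hR, g1, g2, g3⟩ := h'
  refine ⟨P * R, R' * P', hP.mul hR, ?_, ?_, ?_⟩
  · rw [Matrix.mul_assoc, ← Matrix.mul_assoc R, g1, Matrix.one_mul, h1]
  · rw [Matrix.mul_assoc, ← Matrix.mul_assoc P', h2, Matrix.one_mul, g2]
  · intro a
    rw [Matrix.mul_assoc, g3, ← Matrix.mul_assoc, h3, Matrix.mul_assoc]

lemma Cj.sat {z z' : Fin Q.numArrows → Matrix (BI D) (BI D) A} (h : Cj z z') (hs : Sat Rels (vb D) z) :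
    Sat Rels (vb D) z' := by
  obtain ⟨P, P', hP, h1, h2, h3⟩ := h
  exact hs.of_inj hP h3 h2

lemma Cj.isRep {z z' : Fin Q.numArrows → Matrix (BI D) (BI D) A} (h : Cj z z') (hs : IsRep (vb D) z) :
    IsRep (vb D) z' := by
  obtain ⟨P, P', hP, h1, h2, h3⟩ := h
  have h4 : z' = fun a => (P' * z a) * P := by
    funext a
    rw [Matrix.mul_assoc, ← h3, ← Matrix.mul_assoc, h2, Matrix.one_mul]
  rw [h4]
  exact Rect.mul_graded ((hP.inv h1 h2).mul_rect hs) hP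

lemma Cj.step (z : Fin Q.numArrows → Matrix (BI D) (BI D) A) {H : Matrix (BI D) (BI D) A}
    (hH : Graded (vb D) (vb D) H) (h2 : H * H = 0) : Cj z (fun a => (1 - H) * z a * (1 + H)) := by
  have e1 : (1 + H) * (1 - H) = 1 := by
    have : (1 + H) * (1 - H) = 1 - H * H := by noncomm_ring
    rw [this, h2, sub_zero]
  have e2 : (1 - H) * (1 + H) = 1 := by
    have : (1 - H) * (1 + H) = 1 - H * H := by noncomm_ring
    rw [this, h2, sub_zero]
  refine ⟨1 + H, 1 - H, (Graded.one _).add hH, e1, e2, fun a => ?_⟩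
  rw [← Matrix.mul_assoc, ← Matrix.mul_assoc, e1, Matrix.one_mul]

theorem lifting (ε : A →ₐ[K] K) {n : ℕ} (hn : RingHom.ker ε ^ n = ⊥)
    {z : Fin Q.numArrows → Matrix (BI D) (BI D) A}
    {x : ∀ r, Fin Q.numArrows → Matrix (Σ i : Fin Q.n, Fin (D r i)) (Σ i : Fin Q.n, Fin (D r i)) K}
    (hsx : ∀ r, Sat Rels (vx (D r)) (x r)) (hrep : IsRep (vb D) z) (hsat : Sat Rels (vb D) z)
    (hx : ∀ a, (z a).map ε = bsum x a)
    (hext : ∀ r u, r ≠ u → Ext0 Rels (vx (D r)) (vx (D u)) (x r) (x u)) :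
    ∃ y : ∀ r, Fin Q.numArrows → Matrix (Σ i : Fin Q.n, Fin (D r i)) (Σ i : Fin Q.n, Fin (D r i)) A,
      (∀ r a, (y r a).map ε = x r a) ∧ Cj z (bsum y) := by
  classical
  have stepT : ∀ k, 1 ≤ k → (∃ z', Cj z z' ∧ (∀ a, (z' a).map ε = bsum x a) ∧
      ∀ a (p q : BI D), p.1 ≠ q.1 → z' a p q ∈ RingHom.ker ε ^ k) → ∀ T : Finset (Fin s × Fin s),
      ∃ z', Cj z z' ∧ (∀ a, (z' a).map ε = bsum x a) ∧
      (∀ a (p q : BI D), p.1 ≠ q.1 → z' a p q ∈ RingHom.ker ε ^ k) ∧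
      (∀ a (p q : BI D), p.1 ≠ q.1 → (p.1, q.1) ∈ T → z' a p q ∈ RingHom.ker ε ^ (k + 1)) := by
    intro k hk h0 T
    induction T using Finset.induction_on with
    | empty =>
      obtain ⟨z', h1, h2, h3⟩ := h0
      exact ⟨z', h1, h2, h3, fun a p q _ h => absurd h (Finset.notMem_empty _)⟩
    | insert t T ht ih =>
      obtain ⟨u, r⟩ := t
      obtain ⟨z', h1, h2, h3, h4⟩ := ih
      by_cases hur : u = r
      · refine ⟨z', h1, h2, h3, fun a p q hpq hm => ?_⟩
        rcases Finset.mem_insert.1 hm with he | hm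
        · exact absurd ((congrArg Prod.fst he).trans (hur.trans (congrArg Prod.snd he).symm)) hpq
        · exact h4 a p q hpq hm
      · obtain ⟨H, g1, g2, g3, g4, g5⟩ := lift_step ε hk hsx (h1.isRep hrep) (h1.sat hsat) h2 h3 hur
          (hext r u (Ne.symm hur))
        have hle : RingHom.ker ε ^ (k + 1) ≤ RingHom.ker ε ^ k := Ideal.pow_le_pow_right (by omega)
        have g5' : ∀ a (p q : BI D), (p.1 = u ∧ q.1 = r) → ((1 - H) * z' a * (1 + H)) p q ∈ RingHom.ker ε ^ (k + 1) := by
          rintro a ⟨p, i⟩ ⟨q, j⟩ ⟨h5, h6⟩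
          simp only at h5 h6
          subst h5 h6
          exact g5 a i j
        refine ⟨_, h1.trans (Cj.step z' g1 g2), g3, ?_, ?_⟩
        · intro a p q hpq
          by_cases hc : p.1 = u ∧ q.1 = r
          · exact hle (g5' a p q hc)
          · have := Ideal.add_mem _ (hle (g4 a p q hc)) (h3 a p q hpq)
            rwa [sub_add_cancel] at this
        · intro a p q hpq hm
          by_cases hc : p.1 = u ∧ q.1 = r
          · exact g5' a p q hc
          · rcases Finset.mem_insert.1 hm with he | hm
            · exact absurd ⟨congrArg Prod.fst he, congrArg Prod.snd he⟩ hc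
            · have := Ideal.add_mem _ (g4 a p q hc) (h4 a p q hpq hm)
              rwa [sub_add_cancel] at this
  have stepk : ∀ k, ∃ z', Cj z z' ∧ (∀ a, (z' a).map ε = bsum x a) ∧
      ∀ a (p q : BI D), p.1 ≠ q.1 → z' a p q ∈ RingHom.ker ε ^ (k + 1) := by
    intro k
    induction k with
    | zero =>
      refine ⟨z, Cj.refl z, hx, fun a p q hpq => ?_⟩
      rw [zero_add, pow_one, RingHom.mem_ker]
      have := congrFun (congrFun (hx a) p) q
      rw [bsum_ne _ _ hpq] at this
      exact this
    | succ k ih =>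
      obtain ⟨z', h1, h2, h3, h4⟩ := stepT (k + 1) (by omega) ih Finset.univ
      exact ⟨z', h1, h2, fun a p q hpq => h4 a p q hpq (Finset.mem_univ _)⟩
  obtain ⟨z', h1, h2, h3⟩ := stepk n
  have h4 : ∀ a (p q : BI D), p.1 ≠ q.1 → z' a p q = 0 := by
    intro a p q hpq
    have := Ideal.pow_le_pow_right (Nat.le_succ n) (h3 a p q hpq)
    rw [hn] at this
    exact this
  let y : ∀ r, Fin Q.numArrows → Matrix (Σ i : Fin Q.n, Fin (D r i)) (Σ i : Fin Q.n, Fin (D r i)) A :=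
    fun r a i j => z' a ⟨r, i⟩ ⟨r, j⟩
  have h5 : bsum y = z' := by
    funext a
    ext ⟨p, i⟩ ⟨q, j⟩
    by_cases hpq : p = q
    · subst hpq
      exact bsum_same y a _ i j
    · exact (bsum_ne y a hpq).trans (h4 a ⟨p, i⟩ ⟨q, j⟩ hpq).symm
  refine ⟨y, fun r a => ?_, ?_⟩
  · ext i j
    have := congrFun (congrFun (h2 a) ⟨r, i⟩) ⟨r, j⟩
    rw [bsum_same] at this
    exact this
  · rw [h5]; exact h1

end lifting
end CBS

namespace CBS
section back
open QuiverData
variable {Q : QuiverData} {K : Type} [Field K] [IsAlgClosed K]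
  {s : ℕ} {D : Fin s → Fin Q.n → ℕ} {d : Fin Q.n → ℕ}
  {Rels : Set (FreeAlgebra K (Fin Q.n ⊕ Fin Q.numArrows))}

lemma sup_nil {A : Type} [CommRing A] (J : Fin s → Ideal A) (N : Fin s → ℕ) (h : ∀ r, J r ^ N r = ⊥)
    (T : Finset (Fin s)) : (T.sup J) ^ ((∑ r ∈ T, N r) + 1) = ⊥ := by
  classical
  induction T using Finset.induction_on with
  | empty => simp
  | insert t T ht ih =>
    rw [Finset.sup_insert, Finset.sum_insert ht, add_assoc, eq_bot_iff]
    refine Ideal.sup_pow_add_le_pow_sup_pow.trans ?_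
    rw [h, ih, sup_bot_eq]

/-- entries of the generic relations -/
noncomputable def relI (d : Fin Q.n → ℕ) (Rels : Set (FreeAlgebra K (Fin Q.n ⊕ Fin Q.numArrows))) :
    Ideal (MvPolynomial (Coords Q d) K) :=
  Ideal.span {p | ∃ r ∈ Rels, ∃ i j, p = ev K (vx d) (mat (Equiv.refl _) (MvPolynomial.X : Coords Q d → _)) r i j}

lemma ev_generic {A : Type} [CommRing A] [Algebra K A] {I : Type} [Fintype I] [DecidableEq I]
    (e : I ≃ Σ i : Fin Q.n, Fin (d i)) (v : I → Fin Q.n) (Y : Coords Q d → A) (r : FreeAlgebra K (Fin Q.n ⊕ Fin Q.numArrows)) (i j) :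
    MvPolynomial.aeval Y (ev K v (mat e (MvPolynomial.X : Coords Q d → MvPolynomial (Coords Q d) K)) r i j) =
      ev K v (mat e Y) r i j := by
  have h := ev_map (MvPolynomial.aeval Y : MvPolynomial (Coords Q d) K →ₐ[K] A) v
    (mat e (MvPolynomial.X : Coords Q d → MvPolynomial (Coords Q d) K)) r
  simp only [mat_map, MvPolynomial.aeval_X] at h
  exact congrFun (congrFun h i) j

lemma unif_nil {C : Set (GenV Q d K Rels)} {g : MvPolynomial (Coords Q d) K}
    (hg : ∀ x : GenV Q d K Rels, MvPolynomial.eval x.1 g ≠ 0 → x ∈ C) :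
    ∃ N, ∀ (A : Type) [CommRing A] [Algebra K A] (Y : Coords Q d → A),
      Sat Rels (vx d) (mat (Equiv.refl _) Y) → IsUnit (MvPolynomial.aeval Y g) →
      (Ideal.map (MvPolynomial.aeval Y : MvPolynomial (Coords Q d) K →ₐ[K] A)
        (MvPolynomial.vanishingIdeal K (Subtype.val '' C : Set (Coords Q d → K)))) ^ N = ⊥ := by
  set IC := MvPolynomial.vanishingIdeal K (Subtype.val '' C : Set (Coords Q d → K)) with hIC
  have h1 : Ideal.span {g} * IC ≤ (relI (K := K) d Rels).radical := by
    rw [← MvPolynomial.vanishingIdeal_zeroLocus_eq_radical (K := K), Ideal.span_singleton_mul_le_iff]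
    intro p hp
    rw [MvPolynomial.mem_vanishingIdeal_iff]
    intro x hx
    have hxr : x ∈ RepVar Q d K Rels := by
      rw [mem_RepVar]
      intro r hr
      ext i j
      have := hx _ (Ideal.subset_span ⟨r, hr, i, j, rfl⟩)
      rw [ev_generic] at this
      exact this
    rw [map_mul]
    by_cases hgx : MvPolynomial.eval x g = 0
    · rw [MvPolynomial.aeval_eq_eval]
      simp [hgx]
    · have := hg ⟨x, hxr⟩ hgx
      have h2 := (MvPolynomial.mem_vanishingIdeal_iff.1 hp) x ⟨_, this, rfl⟩
      rw [h2, mul_zero]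
  obtain ⟨N, hN⟩ := Ideal.exists_radical_pow_le_of_fg (relI (K := K) d Rels) (IsNoetherian.noetherian _)
  refine ⟨N, fun A _ _ Y hY hu => ?_⟩
  have h2 : (Ideal.span {g} * IC) ^ N ≤ relI (K := K) d Rels := (Ideal.pow_right_mono h1 N).trans hN
  have h3 := Ideal.map_mono (f := (MvPolynomial.aeval Y : MvPolynomial (Coords Q d) K →ₐ[K] A)) h2
  have h4 : Ideal.map (MvPolynomial.aeval Y : MvPolynomial (Coords Q d) K →ₐ[K] A) (relI (K := K) d Rels) = ⊥ := by
    rw [eq_bot_iff, relI, Ideal.map_span, Ideal.span_le]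
    rintro _ ⟨_, ⟨r, hr, i, j, rfl⟩, rfl⟩
    have := ev_generic (K := K) (Equiv.refl _) (vx d) Y r i j
    rw [hY r hr] at this
    exact this
  rw [h4, Ideal.map_pow, Ideal.map_mul, Ideal.map_span, Set.image_singleton,
    Ideal.span_singleton_eq_top.2 hu, Ideal.top_mul, le_bot_iff] at h3
  exact h3

theorem core (hsum : ∀ i, d i = ∑ r, D r i)
    (Cs : ∀ r : Fin s, Set (GenV Q (D r) K Rels)) (g : ∀ r, MvPolynomial (Coords Q (D r)) K)
    (hg : ∀ r, ∀ x : GenV Q (D r) K Rels, MvPolynomial.eval x.1 (g r) ≠ 0 → x ∈ Cs r) :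
    ∃ N, ∀ (A : Type) [CommRing A] [Algebra K A] (ε : A →ₐ[K] K) (n : ℕ), RingHom.ker ε ^ n = ⊥ →
      ∀ x : ∀ r, GenV Q (D r) K Rels, (∀ r, MvPolynomial.eval (x r).1 (g r) ≠ 0) →
      (∀ r u, r ≠ u → Ext0 Rels (vx (D r)) (vx (D u)) (M (x r).1) (M (x u).1)) →
      ∀ Z : Coords Q d → A, Sat Rels (vb D) (mat (eb D d hsum) Z) →
      (∀ c, ε (Z c) = XP hsum 1 1 (fun r => (x r).1) c) →
      ∀ F : MvPolynomial (Coords Q d) K, (∀ x ∈ DirectSumSet Q d K s D (fun r => Subtype.val '' Cs r),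
        MvPolynomial.eval x F = 0) → MvPolynomial.aeval Z F ^ N = 0 := by
  classical
  choose N hN using fun r => unif_nil (hg r)
  refine ⟨(∑ r, N r) + 1, ?_⟩
  intro A _ _ ε n hn x hgx hext Z hZ hεZ F hF
  have hx : ∀ a, (mat (eb D d hsum) Z a).map ε = bsum (fun r => M (x r).1) a := by
    intro a
    rw [mat_map, funext hεZ, mat_XP hsum (Graded.one _) (Graded.one _)]
    simp
  have hrep : IsRep (vb D) (mat (eb D d hsum) Z) := mat_isRep (eb_fst hsum) Z
  obtain ⟨y, hy, hcj⟩ := lifting ε hn (fun r => mem_RepVar.1 (x r).2) hrep hZ hx hext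
  have hys : ∀ r, Sat Rels (vx (D r)) (y r) := bsum_sat.1 (hcj.sat hZ)
  have hyr : ∀ r, IsRep (vx (D r)) (y r) := by
    intro r a i j hne
    have := hcj.isRep hrep a ⟨r, i⟩ ⟨r, j⟩
    rw [bsum_same] at this
    exact this hne
  let Y : ∀ r, Coords Q (D r) → A := fun r => pt (Equiv.refl _) (y r)
  have hY : ∀ r, mat (Equiv.refl _) (Y r) = y r := fun r => mat_pt (fun _ => rfl) (hyr r)
  obtain ⟨P, P', hP, h1, h2, h3⟩ := hcj
  have hZX : Z = XP hsum P P' Y := by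
    unfold XP
    simp only [hY]
    have : (fun a => P * bsum (fun r => y r) a * P') = mat (eb D d hsum) Z := by
      funext a
      rw [h3, Matrix.mul_assoc, h1, Matrix.mul_one]
    rw [this, pt_mat]
  let J : Fin s → Ideal A := fun r => Ideal.map (MvPolynomial.aeval (Y r) : MvPolynomial (Coords Q (D r)) K →ₐ[K] A)
        (MvPolynomial.vanishingIdeal K (Subtype.val '' Cs r : Set (Coords Q (D r) → K)))
  have hεY : ∀ r c, ε (Y r c) = (x r).1 c := by
    intro r c
    have e1 : (fun c => ε (Y r c)) = pt (Equiv.refl _) (fun a => (y r a).map ε) := (pt_map ε _ _).symm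
    have e2 : (fun a => (y r a).map ε) = mat (Equiv.refl _) (x r).1 := funext (hy r)
    rw [e2, pt_mat] at e1
    exact congrFun e1 c
  have hJ : ∀ r, J r ^ N r = ⊥ := by
    intro r
    refine hN r A (Y r) (by rw [hY]; exact hys r) ?_
    have e1 : ε (MvPolynomial.aeval (Y r) (g r)) = MvPolynomial.eval (x r).1 (g r) := by
      rw [← AlgHom.comp_apply, MvPolynomial.comp_aeval, funext (hεY r), MvPolynomial.aeval_eq_eval]
    set b := MvPolynomial.aeval (Y r) (g r)
    have e2 : IsNilpotent (b - algebraMap K A (ε b)) := by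
      refine ⟨n, ?_⟩
      have : (b - algebraMap K A (ε b)) ^ n ∈ RingHom.ker ε ^ n := by
        apply Ideal.pow_mem_pow
        rw [RingHom.mem_ker, map_sub, AlgHom.commutes]
        simp
      rw [hn] at this
      exact this
    have e3 : IsUnit (algebraMap K A (ε b)) := (IsUnit.mk0 _ (by rw [e1]; exact hgx r)).map (algebraMap K A)
    have := e2.isUnit_add_left_of_commute e3 (Commute.all _ _)
    rwa [add_sub_cancel] at this
  have hnil := sup_nil J N hJ Finset.univ
  set JT := Finset.univ.sup J with hJT
  have hmem : MvPolynomial.aeval Z F ∈ JT := by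
    rw [← Ideal.Quotient.eq_zero_iff_mem]
    let π : A →ₐ[K] A ⧸ JT := Ideal.Quotient.mkₐ K JT
    change π (MvPolynomial.aeval Z F) = 0
    rw [hZX, aeval_XP]
    refine kill hsum (fun r => Subtype.val '' Cs r) (P := P.map π) (P' := P'.map π) ?_ ?_ ?_ F hF _ ?_
    · intro i j hne
      apply hP i j
      intro h0
      apply hne
      rw [Matrix.map_apply, h0, map_zero]
    · have e : (P * P').map π = P.map π * P'.map π := Matrix.map_mul
      rw [← e, h1]
      exact Matrix.map_one _ (map_zero π) (map_one π)
    · have e : (P' * P).map π = P'.map π * P.map π := Matrix.map_mul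
      rw [← e, h2]
      exact Matrix.map_one _ (map_zero π) (map_one π)
    · intro r p hp
      have e1 : MvPolynomial.aeval (fun c => π (Y r c)) p = π (MvPolynomial.aeval (Y r) p) := by
        rw [← AlgHom.comp_apply, MvPolynomial.comp_aeval]
      rw [e1]
      change Ideal.Quotient.mk JT _ = 0
      rw [Ideal.Quotient.eq_zero_iff_mem]
      refine (Finset.le_sup (f := J) (Finset.mem_univ r)) (Ideal.mem_map_of_mem _ ?_)
      rw [MvPolynomial.mem_vanishingIdeal_iff]
      intro c hc
      rw [MvPolynomial.aeval_eq_eval]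
      exact hp c hc
  have := Ideal.pow_mem_pow hmem ((∑ r, N r) + 1)
  rw [hnil] at this
  exact this

/-- the abstract completion argument -/
lemma krull_arg {R : Type} [CommRing R] [IsDomain R] [IsNoetherianRing R] [Algebra K R] (ε₀ : R →ₐ[K] K) (f : R)
    (h : ∀ (A : Type) [CommRing A] [Algebra K A] (π : R →ₐ[K] A) (ε : A →ₐ[K] K) (n : ℕ),
      RingHom.ker ε ^ n = ⊥ → (∀ a, ε (π a) = ε₀ a) → π f = 0) : f = 0 := by
  set m : Ideal R := RingHom.ker ε₀ with hmdef
  have hm : m ≠ ⊤ := RingHom.ker_ne_top _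
  have key : ∀ n, f ∈ m ^ n := by
    intro n
    have hle1 : m ^ (n + 1) ≤ m := Ideal.pow_le_self (by omega)
    let ε : (R ⧸ m ^ (n + 1)) →ₐ[K] K := Ideal.Quotient.liftₐ (m ^ (n + 1)) ε₀ (fun a ha => hle1 ha)
    have hker : RingHom.ker ε ^ (n + 1) = ⊥ := by
      have h1 : RingHom.ker ε ≤ Ideal.map (Ideal.Quotient.mk (m ^ (n + 1))) m := by
        intro a ha
        obtain ⟨a, rfl⟩ := Ideal.Quotient.mk_surjective a
        exact Ideal.mem_map_of_mem _ ha
      rw [eq_bot_iff]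
      refine (Ideal.pow_right_mono h1 _).trans ?_
      rw [← Ideal.map_pow, Ideal.map_quotient_self]
    have h2 := h _ (Ideal.Quotient.mkₐ K (m ^ (n + 1))) ε (n + 1) hker (fun a => rfl)
    have h3 : f ∈ m ^ (n + 1) := Ideal.Quotient.eq_zero_iff_mem.1 h2
    exact Ideal.pow_le_pow_right (Nat.le_succ n) h3
  have hbot := Ideal.iInf_pow_eq_bot_of_isDomain m hm
  have : f ∈ ⨅ i, m ^ i := by
    rw [Ideal.mem_iInf]
    exact key
  rw [hbot] at this
  exact this

/-- the generic point of a prime -/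
lemma generic_arg {σ : Type} [Finite σ] (𝔭 : Ideal (MvPolynomial σ K)) (hprime : 𝔭.IsPrime) (w : σ → K)
    (hw : ∀ p ∈ 𝔭, MvPolynomial.eval w p = 0) (F : MvPolynomial σ K) (N : ℕ)
    (h : ∀ (A : Type) [CommRing A] [Algebra K A] (Z : σ → A) (ε : A →ₐ[K] K) (n : ℕ),
      RingHom.ker ε ^ n = ⊥ → (∀ c, ε (Z c) = w c) → (∀ p ∈ 𝔭, MvPolynomial.aeval Z p = 0) →
        MvPolynomial.aeval Z F ^ N = 0) : F ∈ 𝔭 := by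
  have hdom : IsDomain (MvPolynomial σ K ⧸ 𝔭) := Ideal.Quotient.isDomain 𝔭
  let ε₀ : (MvPolynomial σ K ⧸ 𝔭) →ₐ[K] K := Ideal.Quotient.liftₐ 𝔭 (MvPolynomial.aeval w) (fun p hpp => by
    rw [MvPolynomial.aeval_eq_eval]
    exact hw p hpp)
  have h0 : (Ideal.Quotient.mkₐ K 𝔭 F) ^ N = 0 := by
    refine krull_arg ε₀ _ ?_
    intro A _ _ π ε n hn hε
    have e1 : ∀ p, MvPolynomial.aeval (fun c => π (Ideal.Quotient.mkₐ K 𝔭 (MvPolynomial.X c))) p =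
        π (Ideal.Quotient.mkₐ K 𝔭 p) := by
      intro p
      have : MvPolynomial.aeval (fun c => π (Ideal.Quotient.mkₐ K 𝔭 (MvPolynomial.X c))) =
          π.comp (Ideal.Quotient.mkₐ K 𝔭) := by
        apply MvPolynomial.algHom_ext
        intro c
        rw [MvPolynomial.aeval_X, AlgHom.comp_apply]
      rw [this, AlgHom.comp_apply]
    rw [map_pow, ← e1]
    refine h A _ ε n hn (fun c => ?_) (fun p hpp => ?_)
    · rw [hε]
      change MvPolynomial.aeval w (MvPolynomial.X c) = _
      rw [MvPolynomial.aeval_X]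
    · rw [e1]
      have : Ideal.Quotient.mkₐ K 𝔭 p = 0 := Ideal.Quotient.eq_zero_iff_mem.2 hpp
      rw [this, map_zero]
  have h1 : Ideal.Quotient.mk 𝔭 F = 0 := eq_zero_of_pow_eq_zero h0
  exact Ideal.Quotient.eq_zero_iff_mem.1 h1

theorem bwd (hsum : ∀ i, d i = ∑ r, D r i)
    (Cs : ∀ r : Fin s, Set (GenV Q (D r) K Rels))
    (hCs : ∀ r, Cs r ∈ irreducibleComponents (GenV Q (D r) K Rels))
    (hext : ∀ r u, r ≠ u → ∃ x ∈ Cs r, ∃ y ∈ Cs u,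
        Ext1Zero Q K (fun dv => RepVar Q dv K Rels) (D r) (D u) x.1 y.1) :
    closure {x : GenV Q d K Rels |
        x.1 ∈ DirectSumSet Q d K s D (fun r => Subtype.val '' Cs r)}
      ∈ irreducibleComponents (GenV Q d K Rels) := by
  classical
  have hirr : ∀ r, IsIrreducible (Cs r) := fun r => (hCs r).1
  choose g hg1 hg2 using fun r => comp_open (hCs r)
  obtain ⟨x, hx1, hx2, hx3⟩ := pick Cs hirr g hg1 hext
  obtain ⟨N, hN⟩ := core hsum Cs g hg2
  refine ⟨(ds_irr hsum Cs hirr).closure, ?_⟩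
  intro V hV hle v hv
  rw [mem_closure_poly]
  intro F hF
  have hF' : ∀ y ∈ DirectSumSet Q d K s D (fun r => Subtype.val '' Cs r), MvPolynomial.eval y F = 0 := by
    intro y hy
    obtain ⟨t, P, P', ht, hP, h1, h2, rfl⟩ := ds_eq_XP hsum hy
    have hm : XP hsum P P' t ∈ RepVar Q d K Rels := XP_mem hsum hP h1 h2 (fun r => by
      obtain ⟨c, _, hc⟩ := ht r
      rw [← hc]
      exact c.2)
    exact hF ⟨_, hm⟩ hy
  let 𝔭 : Ideal (MvPolynomial (Coords Q d) K) :=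
    MvPolynomial.vanishingIdeal K (Subtype.val '' V : Set (Coords Q d → K))
  have hp : ∀ p, p ∈ 𝔭 ↔ ∀ y ∈ V, MvPolynomial.eval y.1 p = 0 := by
    intro p
    rw [MvPolynomial.mem_vanishingIdeal_iff]
    simp only [MvPolynomial.aeval_eq_eval]
    constructor
    · intro h y hy
      exact h y.1 ⟨y, hy, rfl⟩
    · rintro h _ ⟨y, hy, rfl⟩
      exact h y hy
  obtain ⟨hne, hirrV⟩ := irr_iff.1 hV
  have hprime : 𝔭.IsPrime := by
    refine ⟨?_, ?_⟩
    · intro htop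
      have : (1 : MvPolynomial (Coords Q d) K) ∈ 𝔭 := by rw [htop]; trivial
      have := (hp 1).1 this _ hv
      simp at this
    · intro p q hpq
      by_contra hcon
      push Not at hcon
      obtain ⟨h1, h2⟩ := hcon
      rw [hp] at h1 h2
      push Not at h1 h2
      obtain ⟨y, hy, h3, h4⟩ := hirrV p q h1 h2
      have := (hp _).1 hpq y hy
      rw [map_mul] at this
      exact mul_ne_zero h3 h4 this
  obtain ⟨w, hwdef⟩ : ∃ w : RepSpace Q d K, w = XP hsum 1 1 (fun r => (x r).1) := ⟨_, rfl⟩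
  have hw : w ∈ DirectSumSet Q d K s D (fun r => Subtype.val '' Cs r) := by
    rw [hwdef]
    exact XP_mem_ds hsum (Graded.one _) (by simp) (by simp) fun r => ⟨x r, hx1 r, rfl⟩
  have hwr : w ∈ RepVar Q d K Rels := by
    rw [hwdef]
    exact XP_mem hsum (Graded.one _) (by simp) (by simp) fun r => (x r).2
  have hwV : (⟨w, hwr⟩ : GenV Q d K Rels) ∈ V := hle (subset_closure hw)
  have hwp : ∀ p ∈ 𝔭, MvPolynomial.eval w p = 0 := by
    intro p hpp
    have := (hp p).1 hpp ⟨w, hwr⟩ hwV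
    exact this
  clear_value 𝔭
  have hFp : F ∈ 𝔭 := by
    refine generic_arg 𝔭 hprime w hwp F N ?_
    intro A _ _ Z ε n hn hε hZ
    refine hN A ε n hn x hx2 hx3 Z ?_ (fun c => by rw [hε, hwdef]) F hF'
    intro r hr
    ext i j
    rw [← ev_generic]
    refine hZ _ ?_
    rw [hp]
    intro y hy
    have h1 := (mem_RepVar_e (eb_fst (D := D) hsum)).1 y.2 r hr
    have h2 := ev_generic (K := K) (eb D d hsum) (vb D) y.1 r i j
    rw [h1, MvPolynomial.aeval_eq_eval] at h2
    exact h2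
  exact (hp F).1 hFp v hv

end back
end CBS

open QuiverData in
/-- Crawley-Boevey–Schröer. Given a decomposition `d = ∑ d^{(r)}` and
irreducible components `C_r` of `Rep_{d^{(r)}}(Λ)`, the closure of `C₁ ⊕ ⋯ ⊕ C_s` is an
irreducible component of `Rep_d(Λ)` if and only if `ext(C_i, C_j) = 0` for all `i ≠ j`;
here `ext(C_i, C_j)` is the generic (equivalently minimal) value of
`dim Ext¹(M_x, M_y)` on `C_i × C_j`, so its vanishing means that some pair
`(x, y) ∈ C_i × C_j` satisfies `Ext¹(M_x, M_y) = 0`. -/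
theorem statement_4 (K : Type) [Field K] [IsAlgClosed K]
    (Q : QuiverData) (d : Fin Q.n → ℕ)
    (Rels : Set (FreeAlgebra K (Fin Q.n ⊕ Fin Q.numArrows)))
    (s : ℕ) (D : Fin s → Fin Q.n → ℕ) (hsum : ∀ i, d i = ∑ r, D r i)
    (Cs : ∀ r : Fin s, Set (GenV Q (D r) K Rels))
    (hCs : ∀ r, Cs r ∈ irreducibleComponents (GenV Q (D r) K Rels)) :
    closure {x : GenV Q d K Rels |
        x.1 ∈ DirectSumSet Q d K s D (fun r => Subtype.val '' Cs r)}
      ∈ irreducibleComponents (GenV Q d K Rels)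
    ↔ ∀ r u, r ≠ u → ∃ x ∈ Cs r, ∃ y ∈ Cs u,
        Ext1Zero Q K (fun dv => RepVar Q dv K Rels) (D r) (D u) x.1 y.1 := by
  exact ⟨fun hC r u hru => CBS.fwd Rels hsum Cs hC r u hru, fun h => CBS.bwd hsum Cs hCs h⟩
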